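/- Let D ⊂ ℂⁿ be a strongly α-regular domain, K ⊂ D a compact set, and ψ : K → ℝ a Hölder continuous function with sup_K ψ < 0 admitting a negative α-subharmonic extension to D. Then ω_α(z,K,D,ψ) is Hölder continuous on D if and only if there exist constants C > 0 and 0 < λ ≤ 1 such that |ω_α(z,K,D,ψ) − ψ(w)| ≤ C·(dist(z,K))^λ holds for every z in some neighborhood of K, where w ∈ K is a point closest to z, i.e. |z − w| = dist(z,K). -/

import Mathlib

open MeasureTheory Filter Topology Complex Metric

noncomputable section

/-- Complex `n`-space. -/
abbrev Cn (n : ℕ) := Fin n → ℂ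

/-- The Wirtinger derivative `∂f/∂z_j` of a (real-differentiable) function `f : ℂⁿ → ℂ`. -/
noncomputable def wdz {n : ℕ} (j : Fin n) (f : Cn n → ℂ) (z : Cn n) : ℂ :=
  (fderiv ℝ f z (Pi.single j 1) - Complex.I * fderiv ℝ f z (Pi.single j Complex.I)) / 2

/-- The Wirtinger derivative `∂f/∂z̄_j` of a (real-differentiable) function `f : ℂⁿ → ℂ`. -/
noncomputable def wdzbar {n : ℕ} (j : Fin n) (f : Cn n → ℂ) (z : Cn n) : ℂ :=
  (fderiv ℝ f z (Pi.single j 1) + Complex.I * fderiv ℝ f z (Pi.single j Complex.I)) / 2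

/-- The square of the Euclidean norm `|z|² = ∑ |z_i|²` on `ℂⁿ`. -/
noncomputable def sqNorm {n : ℕ} (z : Cn n) : ℝ := ∑ i, Complex.normSq (z i)

/-- A closed, strictly positive differential form `α` of bidegree `(n-1, n-1)` with `C¹`
coefficients on `ℂⁿ`, recorded through its normalized coefficient matrix:  `coeff j k` is
the Hermitian positive-definite matrix `A_{jk}` such that
`dd^c u ∧ α = (∑_{j,k} A_{jk} ∂²u/∂z_j∂z̄_k) dV`.  In these terms closedness of `α`
reads `∑_j ∂A_{jk}/∂z_j = 0` for every `k` (the conjugate identity follows by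
Hermitian symmetry). -/
structure AlphaForm (n : ℕ) where
  coeff : Fin n → Fin n → Cn n → ℂ
  contDiff : ∀ j k, ContDiff ℝ 1 (coeff j k)
  hermitian : ∀ j k z, coeff k j z = starRingEnd ℂ (coeff j k z)
  strictlyPositive : ∀ z : Cn n, ∀ ξ : Fin n → ℂ, ξ ≠ 0 →
    0 < (∑ j, ∑ k, coeff j k z * ξ j * starRingEnd ℂ (ξ k)).re
  closed : ∀ k, ∀ z : Cn n, (∑ j, wdz j (coeff j k) z) = 0

/-- The second order operator `f ↦ ∑_{j,k} A_{jk} ∂²f/∂z_j∂z̄_k` representing the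
top-degree form `dd^c f ∧ α` (with respect to Lebesgue measure). -/
noncomputable def alphaOp {n : ℕ} (A : AlphaForm n) (f : Cn n → ℂ) (z : Cn n) : ℂ :=
  ∑ j, ∑ k, A.coeff j k z * wdzbar k (wdz j f) z

/-- The operator `alphaOp` applied to a real-valued function, returning the real part. -/
noncomputable def alphaOpR {n : ℕ} (A : AlphaForm n) (ω : Cn n → ℝ) (z : Cn n) : ℝ :=
  (alphaOp A (fun w => (ω w : ℂ)) z).re

/-- `u : ℂⁿ → EReal` is `α`-subharmonic on `D`: it is finite-or-`-∞`, strongly upper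
semicontinuous on `D`, locally integrable on `D`, and the current `dd^c u ∧ α` is
positive, i.e. `∫_D u · (α ∧ dd^c ω) ≥ 0` for every nonnegative test function `ω` on `D`. -/
def IsAlphaSubharmonicE {n : ℕ} (A : AlphaForm n) (D : Set (Cn n)) (u : Cn n → EReal) : Prop :=
  (∀ z ∈ D, u z ≠ ⊤) ∧
  UpperSemicontinuousOn u D ∧
  (∀ z₀ ∈ D, ∀ S : Set (Cn n),
      (∃ N ∈ 𝓝 z₀, volume (N \ S) = 0) → Filter.limsup u (𝓝[S] z₀) = u z₀) ∧
  LocallyIntegrableOn (fun z => (u z).toReal) D volume ∧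
  ∀ ω : Cn n → ℝ, ContDiff ℝ (⊤ : ℕ∞) ω → HasCompactSupport ω → tsupport ω ⊆ D →
    (∀ z, 0 ≤ ω z) → 0 ≤ ∫ z in D, (u z).toReal * alphaOpR A ω z

/-- A real-valued function is `α`-subharmonic on `D` if it is so as an `EReal`-valued
function. -/
def IsAlphaSubharmonic {n : ℕ} (A : AlphaForm n) (D : Set (Cn n)) (u : Cn n → ℝ) : Prop :=
  IsAlphaSubharmonicE A D (fun z => (u z : EReal))

/-- `h` is `α`-harmonic on the open set `U`: `dd^c h ∧ α = 0` there, in the sense of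
currents. -/
def IsAlphaHarmonicOn {n : ℕ} (A : AlphaForm n) (U : Set (Cn n)) (h : Cn n → ℝ) : Prop :=
  LocallyIntegrableOn h U volume ∧
  ∀ ω : Cn n → ℝ, ContDiff ℝ (⊤ : ℕ∞) ω → HasCompactSupport ω → tsupport ω ⊆ U →
    (∫ z in U, h z * alphaOpR A ω z) = 0

/-- `u` is strictly `α`-subharmonic on `G`: for every compact subdomain `G' ⋐ G` there is
`ε > 0` with `u - ε|z|²` `α`-subharmonic on `G'`. -/
def IsStrictlyAlphaSubharmonic {n : ℕ} (A : AlphaForm n) (G : Set (Cn n)) (u : Cn n → ℝ) :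
    Prop :=
  ∀ G' : Set (Cn n), IsOpen G' → IsCompact (closure G') → closure G' ⊆ G →
    ∃ ε > (0 : ℝ), IsAlphaSubharmonic A G' (fun z => u z - ε * sqNorm z)

/-- `D` is a bounded `α`-regular domain: a bounded domain carrying a negative
`α`-subharmonic exhaustion `ρ` with boundary limit `0`. -/
def IsAlphaRegularDomain {n : ℕ} (A : AlphaForm n) (D : Set (Cn n)) : Prop :=
  IsOpen D ∧ IsConnected D ∧ Bornology.IsBounded D ∧
  ∃ ρ : Cn n → ℝ, IsAlphaSubharmonic A D ρ ∧ (∀ z ∈ D, ρ z < 0) ∧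
    ∀ ζ ∈ frontier D, Filter.Tendsto ρ (𝓝[D] ζ) (𝓝 0)

/-- `D` is a strongly `α`-regular domain: `D = {ρ < 0}` for some `ρ` which is `C²` and
strictly `α`-subharmonic on a neighborhood `D⁺` of `closure D`. -/
def IsStronglyAlphaRegularDomain {n : ℕ} (A : AlphaForm n) (D : Set (Cn n)) : Prop :=
  IsOpen D ∧ IsConnected D ∧ Bornology.IsBounded D ∧
  ∃ Dp : Set (Cn n), IsOpen Dp ∧ closure D ⊆ Dp ∧
    ∃ ρ : Cn n → ℝ, ContDiffOn ℝ 2 ρ Dp ∧ IsStrictlyAlphaSubharmonic A Dp ρ ∧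
      D = {z ∈ Dp | ρ z < 0}

/-- The class `U(E, D, ψ)` of `α`-subharmonic functions `u` on `D` with `u ≤ ψ` on `E`
and `u < 0` on `D`. -/
def Uclass {n : ℕ} (A : AlphaForm n) (E D : Set (Cn n)) (ψ : Cn n → ℝ) :
    Set (Cn n → ℝ) :=
  {u | IsAlphaSubharmonic A D u ∧ (∀ z ∈ E, u z ≤ ψ z) ∧ ∀ z ∈ D, u z < 0}

/-- The weighted extremal function `ω_α(z, E, D, ψ)`. -/
noncomputable def omegaW {n : ℕ} (A : AlphaForm n) (E D : Set (Cn n)) (ψ : Cn n → ℝ)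
    (z : Cn n) : ℝ :=
  sSup ((fun u : Cn n → ℝ => u z) '' Uclass A E D ψ)

/-- The weighted `α`-subharmonic measure `ω*_α(z, E, D, ψ)`: the upper semicontinuous
regularization of `ω_α(·, E, D, ψ)`. -/
noncomputable def omegaWStar {n : ℕ} (A : AlphaForm n) (E D : Set (Cn n)) (ψ : Cn n → ℝ)
    (z : Cn n) : ℝ :=
  Filter.limsup (omegaW A E D ψ) (𝓝 z)

/-- The (unweighted) extremal function `ω_α(z, E, D)`. -/
noncomputable def omega0 {n : ℕ} (A : AlphaForm n) (E D : Set (Cn n)) : Cn n → ℝ :=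
  omegaW A E D (fun _ => (-1 : ℝ))

/-- The (unweighted) `α`-subharmonic measure `ω*_α(z, E, D)`. -/
noncomputable def omega0Star {n : ℕ} (A : AlphaForm n) (E D : Set (Cn n)) : Cn n → ℝ :=
  omegaWStar A E D (fun _ => (-1 : ℝ))

/-- `S` is `α`-polar in `D`: there is an `α`-subharmonic `ρ` on `D`, not identically
`-∞`, with `ρ = -∞` on `S`. -/
def IsAlphaPolar {n : ℕ} (A : AlphaForm n) (D S : Set (Cn n)) : Prop :=
  ∃ ρ : Cn n → EReal, IsAlphaSubharmonicE A D ρ ∧ (∃ z ∈ D, ρ z ≠ ⊥) ∧ ∀ z ∈ S, ρ z = ⊥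

/-- `u` is plurisubharmonic on `D`: upper semicontinuous, locally integrable, and with
positive semidefinite complex Hessian in the sense of distributions. -/
def IsPlurisubharmonic {n : ℕ} (D : Set (Cn n)) (u : Cn n → ℝ) : Prop :=
  UpperSemicontinuousOn u D ∧ LocallyIntegrableOn u D volume ∧
  ∀ ξ : Fin n → ℂ, ∀ ω : Cn n → ℝ, ContDiff ℝ (⊤ : ℕ∞) ω → HasCompactSupport ω →
    tsupport ω ⊆ D → (∀ z, 0 ≤ ω z) →
    0 ≤ ∫ z in D, u z *
      (∑ j, ∑ k, ξ j * starRingEnd ℂ (ξ k) * wdzbar k (wdz j (fun w => (ω w : ℂ))) z).re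

/-- The class `U(E,D)` for the plurisubharmonic measure. -/
def UclassPsh {n : ℕ} (E D : Set (Cn n)) : Set (Cn n → ℝ) :=
  {u | IsPlurisubharmonic D u ∧ (∀ z ∈ E, u z ≤ -1) ∧ ∀ z ∈ D, u z < 0}

/-- The plurisubharmonic extremal function `ω(z, E, D)`. -/
noncomputable def omegaPsh {n : ℕ} (E D : Set (Cn n)) (z : Cn n) : ℝ :=
  sSup ((fun u : Cn n → ℝ => u z) '' UclassPsh E D)

/-- The plurisubharmonic measure `ω*(z, E, D)`. -/
noncomputable def omegaPshStar {n : ℕ} (E D : Set (Cn n)) (z : Cn n) : ℝ :=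
  Filter.limsup (omegaPsh E D) (𝓝 z)

end

/-!
Write `L` for the operator `dd^c · ∧ α`. The extension of `ψ` competes in the definition of `ω`, so
`ω = ψ` on `K`, and Hölder continuity on `D` gives the estimate near `K`.

Conversely, the estimate near `K` yields a global Hölder majorant `Ψ ≤ 0` of `ω` with `Ψ ≤ ψ` on
`K`. Mollified at scale `t` it becomes a smooth function `b`, within `O(t ^ μ)` of `Ψ` and with
`|L b| ≤ F t⁻²`. As `α` is closed, `L` is formally self-adjoint, and Hahn-Banach together with a
Kato-type inequality gives, above each competitor lowered by a constant and below `b`, a function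
`v` with `0 ≤ L v ≤ F t⁻²`. The averages of `-v` over ellipsoids adapted to the coefficients of `α`
frozen at the centre satisfy a differential inequality in the radius, hence a Harnack inequality,
which passes to `ω` up to `O(t ^ μ)`. The defining function of `D` is a barrier for `ω` at `∂D`.
Choosing `t` as a small power of `‖z - w‖` balances the errors and gives Hölder continuity.
-/

/-! ### Levi form and the operator of `α` -/

section ComplexHessian

variable {n : ℕ}

/-- Real bilinear forms on `ℂⁿ`, the values of the second derivative of a real function. -/
abbrev RealBilin (n : ℕ) := Cn n →L[ℝ] Cn n →L[ℝ] ℝ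

/-- The real coordinate direction `∂/∂x_j` of `ℂⁿ`. -/
noncomputable def dirX (j : Fin n) : Cn n := Pi.single j 1

/-- The real coordinate direction `∂/∂y_j` of `ℂⁿ`, where `z_j = x_j + i y_j`. -/
noncomputable def dirY (j : Fin n) : Cn n := Pi.single j I

@[simp] lemma norm_dirX (j : Fin n) : ‖dirX j‖ = 1 := by simp [dirX, Pi.norm_single]

@[simp] lemma norm_dirY (j : Fin n) : ‖dirY j‖ = 1 := by simp [dirY, Pi.norm_single]

/-- The `(j, k)` entry of the Levi form of a real bilinear form: on the Hessian of `φ` its value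
is `∂²φ/∂z_j∂z̄_k`. -/
noncomputable def leviEntry (j k : Fin n) : RealBilin n →ₗ[ℝ] ℂ where
  toFun M := (((M (dirX k) (dirX j) + M (dirY k) (dirY j) : ℝ) : ℂ)
    + I * ((M (dirY k) (dirX j) - M (dirX k) (dirY j) : ℝ) : ℂ)) / 4
  map_add' M N := by simp only [add_apply]; push_cast; ring
  map_smul' c M := by
    simp only [smul_apply, smul_eq_mul, RingHom.id_apply, real_smul]
    push_cast
    ring

lemma leviEntry_apply (j k : Fin n) (M : RealBilin n) :
    leviEntry j k M = (((M (dirX k) (dirX j) + M (dirY k) (dirY j) : ℝ) : ℂ)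
      + I * ((M (dirY k) (dirX j) - M (dirX k) (dirY j) : ℝ) : ℂ)) / 4 := rfl

lemma norm_leviEntry_le (j k : Fin n) (M : RealBilin n) : ‖leviEntry j k M‖ ≤ ‖M‖ := by
  have unit_le {v w : Cn n} (hv : ‖v‖ = 1) (hw : ‖w‖ = 1) : |M v w| ≤ ‖M‖ := by
    simpa [hv, hw] using M.le_opNorm₂ v w
  have h := norm_add_le ((M (dirX k) (dirX j) + M (dirY k) (dirY j) : ℝ) : ℂ)
    (I * ((M (dirY k) (dirX j) - M (dirX k) (dirY j) : ℝ) : ℂ))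
  rw [norm_mul, norm_I, one_mul, norm_real, norm_real, Real.norm_eq_abs, Real.norm_eq_abs] at h
  rw [leviEntry_apply, norm_div, RCLike.norm_ofNat, div_le_iff₀ (by norm_num)]
  linarith [abs_add_le (M (dirX k) (dirX j)) (M (dirY k) (dirY j)),
    abs_sub (M (dirY k) (dirX j)) (M (dirX k) (dirY j)),
    unit_le (norm_dirX k) (norm_dirX j), unit_le (norm_dirY k) (norm_dirY j),
    unit_le (norm_dirY k) (norm_dirX j), unit_le (norm_dirX k) (norm_dirY j)]

/-- The rank one form `(v, w) ↦ l v * l w`. -/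
noncomputable def rankOneForm (l : Cn n →L[ℝ] ℝ) : RealBilin n := l.smulRight l

@[simp] lemma rankOneForm_apply (l : Cn n →L[ℝ] ℝ) (v w : Cn n) :
    rankOneForm l v w = l v * l w := by
  simp [rankOneForm]

/-- The vector `(∂l/∂z_j)_j` of a real linear form `l` on `ℂⁿ`. -/
noncomputable def wirtingerVec (l : Cn n →L[ℝ] ℝ) (j : Fin n) : ℂ :=
  ((l (dirX j) : ℝ) - I * (l (dirY j) : ℝ)) / 2

lemma leviEntry_rankOneForm (l : Cn n →L[ℝ] ℝ) (j k : Fin n) :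
    leviEntry j k (rankOneForm l) = wirtingerVec l j * starRingEnd ℂ (wirtingerVec l k) := by
  simp only [leviEntry_apply, rankOneForm_apply, wirtingerVec, map_div₀, map_sub, map_mul,
    conj_ofReal, conj_I, map_ofNat]
  push_cast
  linear_combination ((l (dirY k) : ℂ) * (l (dirY j) : ℂ) / 4) * I_sq

lemma fderiv_ofReal_comp {φ : Cn n → ℝ} {z : Cn n} (h : DifferentiableAt ℝ φ z) (v : Cn n) :
    fderiv ℝ (fun w => (φ w : ℂ)) z v = (fderiv ℝ φ z v : ℝ) := by
  change fderiv ℝ (ofRealCLM ∘ φ) z v = _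
  rw [(ofRealCLM.hasFDerivAt.comp z h.hasFDerivAt).fderiv]
  rfl

lemma wdz_ofReal {φ : Cn n → ℝ} {z : Cn n} (h : DifferentiableAt ℝ φ z) (j : Fin n) :
    wdz j (fun w => (φ w : ℂ)) z = wirtingerVec (fderiv ℝ φ z) j := by
  rw [wdz, fderiv_ofReal_comp h, fderiv_ofReal_comp h]
  rfl

section Hessian

variable {E : Type*} [NormedAddCommGroup E] [NormedSpace ℝ E]
  {F : Type*} [NormedAddCommGroup F] [NormedSpace ℝ F]

lemma differentiable_fderiv_of_contDiff_two {f : E → F} (h : ContDiff ℝ 2 f) :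
    Differentiable ℝ (fderiv ℝ f) :=
  (h.fderiv_right (m := 1) (by norm_num)).differentiable (by norm_num)

lemma fderiv_fderiv_add {f g : E → F} (hf : ContDiff ℝ 2 f) (hg : ContDiff ℝ 2 g) (x : E) :
    fderiv ℝ (fderiv ℝ (f + g)) x = fderiv ℝ (fderiv ℝ f) x + fderiv ℝ (fderiv ℝ g) x := by
  have h : fderiv ℝ (f + g) = fderiv ℝ f + fderiv ℝ g := funext fun y =>
    fderiv_add (hf.differentiable (by norm_num) y) (hg.differentiable (by norm_num) y)
  rw [h, fderiv_add (differentiable_fderiv_of_contDiff_two hf x)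
    (differentiable_fderiv_of_contDiff_two hg x)]

lemma fderiv_fderiv_const_smul {f : E → F} (hf : ContDiff ℝ 2 f) (c : ℝ) (x : E) :
    fderiv ℝ (fderiv ℝ (c • f)) x = c • fderiv ℝ (fderiv ℝ f) x := by
  have h : fderiv ℝ (c • f) = c • fderiv ℝ f := funext fun y =>
    fderiv_const_smul (hf.differentiable (by norm_num) y) c
  rw [h, fderiv_const_smul (differentiable_fderiv_of_contDiff_two hf x)]

lemma fderiv_fderiv_comp_apply {φ : E → ℝ} {Θ : ℝ → ℝ} (hφ : ContDiff ℝ 2 φ)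
    (hΘ : ContDiff ℝ 2 Θ) (z v w : E) :
    fderiv ℝ (fderiv ℝ fun x => Θ (φ x)) z v w = deriv Θ (φ z) * fderiv ℝ (fderiv ℝ φ) z v w
      + deriv (deriv Θ) (φ z) * (fderiv ℝ φ z v * fderiv ℝ φ z w) := by
  have hd : Differentiable ℝ φ := hφ.differentiable (by norm_num)
  have hdΘ : Differentiable ℝ Θ := hΘ.differentiable (by norm_num)
  have hdΘ' : Differentiable ℝ (deriv Θ) := (hΘ.iterate_deriv' 1 1).differentiable (by norm_num)
  have first : fderiv ℝ (fun x => Θ (φ x)) = fun x => deriv Θ (φ x) • fderiv ℝ φ x :=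
    funext fun x => ((hdΘ (φ x)).hasDerivAt.comp_hasFDerivAt x (hd x).hasFDerivAt).fderiv
  have outer : HasFDerivAt (fun x => deriv Θ (φ x)) (deriv (deriv Θ) (φ z) • fderiv ℝ φ z) z :=
    (hdΘ' (φ z)).hasDerivAt.comp_hasFDerivAt z (hd z).hasFDerivAt
  have second := outer.fun_smul (differentiable_fderiv_of_contDiff_two hφ z).hasFDerivAt
  rw [first, second.fderiv]
  simp [mul_assoc]

end Hessian

lemma wdzbar_wdz_ofReal {φ : Cn n → ℝ} (h : ContDiff ℝ 2 φ) (j k : Fin n) (z : Cn n) :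
    wdzbar k (wdz j (fun w => (φ w : ℂ))) z = leviEntry j k (fderiv ℝ (fderiv ℝ φ) z) := by
  have first : wdz j (fun w => (φ w : ℂ)) = fun z =>
      (((fderiv ℝ φ z (dirX j) : ℝ) : ℂ) - I * (fderiv ℝ φ z (dirY j) : ℝ)) * (1 / 2 : ℂ) := by
    funext z
    rw [wdz_ofReal (h.differentiable (by norm_num) z), wirtingerVec]
    ring
  have second (w : Cn n) : HasFDerivAt (fun z => ((fderiv ℝ φ z w : ℝ) : ℂ))
      (ofRealCLM.comp ((ContinuousLinearMap.apply ℝ ℝ w).comp (fderiv ℝ (fderiv ℝ φ) z))) z :=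
    ofRealCLM.hasFDerivAt.comp z ((ContinuousLinearMap.apply ℝ ℝ w).hasFDerivAt.comp z
      (differentiable_fderiv_of_contDiff_two h z).hasFDerivAt)
  have third := ((second (dirX j)).fun_sub ((second (dirY j)).const_mul I)).mul_const (1 / 2 : ℂ)
  rw [first, wdzbar, third.fderiv, leviEntry_apply]
  simp only [smul_apply, sub_apply,
    ContinuousLinearMap.comp_apply, ContinuousLinearMap.apply_apply, ofRealCLM_apply, smul_eq_mul,
    dirX, dirY, ofReal_add, ofReal_sub]
  linear_combination (-(fderiv ℝ (fderiv ℝ φ) z (Pi.single k I) (Pi.single j I) : ℂ) / 4) * I_sq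

namespace AlphaForm

variable (A : AlphaForm n)

/-- The trace of the Levi form of `M` against the coefficient matrix of `A` at `z`, so that
`dd^c φ ∧ α` is the `leviTrace` of the Hessian of `φ`. -/
noncomputable def leviTrace (z : Cn n) : RealBilin n →ₗ[ℝ] ℝ :=
  reLm ∘ₗ ∑ j, ∑ k, A.coeff j k z • leviEntry j k

lemma leviTrace_apply (z : Cn n) (M : RealBilin n) :
    A.leviTrace z M = (∑ j, ∑ k, A.coeff j k z * leviEntry j k M).re := by
  simp [leviTrace]

/-- The `ℓ¹` norm of the coefficient matrix of `A`. -/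
noncomputable def coeffNorm (z : Cn n) : ℝ := ∑ j, ∑ k, ‖A.coeff j k z‖

lemma continuous_coeffNorm : Continuous A.coeffNorm :=
  continuous_finsetSum _ fun j _ => continuous_finsetSum _ fun k _ =>
    (A.contDiff j k).continuous.norm

lemma abs_leviTrace_le (z : Cn n) (M : RealBilin n) :
    |A.leviTrace z M| ≤ A.coeffNorm z * ‖M‖ := by
  rw [leviTrace_apply, coeffNorm, Finset.sum_mul]
  refine (abs_re_le_norm _).trans (norm_sum_le_of_le _ fun j _ => ?_)
  rw [Finset.sum_mul]
  refine norm_sum_le_of_le _ fun k _ => ?_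
  rw [norm_mul]
  gcongr
  exact norm_leviEntry_le j k M

lemma leviTrace_rankOneForm (z : Cn n) (l : Cn n →L[ℝ] ℝ) :
    A.leviTrace z (rankOneForm l) =
      (∑ j, ∑ k, A.coeff j k z * wirtingerVec l j * starRingEnd ℂ (wirtingerVec l k)).re := by
  simp only [leviTrace_apply, leviEntry_rankOneForm, mul_assoc]

lemma leviTrace_rankOneForm_nonneg (z : Cn n) (l : Cn n →L[ℝ] ℝ) :
    0 ≤ A.leviTrace z (rankOneForm l) := by
  rw [leviTrace_rankOneForm]
  by_cases h : wirtingerVec l = 0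
  · simp [h]
  · exact (A.strictlyPositive z _ h).le

end AlphaForm

section Operator

variable (A : AlphaForm n) {φ χ : Cn n → ℝ}

lemma alphaOpR_eq_leviTrace (hφ : ContDiff ℝ 2 φ) (z : Cn n) :
    alphaOpR A φ z = A.leviTrace z (fderiv ℝ (fderiv ℝ φ) z) := by
  simp only [alphaOpR, alphaOp, A.leviTrace_apply, wdzbar_wdz_ofReal hφ]

lemma alphaOpR_add (hφ : ContDiff ℝ 2 φ) (hχ : ContDiff ℝ 2 χ) (z : Cn n) :
    alphaOpR A (φ + χ) z = alphaOpR A φ z + alphaOpR A χ z := by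
  rw [alphaOpR_eq_leviTrace A hφ, alphaOpR_eq_leviTrace A hχ,
    alphaOpR_eq_leviTrace A (φ := φ + χ) (hφ.add hχ), fderiv_fderiv_add hφ hχ, map_add]

lemma alphaOpR_const_smul (hφ : ContDiff ℝ 2 φ) (c : ℝ) (z : Cn n) :
    alphaOpR A (c • φ) z = c * alphaOpR A φ z := by
  rw [alphaOpR_eq_leviTrace A hφ, alphaOpR_eq_leviTrace A (φ := c • φ) (hφ.const_smul c),
    fderiv_fderiv_const_smul hφ, map_smul, smul_eq_mul]

lemma alphaOpR_sub (hφ : ContDiff ℝ 2 φ) (hχ : ContDiff ℝ 2 χ) (z : Cn n) :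
    alphaOpR A (φ - χ) z = alphaOpR A φ z - alphaOpR A χ z := by
  have h : φ - χ = φ + (-1 : ℝ) • χ := by ext; simp [sub_eq_add_neg]
  rw [h, alphaOpR_add A hφ (χ := (-1 : ℝ) • χ) (hχ.const_smul (-1 : ℝ)), alphaOpR_const_smul A hχ]
  ring

lemma continuous_alphaOpR (hφ : ContDiff ℝ 2 φ) : Continuous (alphaOpR A φ) := by
  rw [funext (alphaOpR_eq_leviTrace A hφ)]
  simp only [A.leviTrace_apply, leviEntry_apply]
  have coeff (j k) : Continuous (A.coeff j k) := (A.contDiff j k).continuous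
  fun_prop

lemma abs_alphaOpR_le (hφ : ContDiff ℝ 2 φ) (z : Cn n) :
    |alphaOpR A φ z| ≤ A.coeffNorm z * ‖fderiv ℝ (fderiv ℝ φ) z‖ := by
  rw [alphaOpR_eq_leviTrace A hφ]
  exact A.abs_leviTrace_le _ _

lemma tsupport_alphaOpR_subset (hφ : ContDiff ℝ 2 φ) : tsupport (alphaOpR A φ) ⊆ tsupport φ := by
  refine closure_minimal (fun z hz => ?_) (isClosed_tsupport _)
  by_contra hzφ
  refine hz ?_
  have hess : fderiv ℝ (fderiv ℝ φ) z = 0 := image_eq_zero_of_notMem_tsupport fun h =>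
    hzφ (tsupport_fderiv_subset ℝ (tsupport_fderiv_subset ℝ h))
  rw [alphaOpR_eq_leviTrace A hφ, hess, map_zero]

lemma alphaOpR_comp {Θ : ℝ → ℝ} (hφ : ContDiff ℝ 2 φ) (hΘ : ContDiff ℝ 2 Θ) (z : Cn n) :
    alphaOpR A (fun w => Θ (φ w)) z = deriv Θ (φ z) * alphaOpR A φ z
      + deriv (deriv Θ) (φ z) * A.leviTrace z (rankOneForm (fderiv ℝ φ z)) := by
  have hess : fderiv ℝ (fderiv ℝ fun w => Θ (φ w)) z
      = deriv Θ (φ z) • fderiv ℝ (fderiv ℝ φ) z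
        + deriv (deriv Θ) (φ z) • rankOneForm (fderiv ℝ φ z) := by
    ext v w
    simp [fderiv_fderiv_comp_apply hφ hΘ]
  rw [alphaOpR_eq_leviTrace A hφ, alphaOpR_eq_leviTrace A (φ := fun w => Θ (φ w)) (hΘ.comp hφ),
    hess, map_add, map_smul, map_smul, smul_eq_mul, smul_eq_mul]

end Operator

/-! ### Formal self-adjointness -/

section Wirtinger

variable {F G : Cn n → ℂ} {z : Cn n}

lemma wdzbar_mul (hF : DifferentiableAt ℝ F z) (hG : DifferentiableAt ℝ G z) (k : Fin n) :
    wdzbar k (fun w => F w * G w) z = wdzbar k F z * G z + F z * wdzbar k G z := by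
  rw [wdzbar, fderiv_fun_mul hF hG]
  simp only [wdzbar, add_apply, smul_apply, smul_eq_mul]
  ring

lemma wdzbar_conj (hF : DifferentiableAt ℝ F z) (k : Fin n) :
    wdzbar k (fun w => starRingEnd ℂ (F w)) z = starRingEnd ℂ (wdz k F z) := by
  have hconj (v : Cn n) :
      fderiv ℝ (fun w => starRingEnd ℂ (F w)) z v = starRingEnd ℂ (fderiv ℝ F z v) := by
    change fderiv ℝ (conjCLE.toContinuousLinearMap ∘ F) z v = _
    rw [(conjCLE.toContinuousLinearMap.hasFDerivAt.comp z hF.hasFDerivAt).fderiv]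
    rfl
  simp [wdzbar, wdz, hconj, conj_ofNat]

lemma wdzbar_ofReal {φ : Cn n → ℝ} (h : DifferentiableAt ℝ φ z) (k : Fin n) :
    wdzbar k (fun w => (φ w : ℂ)) z = starRingEnd ℂ (wirtingerVec (fderiv ℝ φ z) k) := by
  rw [← wdz_ofReal h, ← wdzbar_conj (F := fun w => (φ w : ℂ)) (ofRealCLM.differentiableAt.comp z h)]
  simp only [conj_ofReal]

lemma contDiff_wdz_ofReal {φ : Cn n → ℝ} (h : ContDiff ℝ 2 φ) (j : Fin n) :
    ContDiff ℝ 1 (wdz j fun w => (φ w : ℂ)) := by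
  have hφ : ContDiff ℝ 1 (fderiv ℝ fun w => (φ w : ℂ)) :=
    (ofRealCLM.contDiff.comp h).fderiv_right (by norm_num)
  exact ((hφ.clm_apply contDiff_const).sub
    (contDiff_const.mul (hφ.clm_apply contDiff_const))).div_const _

lemma hasCompactSupport_wdz (hF : HasCompactSupport F) (j : Fin n) :
    HasCompactSupport (wdz j F) := by
  refine (hF.fderiv ℝ).mono fun z hz hz' => hz ?_
  simp [wdz, hz']

lemma integrable_fderiv_apply (hG : ContDiff ℝ 1 G) (hc : HasCompactSupport G) (v : Cn n) :
    Integrable fun z => fderiv ℝ G z v :=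
  ((hG.continuous_fderiv (by norm_num)).clm_apply
    continuous_const).integrable_of_hasCompactSupport (hc.fderiv_apply ℝ v)

lemma integral_fderiv_apply_eq_zero (hG : ContDiff ℝ 1 G) (hc : HasCompactSupport G) (v : Cn n) :
    ∫ z, fderiv ℝ G z v = 0 := by
  have parts := integral_bilinear_hasFDerivAt_right_eq_neg_left_of_integrable (μ := volume)
    (f := G) (g := fun _ => (1 : ℝ)) (v := v) (f' := fderiv ℝ G) (g' := fun _ => 0)
    (B := (ContinuousLinearMap.lsmul ℝ ℝ : ℝ →L[ℝ] ℂ →L[ℝ] ℂ).flip)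
    (by simpa using integrable_fderiv_apply hG hc v) (by simp)
    (by simpa using hG.continuous.integrable_of_hasCompactSupport hc)
    (fun x _ => (hG.differentiable (by norm_num) x).hasFDerivAt) (fun x _ => hasFDerivAt_const _ _)
  simpa using parts

lemma integrable_wdzbar (hG : ContDiff ℝ 1 G) (hc : HasCompactSupport G) (k : Fin n) :
    Integrable (wdzbar k G) :=
  ((integrable_fderiv_apply hG hc _).add
    ((integrable_fderiv_apply hG hc _).const_mul _)).div_const _

lemma integral_wdzbar_eq_zero (hG : ContDiff ℝ 1 G) (hc : HasCompactSupport G) (k : Fin n) :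
    ∫ z, wdzbar k G z = 0 := by
  simp only [wdzbar]
  rw [integral_div, integral_add (integrable_fderiv_apply hG hc _)
    ((integrable_fderiv_apply hG hc _).const_mul _), integral_const_mul,
    integral_fderiv_apply_eq_zero hG hc, integral_fderiv_apply_eq_zero hG hc]
  simp

end Wirtinger

namespace AlphaForm

variable (A : AlphaForm n)

lemma sum_wdzbar_coeff_eq_zero (j : Fin n) (z : Cn n) : ∑ k, wdzbar k (A.coeff j k) z = 0 := by
  have h (k) : wdzbar k (A.coeff j k) z = starRingEnd ℂ (wdz k (A.coeff k j) z) := by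
    rw [← wdzbar_conj ((A.contDiff k j).differentiable (by norm_num) z)]
    exact congrArg (wdzbar k · z) (funext (A.hermitian k j))
  simp only [h, ← map_sum, A.closed, map_zero]

/-- The pairing of two real linear forms on `ℂⁿ` whose value on the differentials of `f` and `φ` is
the density of `df ∧ d^c φ ∧ α`. -/
noncomputable def gradPairing (z : Cn n) (l m : Cn n →L[ℝ] ℝ) : ℝ :=
  (∑ j, ∑ k, A.coeff j k z * wirtingerVec l j * starRingEnd ℂ (wirtingerVec m k)).re

lemma gradPairing_comm (z : Cn n) (l m : Cn n →L[ℝ] ℝ) :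
    A.gradPairing z l m = A.gradPairing z m l := by
  rw [gradPairing, ← conj_re, map_sum, Finset.sum_congr rfl (fun j _ => map_sum _ _ _),
    Finset.sum_comm, gradPairing]
  refine congrArg re (Finset.sum_congr rfl fun j _ => Finset.sum_congr rfl fun k _ => ?_)
  rw [A.hermitian j k]
  simp only [map_mul, conj_conj]
  ring

/-- The components of the vector field `(f · A_{jk} ∂φ/∂z_j)_{jk}`, whose `∂̄`-divergence is
`f · Lφ` plus the gradient pairing because `α` is closed. -/
noncomputable def flux (f φ : Cn n → ℝ) (j k : Fin n) (z : Cn n) : ℂ :=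
  f z * A.coeff j k z * wdz j (fun w => (φ w : ℂ)) z

variable {f φ : Cn n → ℝ}

lemma contDiff_flux (hf : ContDiff ℝ 2 f) (hφ : ContDiff ℝ 2 φ) (j k : Fin n) :
    ContDiff ℝ 1 (A.flux f φ j k) :=
  (((ofRealCLM.contDiff.comp hf).of_le (by norm_num)).mul (A.contDiff j k)).mul
    (contDiff_wdz_ofReal hφ j)

lemma hasCompactSupport_flux (hc : HasCompactSupport f ∨ HasCompactSupport φ) (j k : Fin n) :
    HasCompactSupport (A.flux f φ j k) := by
  rcases hc with hc | hc
  · exact (hc.comp_left (g := fun x : ℝ => (x : ℂ)) ofReal_zero).mul_right.mul_right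
  · exact (hasCompactSupport_wdz (hc.comp_left (g := fun x : ℝ => (x : ℂ)) ofReal_zero) j).mul_left

lemma re_sum_wdzbar_flux (hf : ContDiff ℝ 2 f) (hφ : ContDiff ℝ 2 φ) (z : Cn n) :
    (∑ j, ∑ k, wdzbar k (A.flux f φ j k) z).re
      = f z * alphaOpR A φ z + A.gradPairing z (fderiv ℝ φ z) (fderiv ℝ f z) := by
  have hfz : DifferentiableAt ℝ f z := hf.differentiable (by norm_num) z
  have hF : DifferentiableAt ℝ (fun w => (f w : ℂ)) z := ofRealCLM.differentiableAt.comp z hfz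
  have hcoeff (j k) : DifferentiableAt ℝ (A.coeff j k) z :=
    (A.contDiff j k).differentiable (by norm_num) z
  have product (j k) : wdzbar k (A.flux f φ j k) z
      = f z * (A.coeff j k z * wdzbar k (wdz j fun w => (φ w : ℂ)) z)
        + A.coeff j k z * wirtingerVec (fderiv ℝ φ z) j
          * starRingEnd ℂ (wirtingerVec (fderiv ℝ f z) k)
        + f z * wdz j (fun w => (φ w : ℂ)) z * wdzbar k (A.coeff j k) z := by
    unfold flux
    rw [wdzbar_mul (hF.fun_mul (hcoeff j k))
      ((contDiff_wdz_ofReal hφ j).differentiable (by norm_num) z),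
      wdzbar_mul hF (hcoeff j k), wdzbar_ofReal hfz,
      wdz_ofReal (hφ.differentiable (by norm_num) z)]
    ring
  simp only [product, Finset.sum_add_distrib, ← Finset.mul_sum, A.sum_wdzbar_coeff_eq_zero,
    mul_zero, add_zero, add_re, re_ofReal_mul]
  rfl

lemma integral_mul_alphaOpR (hf : ContDiff ℝ 2 f) (hφ : ContDiff ℝ 2 φ)
    (hc : HasCompactSupport f ∨ HasCompactSupport φ) :
    ∫ z, f z * alphaOpR A φ z = -∫ z, A.gradPairing z (fderiv ℝ φ z) (fderiv ℝ f z) := by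
  have hint (j k) : Integrable (wdzbar k (A.flux f φ j k)) :=
    integrable_wdzbar (A.contDiff_flux hf hφ j k) (A.hasCompactSupport_flux hc j k) k
  have hdiv : Integrable fun z => ∑ j, ∑ k, wdzbar k (A.flux f φ j k) z :=
    integrable_finsetSum _ fun j _ => integrable_finsetSum _ fun k _ => hint j k
  have hdiv_zero : ∫ z, (∑ j, ∑ k, wdzbar k (A.flux f φ j k) z).re = 0 := by
    have hsum : ∫ z, ∑ j, ∑ k, wdzbar k (A.flux f φ j k) z = 0 := by
      rw [integral_finsetSum _ fun j _ => integrable_finsetSum _ fun k _ => hint j k]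
      refine Finset.sum_eq_zero fun j _ => ?_
      rw [integral_finsetSum _ fun k _ => hint j k]
      exact Finset.sum_eq_zero fun k _ => integral_wdzbar_eq_zero (A.contDiff_flux hf hφ j k)
        (A.hasCompactSupport_flux hc j k) k
    exact (integral_re hdiv).trans (by rw [hsum, map_zero])
  have hfL : Integrable fun z => f z * alphaOpR A φ z := by
    refine (hf.continuous.mul (continuous_alphaOpR A hφ)).integrable_of_hasCompactSupport ?_
    exact hc.elim (·.mul_right) fun h =>
      (h.mono' ((subset_tsupport _).trans (tsupport_alphaOpR_subset A hφ))).mul_left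
  have hpair : (fun z => A.gradPairing z (fderiv ℝ φ z) (fderiv ℝ f z)) =
      fun z => (∑ j, ∑ k, wdzbar k (A.flux f φ j k) z).re - f z * alphaOpR A φ z :=
    funext fun z => by rw [A.re_sum_wdzbar_flux hf hφ]; ring
  have hdiv_re : Integrable fun z => (∑ j, ∑ k, wdzbar k (A.flux f φ j k) z).re := hdiv.re
  rw [hpair, integral_sub hdiv_re hfL, hdiv_zero, zero_sub, neg_neg]

lemma integral_mul_alphaOpR_comm (hf : ContDiff ℝ 2 f) (hφ : ContDiff ℝ 2 φ)
    (hc : HasCompactSupport φ) : ∫ z, f z * alphaOpR A φ z = ∫ z, φ z * alphaOpR A f z := by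
  rw [A.integral_mul_alphaOpR hf hφ (.inr hc), A.integral_mul_alphaOpR hφ hf (.inl hc)]
  simp only [A.gradPairing_comm]

end AlphaForm

/-! ### Kato inequality -/

/-- `Θ` is a smooth convex approximation of the positive part `t ↦ max t 0` with error `ε`. -/
structure IsSmoothPosPart (ε : ℝ) (Θ : ℝ → ℝ) : Prop where
  contDiff : ContDiff ℝ (⊤ : ℕ∞) Θ
  eq_zero : ∀ t ≤ 0, Θ t = 0
  nonneg : ∀ t, 0 ≤ Θ t
  sub_le : ∀ t, t - ε ≤ Θ t
  le_self : ∀ t, 0 ≤ t → Θ t ≤ t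
  deriv_nonneg : ∀ t, 0 ≤ deriv Θ t
  deriv_le_one : ∀ t, deriv Θ t ≤ 1
  deriv_deriv_nonneg : ∀ t, 0 ≤ deriv (deriv Θ) t

lemma IsSmoothPosPart.abs_sub_le {ε : ℝ} {Θ : ℝ → ℝ} (h : IsSmoothPosPart ε Θ) (hε : 0 ≤ ε)
    (t : ℝ) : |t - Θ t| ≤ max (-t) 0 + ε := by
  rcases le_total t 0 with ht | ht
  · rw [h.eq_zero t ht, sub_zero, abs_of_nonpos ht]
    linarith [le_max_left (-t) 0]
  · rw [abs_of_nonneg (sub_nonneg.2 (h.le_self t ht))]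
    linarith [le_max_right (-t) 0, h.sub_le t]

lemma exists_isSmoothPosPart {ε : ℝ} (hε : 0 < ε) : ∃ Θ, IsSmoothPosPart ε Θ := by
  set s : ℝ → ℝ := fun t => Real.smoothTransition (t / ε)
  have hs : ContDiff ℝ (⊤ : ℕ∞) s := Real.smoothTransition.contDiff.comp (contDiff_id.div_const ε)
  have hs_mono : Monotone s := fun x y hxy =>
    Real.smoothTransition.monotone (div_le_div_of_nonneg_right hxy hε.le)
  have hs_int (a b) : IntervalIntegrable s volume a b := hs.continuous.intervalIntegrable a b
  set Θ : ℝ → ℝ := fun t => ∫ x in (0 : ℝ)..t, s x with hΘ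
  have hderiv (t) : HasDerivAt Θ (s t) t := intervalIntegral.integral_hasDerivAt_right (hs_int _ _)
    (hs.continuous.stronglyMeasurableAtFilter _ _) hs.continuous.continuousAt
  have hderiv_eq : deriv Θ = s := funext fun t => (hderiv t).deriv
  have hzero (t) (ht : t ≤ 0) : Θ t = 0 := by
    simp only [hΘ]
    refine intervalIntegral.integral_zero_ae (ae_of_all _ fun x hx => ?_)
    rw [Set.uIoc_of_ge ht] at hx
    exact Real.smoothTransition.zero_of_nonpos (div_nonpos_of_nonpos_of_nonneg hx.2 hε.le)
  have hnonneg (t) : 0 ≤ Θ t := by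
    rcases le_total t 0 with ht | ht
    · exact (hzero t ht).ge
    · exact intervalIntegral.integral_nonneg ht fun x _ => Real.smoothTransition.nonneg _
  have hsub (t) : t - ε ≤ Θ t := by
    rcases le_total t ε with ht | ht
    · linarith [hnonneg t]
    · have hsplit : Θ t = Θ ε + ∫ x in ε..t, s x :=
        (intervalIntegral.integral_add_adjacent_intervals (hs_int _ _) (hs_int _ _)).symm
      have hone : ∫ x in ε..t, s x = ∫ _ in ε..t, (1 : ℝ) := by
        refine intervalIntegral.integral_congr fun x hx => ?_
        rw [Set.uIcc_of_le ht] at hx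
        exact Real.smoothTransition.one_of_one_le ((one_le_div hε).2 hx.1)
      rw [hsplit, hone, intervalIntegral.integral_const, smul_eq_mul, mul_one]
      linarith [hnonneg ε]
  have hself (t) (ht : 0 ≤ t) : Θ t ≤ t := by
    have := intervalIntegral.integral_mono_on (g := fun _ => (1 : ℝ)) ht (hs_int 0 t) (by simp)
      fun x _ => Real.smoothTransition.le_one _
    simpa using this
  exact ⟨Θ, contDiff_infty_iff_deriv.2 ⟨fun t => (hderiv t).differentiableAt, hderiv_eq ▸ hs⟩,
    hzero, hnonneg, hsub, hself, fun t => hderiv_eq ▸ Real.smoothTransition.nonneg _,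
    fun t => hderiv_eq ▸ Real.smoothTransition.le_one _, fun t => hderiv_eq ▸ hs_mono.deriv_nonneg⟩

/-- `φ` is a test function on `D`: smooth, compactly supported, with support in `D`. -/
structure IsTestFunction (D : Set (Cn n)) (φ : Cn n → ℝ) : Prop where
  contDiff : ContDiff ℝ (⊤ : ℕ∞) φ
  hasCompactSupport : HasCompactSupport φ
  tsupport_subset : tsupport φ ⊆ D

section LocallyIntegrable

variable {X : Type*} [MetricSpace X] [MeasurableSpace X] {μ : Measure X} {D : Set X}
  {a g : X → ℝ}

lemma integrable_mul_of_tsupport_subset [OpensMeasurableSpace X] (ha : LocallyIntegrableOn a D μ)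
    (hg : Continuous g) (hc : HasCompactSupport g) (hs : tsupport g ⊆ D) :
    Integrable (fun z => a z * g z) μ := by
  refine (integrableOn_iff_integrable_of_support_subset ?_).1
    ((ha.integrableOn_compact_subset hs hc).mul_continuousOn hg.continuousOn hc)
  exact (Function.support_mul_subset_right _ _).trans (subset_tsupport g)

lemma setIntegral_mul_of_tsupport_subset (hs : tsupport g ⊆ D) :
    ∫ z in D, a z * g z ∂μ = ∫ z, a z * g z ∂μ :=
  setIntegral_eq_integral_of_forall_compl_eq_zero fun z hz => by
    rw [image_eq_zero_of_notMem_tsupport fun h => hz (hs h), mul_zero]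

end LocallyIntegrable

namespace IsTestFunction

variable {D : Set (Cn n)} {φ χ : Cn n → ℝ}

lemma contDiff_two (h : IsTestFunction D φ) : ContDiff ℝ 2 φ :=
  h.contDiff.of_le ENat.LEInfty.out

lemma sub (h : IsTestFunction D φ) (h' : IsTestFunction D χ) : IsTestFunction D (φ - χ) :=
  ⟨h.contDiff.sub h'.contDiff, h.hasCompactSupport.sub h'.hasCompactSupport,
    (tsupport_sub φ χ).trans (Set.union_subset h.tsupport_subset h'.tsupport_subset)⟩

lemma comp (h : IsTestFunction D φ) {Θ : ℝ → ℝ} (hΘ : ContDiff ℝ (⊤ : ℕ∞) Θ) (h0 : Θ 0 = 0) :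
    IsTestFunction D fun z => Θ (φ z) :=
  ⟨hΘ.comp h.contDiff, h.hasCompactSupport.comp_left h0,
    (tsupport_comp_subset h0 φ).trans h.tsupport_subset⟩

lemma continuous_op (A : AlphaForm n) (h : IsTestFunction D φ) : Continuous (alphaOpR A φ) :=
  continuous_alphaOpR A h.contDiff_two

lemma hasCompactSupport_op (A : AlphaForm n) (h : IsTestFunction D φ) :
    HasCompactSupport (alphaOpR A φ) :=
  h.hasCompactSupport.mono' ((subset_tsupport _).trans (tsupport_alphaOpR_subset A h.contDiff_two))

lemma tsupport_op_subset (A : AlphaForm n) (h : IsTestFunction D φ) :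
    tsupport (alphaOpR A φ) ⊆ D :=
  (tsupport_alphaOpR_subset A h.contDiff_two).trans h.tsupport_subset

lemma integrable_mul_op (A : AlphaForm n) (h : IsTestFunction D φ) {a : Cn n → ℝ}
    (ha : LocallyIntegrableOn a D volume) : Integrable fun z => a z * alphaOpR A φ z :=
  integrable_mul_of_tsupport_subset ha (h.continuous_op A) (h.hasCompactSupport_op A)
    (h.tsupport_op_subset A)

lemma integrable_mul_posPart_op (A : AlphaForm n) (h : IsTestFunction D φ) {a : Cn n → ℝ}
    (ha : LocallyIntegrableOn a D volume) : Integrable fun z => a z * max (alphaOpR A φ z) 0 :=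
  integrable_mul_of_tsupport_subset ha ((h.continuous_op A).max continuous_const)
    ((h.hasCompactSupport_op A).comp_left (g := fun x => max x 0) (max_self 0))
    ((tsupport_comp_subset (g := fun x : ℝ => max x 0) (max_self 0) _).trans
      (h.tsupport_op_subset A))

lemma integrable_negPart (h : IsTestFunction D φ) : Integrable fun z => max (-φ z) 0 :=
  (h.contDiff.continuous.neg.max continuous_const).integrable_of_hasCompactSupport
    (h.hasCompactSupport.comp_left (g := fun x => max (-x) 0) (by simp))

end IsTestFunction

/-- `a` is `α`-subharmonic on `D` in the sense of distributions: `La ≥ 0`. -/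
def IsDistSubharmonic (A : AlphaForm n) (D : Set (Cn n)) (a : Cn n → ℝ) : Prop :=
  ∀ φ, IsTestFunction D φ → (∀ z, 0 ≤ φ z) → 0 ≤ ∫ z, a z * alphaOpR A φ z

lemma IsSmoothPosPart.alphaOpR_sub_comp_le (A : AlphaForm n) {ε : ℝ} {Θ : ℝ → ℝ}
    (hΘ : IsSmoothPosPart ε Θ) {φ : Cn n → ℝ} (hφ : ContDiff ℝ 2 φ) (z : Cn n) :
    alphaOpR A φ z - alphaOpR A (fun w => Θ (φ w)) z ≤ max (alphaOpR A φ z) 0 := by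
  have chain := alphaOpR_comp A hφ (hΘ.contDiff.of_le (m := 2) ENat.LEInfty.out) z
  have convex : 0 ≤ deriv (deriv Θ) (φ z) * A.leviTrace z (rankOneForm (fderiv ℝ φ z)) :=
    mul_nonneg (hΘ.deriv_deriv_nonneg _) (A.leviTrace_rankOneForm_nonneg z _)
  calc alphaOpR A φ z - alphaOpR A (fun w => Θ (φ w)) z
      ≤ (1 - deriv Θ (φ z)) * alphaOpR A φ z := by linarith
    _ ≤ (1 - deriv Θ (φ z)) * max (alphaOpR A φ z) 0 :=
        mul_le_mul_of_nonneg_left (le_max_left _ _) (sub_nonneg.2 (hΘ.deriv_le_one _))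
    _ ≤ max (alphaOpR A φ z) 0 := mul_le_of_le_one_left (le_max_right _ _)
        (sub_le_self _ (hΘ.deriv_nonneg _))

section Obstacle

variable (A : AlphaForm n) {D : Set (Cn n)} {a b φ : Cn n → ℝ} {F : ℝ}

lemma neg_integral_sub_comp_le {ε : ℝ} (hε : 0 ≤ ε) {Θ : ℝ → ℝ} (hΘ : IsSmoothPosPart ε Θ)
    (hb : ContDiff ℝ 2 b) (hF : ∀ z ∈ D, |alphaOpR A b z| ≤ F)
    (hφ : IsTestFunction D φ) :
    -(F * ∫ z, max (-φ z) 0) - F * volume.real (tsupport φ) * ε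
      ≤ ∫ z, (φ z - Θ (φ z)) * alphaOpR A b z := by
  have hΘφ : IsTestFunction D fun z => Θ (φ z) := hφ.comp hΘ.contDiff (hΘ.eq_zero 0 le_rfl)
  have hind : Integrable ((tsupport φ).indicator fun _ : Cn n => F * ε) :=
    (integrable_indicator_iff (isClosed_tsupport φ).measurableSet).2
      (integrableOn_const hφ.hasCompactSupport.isCompact.measure_lt_top.ne)
  have hlower : Integrable fun z => -(F * max (-φ z) 0) := (hφ.integrable_negPart.const_mul F).neg
  calc -(F * ∫ z, max (-φ z) 0) - F * volume.real (tsupport φ) * ε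
      = ∫ z, (-(F * max (-φ z) 0) - (tsupport φ).indicator (fun _ => F * ε) z) := by
        rw [integral_sub hlower hind, integral_neg, integral_const_mul,
          integral_indicator (isClosed_tsupport φ).measurableSet, setIntegral_const, smul_eq_mul]
        ring
    _ ≤ _ := ?_
  refine integral_mono (hlower.sub hind) ?_ fun z => ?_
  · exact ((hφ.sub hΘφ).contDiff.continuous.mul (continuous_alphaOpR A hb)
      ).integrable_of_hasCompactSupport (hφ.sub hΘφ).hasCompactSupport.mul_right
  change -(F * max (-φ z) 0) - (tsupport φ).indicator (fun _ => F * ε) z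
    ≤ (φ z - Θ (φ z)) * alphaOpR A b z
  by_cases hz : z ∈ tsupport φ
  · have hbound : |(φ z - Θ (φ z)) * alphaOpR A b z| ≤ (max (-φ z) 0 + ε) * F := by
      rw [abs_mul]
      exact mul_le_mul (hΘ.abs_sub_le hε _) (hF z (hφ.tsupport_subset hz)) (abs_nonneg _)
        (by positivity)
    rw [Set.indicator_of_mem hz]
    linarith [neg_le_of_abs_le hbound]
  · rw [Set.indicator_of_notMem hz, image_eq_zero_of_notMem_tsupport hz]
    simp [hΘ.eq_zero 0 le_rfl]

/-- The one-sided estimate that Hahn-Banach turns into a solution of the obstacle problem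
`a ≤ v ≤ b`, `0 ≤ Lv ≤ F`. -/
lemma neg_integral_mul_alphaOpR_le (ha : LocallyIntegrableOn a D volume)
    (hsub : IsDistSubharmonic A D a) (hb : ContDiff ℝ 2 b) (hab : ∀ z ∈ D, a z ≤ b z)
    (hF : ∀ z ∈ D, |alphaOpR A b z| ≤ F) (hφ : IsTestFunction D φ) :
    -∫ z, a z * alphaOpR A φ z
      ≤ (∫ z, (b z - a z) * max (alphaOpR A φ z) 0) + F * ∫ z, max (-φ z) 0 := by
  have hbloc : LocallyIntegrableOn b D volume :=
    hb.continuous.locallyIntegrable.locallyIntegrableOn D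
  have haφ := hφ.integrable_mul_op A ha
  have hmax := hφ.integrable_mul_posPart_op A (a := fun z => b z - a z) (hbloc.sub ha)
  have approx (ε : ℝ) (hε : 0 < ε) : -∫ z, a z * alphaOpR A φ z
      ≤ (∫ z, (b z - a z) * max (alphaOpR A φ z) 0) + F * (∫ z, max (-φ z) 0)
        + F * volume.real (tsupport φ) * ε := by
    obtain ⟨Θ, hΘ⟩ := exists_isSmoothPosPart hε
    have hΘφ : IsTestFunction D fun z => Θ (φ z) := hφ.comp hΘ.contDiff (hΘ.eq_zero 0 le_rfl)
    have hχ := hφ.sub hΘφ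
    have haΘ := hΘφ.integrable_mul_op A ha
    have hbχ := hχ.integrable_mul_op A hbloc
    have hmono : ∫ z, (b z * alphaOpR A (φ - fun z => Θ (φ z)) z
          + a z * alphaOpR A (fun z => Θ (φ z)) z)
        ≤ ∫ z, (a z * alphaOpR A φ z + (b z - a z) * max (alphaOpR A φ z) 0) := by
      refine integral_mono (hbχ.add haΘ) (haφ.add hmax) fun z => ?_
      beta_reduce
      have hLχ := alphaOpR_sub A hφ.contDiff_two hΘφ.contDiff_two z
      by_cases hz : z ∈ D
      · have hkato := mul_le_mul_of_nonneg_left (hΘ.alphaOpR_sub_comp_le A hφ.contDiff_two z)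
          (sub_nonneg.2 (hab z hz))
        rw [hLχ]
        linarith
      · rw [hLχ, image_eq_zero_of_notMem_tsupport fun h => hz (hφ.tsupport_op_subset A h),
          image_eq_zero_of_notMem_tsupport fun h => hz (hΘφ.tsupport_op_subset A h)]
        simp
    rw [integral_add hbχ haΘ, integral_add haφ hmax,
      A.integral_mul_alphaOpR_comm hb hχ.contDiff_two hχ.hasCompactSupport] at hmono
    have hpos := hsub _ hΘφ fun z => hΘ.nonneg _
    have hsmall := neg_integral_sub_comp_le A hε.le hΘ hb hF hφ
    simp only [Pi.sub_apply] at hmono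
    linarith
  have hlim : Tendsto (fun k : ℕ => (∫ z, (b z - a z) * max (alphaOpR A φ z) 0)
      + F * (∫ z, max (-φ z) 0) + F * volume.real (tsupport φ) * (1 / (k + 1))) atTop
      (𝓝 ((∫ z, (b z - a z) * max (alphaOpR A φ z) 0) + F * ∫ z, max (-φ z) 0)) := by
    simpa only [mul_zero, add_zero] using (tendsto_one_div_add_atTop_nhds_zero_nat.const_mul
      (F * volume.real (tsupport φ))).const_add _
  exact ge_of_tendsto' hlim fun k => approx _ Nat.one_div_pos_of_nat

end Obstacle

end ComplexHessian

/-! ### The obstacle problem -/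

section HahnBanach

variable {Ω : Type*} [MeasurableSpace Ω] {m : Measure Ω}

lemma integral_abs_le_mul_norm_Lp_two [IsFiniteMeasure m] (g : Lp ℝ 2 m) :
    ∫ x, |g x| ∂m ≤ m.real Set.univ ^ (1 / 2 : ℝ) * ‖g‖ := by
  have hg : Integrable g m := (Lp.memLp g).integrable (by norm_num)
  have hölder := eLpNorm_le_eLpNorm_mul_rpow_measure_univ (μ := m) (p := 1) (q := 2) (by norm_num)
    (Lp.memLp g).1
  have hfin : eLpNorm g 2 m * m Set.univ ^ (1 / (1 : ENNReal).toReal - 1 / (2 : ENNReal).toReal)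
      ≠ ⊤ := ENNReal.mul_ne_top (Lp.memLp g).2.ne
    (ENNReal.rpow_ne_top_of_nonneg (by norm_num) (measure_ne_top _ _))
  have hreal := ENNReal.toReal_mono hfin hölder
  rw [ENNReal.toReal_mul, ← ENNReal.toReal_rpow, ← Lp.norm_def, mul_comm] at hreal
  simp only [← Real.norm_eq_abs]
  rw [integral_norm_eq_lintegral_enorm hg.1, ← eLpNorm_one_eq_lintegral_enorm]
  refine hreal.trans_eq ?_
  norm_num [Measure.real]

lemma integral_posPart_smul_Lp {c : ℝ} (hc : 0 ≤ c) (g : Lp ℝ 2 m) :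
    ∫ x, max ((c • g : Lp ℝ 2 m) x) 0 ∂m = c * ∫ x, max (g x) 0 ∂m := by
  rw [← integral_const_mul]
  refine integral_congr_ae ?_
  filter_upwards [Lp.coeFn_smul c g] with x hx
  rw [hx, Pi.smul_apply, smul_eq_mul, mul_max_of_nonneg _ _ hc, mul_zero]

lemma posPart_add_le (s t : ℝ) : max (s + t) 0 ≤ max s 0 + max t 0 :=
  max_le (add_le_add (le_max_left _ _) (le_max_left _ _))
    (add_nonneg (le_max_right _ _) (le_max_right _ _))

lemma integral_posPart_add_Lp_le [IsFiniteMeasure m] (g k : Lp ℝ 2 m) :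
    ∫ x, max ((g + k : Lp ℝ 2 m) x) 0 ∂m ≤ (∫ x, max (g x) 0 ∂m) + ∫ x, max (k x) 0 ∂m := by
  have hint (g : Lp ℝ 2 m) : Integrable (fun x => max (g x) 0) m :=
    ((Lp.memLp g).integrable (by norm_num)).pos_part
  rw [← integral_add (hint g) (hint k)]
  refine integral_mono_ae (hint _) ((hint g).add (hint k)) ?_
  filter_upwards [Lp.coeFn_add g k] with x hx
  rw [hx]
  exact posPart_add_le _ _

lemma exists_density_of_le_integral_posPart [IsFiniteMeasure m] (ℓ : Lp ℝ 2 m →ₗ[ℝ] ℝ)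
    (hℓ : ∀ g : Lp ℝ 2 m, ℓ g ≤ ∫ x, max (g x) 0 ∂m) :
    ∃ h : Ω → ℝ, Measurable h ∧ (∀ x, h x ∈ Set.Icc 0 1) ∧
      ∀ g : Lp ℝ 2 m, ℓ g = ∫ x, h x * g x ∂m := by
  have hint (g : Lp ℝ 2 m) : Integrable g m := (Lp.memLp g).integrable (by norm_num)
  have upper (g) : ℓ g ≤ m.real Set.univ ^ (1 / 2 : ℝ) * ‖g‖ :=
    (hℓ g).trans <| (integral_mono (hint g).pos_part (hint g).abs fun x =>
      max_le (le_abs_self _) (abs_nonneg _)).trans (integral_abs_le_mul_norm_Lp_two g)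
  have bounded (g) : ‖ℓ g‖ ≤ m.real Set.univ ^ (1 / 2 : ℝ) * ‖g‖ := by
    have := upper (-g)
    rw [map_neg, norm_neg] at this
    exact abs_le.2 ⟨neg_le.1 this, upper g⟩
  set h₀ : Lp ℝ 2 m := (InnerProductSpace.toDual ℝ _).symm (ℓ.mkContinuous _ bounded)
  have riesz (g) : inner ℝ h₀ g = ℓ g := InnerProductSpace.toDual_symm_apply
  have test (S : Set Ω) (hS : MeasurableSet S) (hS' : m S < ⊤) (c : ℝ) :
      c * ∫ x in S, h₀ x ∂m ≤ max c 0 * m.real S := by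
    have hℓS := hℓ (indicatorConstLp 2 hS hS'.ne c)
    rw [← riesz, real_inner_comm, L2.inner_indicatorConstLp_eq_inner_setIntegral] at hℓS
    calc c * ∫ x in S, h₀ x ∂m = inner ℝ c (∫ x in S, h₀ x ∂m) := by simp [mul_comm]
      _ ≤ _ := hℓS
      _ = ∫ x, S.indicator (fun _ => max c 0) x ∂m := by
          refine integral_congr_ae ?_
          filter_upwards [indicatorConstLp_coeFn (p := 2) (hs := hS) (hμs := hS'.ne) (c := c)]
            with x hx
          by_cases hxS : x ∈ S <;> simp [hx, hxS]
      _ = max c 0 * m.real S := by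
          rw [integral_indicator hS, setIntegral_const, smul_eq_mul, mul_comm]
  have nonneg : 0 ≤ᵐ[m] h₀ := ae_nonneg_of_forall_setIntegral_nonneg (hint h₀) fun S hS hS' => by
    simpa using test S hS hS' (-1)
  have le_one : h₀ ≤ᵐ[m] fun _ => (1 : ℝ) := ae_le_of_forall_setIntegral_le (hint h₀)
    (integrable_const _) fun S hS hS' => by simpa using test S hS hS' 1
  refine ⟨fun x => max 0 (min 1 (h₀ x)),
    measurable_const.max (measurable_const.min (Lp.stronglyMeasurable h₀).measurable),
    fun x => ⟨le_max_left _ _, max_le zero_le_one (min_le_left _ _)⟩, fun g => ?_⟩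
  rw [← riesz, L2.inner_def]
  refine integral_congr_ae ?_
  filter_upwards [nonneg, le_one] with x h0 h1
  rw [min_eq_right h1, max_eq_right (show (0 : ℝ) ≤ h₀ x from h0)]
  simp [mul_comm]

lemma exists_density_of_le_integral_posPart_add [IsFiniteMeasure m] {T : Type*} [AddCommGroup T]
    [Module ℝ T] (Λ : T →ₗ[ℝ] Lp ℝ 2 m) {s : T → ℝ} (s_smul : ∀ c > 0, ∀ φ, s (c • φ) = c * s φ)
    (s_add : ∀ φ χ, s (φ + χ) ≤ s φ + s χ) (f : T →ₗ[ℝ] ℝ)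
    (hf : ∀ φ, f φ ≤ (∫ x, max (Λ φ x) 0 ∂m) + s φ) :
    ∃ h : Ω → ℝ, Measurable h ∧ (∀ x, h x ∈ Set.Icc 0 1) ∧
      ∀ φ, f φ - ∫ x, h x * Λ φ x ∂m ≤ s φ := by
  obtain ⟨G, hG, hGle⟩ := exists_extension_of_le_sublinear
    ⟨LinearMap.range (Λ.prod LinearMap.id), (f.comp (LinearMap.snd ℝ (Lp ℝ 2 m) T)).domRestrict _⟩
    (fun x => (∫ y, max (x.1 y) 0 ∂m) + s x.2)
    (fun c hc x => by
      rw [Prod.smul_fst, Prod.smul_snd, integral_posPart_smul_Lp hc.le, s_smul c hc, mul_add])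
    (fun x y => by
      rw [Prod.fst_add, Prod.snd_add]
      linarith [integral_posPart_add_Lp_le x.1 y.1, s_add x.2 y.2])
    (by rintro ⟨x, ⟨φ, rfl⟩⟩; exact hf φ)
  have s_zero : s 0 = 0 := by linarith [s_smul 2 two_pos 0, congrArg s (smul_zero (A := T) (2 : ℝ))]
  have posPart_zero : ∫ x, max ((0 : Lp ℝ 2 m) x) 0 ∂m = 0 := by
    simpa using integral_posPart_smul_Lp le_rfl (0 : Lp ℝ 2 m)
  obtain ⟨h, h_meas, h_mem, h_eq⟩ := exists_density_of_le_integral_posPart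
    (G.comp (LinearMap.inl ℝ _ _)) fun g => by simpa [s_zero] using hGle (g, 0)
  refine ⟨h, h_meas, h_mem, fun φ => ?_⟩
  have split : f φ = G (Λ φ, 0) + G (0, φ) := by
    rw [← map_add, Prod.mk_add_mk, add_zero, zero_add]
    exact (hG ⟨(Λ φ, φ), ⟨φ, rfl⟩⟩).symm
  have hs := hGle (0, φ)
  rw [posPart_zero, zero_add] at hs
  rw [← h_eq, split]
  simpa using hs

end HahnBanach

section Weight

variable {X : Type*} [PseudoMetricSpace X] {D : Set X}

lemma subset_of_le_infDist_compl {t : ℝ} (ht : 0 < t) : {z | t ≤ infDist z Dᶜ} ⊆ D := by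
  intro z hz
  by_contra h
  exact ht.not_ge (hz.trans_eq (infDist_zero_of_mem h))

lemma isCompact_le_infDist_compl [ProperSpace X] (hDb : Bornology.IsBounded D) {t : ℝ}
    (ht : 0 < t) : IsCompact {z | t ≤ infDist z Dᶜ} :=
  isCompact_of_isClosed_isBounded (isClosed_le continuous_const (continuous_infDist_pt _))
    (hDb.subset (subset_of_le_infDist_compl ht))

lemma exists_pos_le_infDist_compl (hDc : Dᶜ.Nonempty) (hD : IsOpen D) {K : Set X}
    (hK : IsCompact K) (hKD : K ⊆ D) : ∃ t > 0, ∀ z ∈ K, t ≤ infDist z Dᶜ := by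
  rcases K.eq_empty_or_nonempty with rfl | hne
  · exact ⟨1, one_pos, by simp⟩
  obtain ⟨x, hx, hmin⟩ := hK.exists_isMinOn hne (continuous_infDist_pt Dᶜ).continuousOn
  exact ⟨_, (hD.isClosed_compl.notMem_iff_infDist_pos hDc).1 fun h => h (hKD hx),
    fun z hz => hmin hz⟩

/-- The index of the shell of `D` containing `z`: it is at most `k` when `z` is at distance at
least `1 / k` from the complement of `D`. -/
noncomputable def shellIndex (D : Set X) (z : X) : ℕ := ⌈1 / infDist z Dᶜ⌉₊

lemma shellIndex_le {t : ℝ} (ht : 0 < t) {z : X} (hz : t ≤ infDist z Dᶜ) :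
    shellIndex D z ≤ ⌈1 / t⌉₊ :=
  Nat.ceil_mono (one_div_le_one_div_of_le ht hz)

lemma one_div_le_infDist_of_shellIndex (hD : IsOpen D) (hDc : Dᶜ.Nonempty) {z : X} (hz : z ∈ D) :
    1 / ((shellIndex D z : ℝ) + 1) ≤ infDist z Dᶜ := by
  have hpos := (hD.isClosed_compl.notMem_iff_infDist_pos hDc).1 fun h => h hz
  rw [one_div_le (by positivity) hpos]
  exact (Nat.le_ceil _).trans (le_add_of_nonneg_right zero_le_one)

variable [MeasurableSpace X] [BorelSpace X] {μ : Measure X}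

lemma measurable_shellIndex : Measurable (shellIndex D) :=
  Nat.measurable_ceil.comp (measurable_const.div (continuous_infDist_pt _).measurable)

lemma sigmaFinite_map_shellIndex [ProperSpace X] (hD : IsOpen D) (hDb : Bornology.IsBounded D)
    (hDc : Dᶜ.Nonempty) {c : X → ℝ} (hc : LocallyIntegrableOn c D μ) :
    SigmaFinite
      (((μ.restrict D).withDensity fun z => ENNReal.ofReal (c z)).map (shellIndex D)) := by
  refine ⟨⟨⟨fun k => {k}, fun _ => trivial, fun k => ?_, by ext k; simp⟩⟩⟩
  have shell : shellIndex D ⁻¹' {k} ∩ D ⊆ {z | 1 / ((k : ℝ) + 1) ≤ infDist z Dᶜ} := by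
    rintro z ⟨rfl, hzD⟩
    exact one_div_le_infDist_of_shellIndex hD hDc hzD
  have hpos : 0 < 1 / ((k : ℝ) + 1) := by positivity
  have hmeas := measurable_shellIndex (D := D) (measurableSet_singleton k)
  rw [Measure.map_apply measurable_shellIndex (measurableSet_singleton k),
    withDensity_apply _ hmeas, Measure.restrict_restrict hmeas]
  exact (lintegral_mono_set shell).trans_lt (hc.integrableOn_compact_subset
    (subset_of_le_infDist_compl hpos) (isCompact_le_infDist_compl hDb hpos)).lintegral_lt_top

lemma exists_weight [ProperSpace X] (hD : IsOpen D) (hDb : Bornology.IsBounded D)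
    (hDc : Dᶜ.Nonempty) {c : X → ℝ} (hc : LocallyIntegrableOn c D μ) :
    ∃ w : X → ℝ, Measurable w ∧ (∀ z, 0 < w z) ∧
      (∀ K, IsCompact K → K ⊆ D → ∃ t > 0, ∀ z ∈ K, t ≤ w z) ∧
      ∫⁻ z in D, ENNReal.ofReal (w z * c z) ∂μ < ⊤ := by
  have := sigmaFinite_map_shellIndex hD hDb hDc hc
  obtain ⟨g, g_pos, -, g_int⟩ := exists_pos_lintegral_lt_of_sigmaFinite
    (((μ.restrict D).withDensity fun z => ENNReal.ofReal (c z)).map (shellIndex D)) one_ne_zero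
  refine ⟨fun z => g (shellIndex D z),
    (measurable_of_countable fun k => (g k : ℝ)).comp measurable_shellIndex,
    fun z => mod_cast g_pos _, fun K hK hKD => ?_, ?_⟩
  · obtain ⟨t, ht, hKt⟩ := exists_pos_le_infDist_compl hDc hD hK hKD
    obtain ⟨k₀, -, hk₀⟩ := Finset.exists_min_image (Finset.range (⌈1 / t⌉₊ + 1)) g ⟨0, by simp⟩
    exact ⟨g k₀, mod_cast g_pos _, fun z hz => mod_cast hk₀ (shellIndex D z)
      (Finset.mem_range_succ_iff.2 (shellIndex_le ht (hKt z hz)))⟩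
  · rw [lintegral_map (by fun_prop) measurable_shellIndex] at g_int
    refine lt_of_eq_of_lt ?_ (g_int.trans ENNReal.one_lt_top)
    refine Eq.trans (lintegral_congr fun z => ?_) (lintegral_withDensity_eq_lintegral_mul₀
      hc.aestronglyMeasurable.aemeasurable.ennreal_ofReal
      ((measurable_of_countable fun k => (g k : ENNReal)).comp
        measurable_shellIndex).aemeasurable).symm
    rw [ENNReal.ofReal_mul NNReal.zero_le_coe, Pi.mul_apply, mul_comm]
    simp

end Weight

section Obstacle

variable {T : Type*} [AddCommGroup T] [Module ℝ T]

section LinearMap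

variable {X : Type*} [MeasurableSpace X] {μ : Measure X} {a : X → ℝ}

lemma exists_linearMap_Lp (Λ : T →ₗ[ℝ] X → ℝ) (hΛ : ∀ φ, MemLp (Λ φ) 2 μ) :
    ∃ Γ : T →ₗ[ℝ] Lp ℝ 2 μ, ∀ φ, Γ φ =ᵐ[μ] Λ φ :=
  ⟨{ toFun := fun φ => (hΛ φ).toLp
     map_add' := fun φ χ => by simp only [map_add]; rfl
     map_smul' := fun r φ => by simp only [map_smul, RingHom.id_apply]; rfl },
    fun φ => (hΛ φ).coeFn_toLp⟩

lemma exists_linearMap_integral_mul (Λ : T →ₗ[ℝ] X → ℝ)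
    (ha : ∀ φ, Integrable (fun z => a z * Λ φ z) μ) :
    ∃ f : T →ₗ[ℝ] ℝ, ∀ φ, f φ = ∫ z, a z * Λ φ z ∂μ :=
  ⟨{ toFun := fun φ => ∫ z, a z * Λ φ z ∂μ
     map_add' := fun φ χ => by
      simp only [map_add, Pi.add_apply, mul_add, integral_add (ha φ) (ha χ)]
     map_smul' := fun r φ => by
      simp only [map_smul, Pi.smul_apply, smul_eq_mul, RingHom.id_apply, mul_left_comm (a _) r,
        integral_const_mul] },
    fun _ => rfl⟩

end LinearMap

variable {X : Type*} [MetricSpace X] [MeasurableSpace X] {μ : Measure X} {D : Set X}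
  {a c w : X → ℝ}

lemma integral_withDensity_inv_mul [SecondCountableTopology X]
    (hD : MeasurableSet D) (hw : Measurable w) (hw0 : ∀ z, 0 < w z) (hc : LocallyIntegrableOn c D μ)
    (hc0 : ∀ z ∈ D, 0 ≤ c z) {g : X → ℝ} (hg : tsupport g ⊆ D) :
    ∫ z, w⁻¹ z * g z ∂(μ.restrict D).withDensity (fun z => ENNReal.ofReal (w z * c z))
      = ∫ z, c z * g z ∂μ := by
  have density : AEMeasurable (fun z => ENNReal.ofReal (w z * c z)) (μ.restrict D) :=
    (hw.aemeasurable.mul hc.aestronglyMeasurable.aemeasurable).ennreal_ofReal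
  rw [integral_withDensity_eq_integral_toReal_smul₀ density
    (ae_of_all _ fun z => ENNReal.ofReal_lt_top), ← setIntegral_mul_of_tsupport_subset hg]
  refine setIntegral_congr_fun hD fun z hz => ?_
  simp only [ENNReal.toReal_ofReal (mul_nonneg (hw0 z).le (hc0 z hz)), smul_eq_mul, Pi.inv_apply]
  field_simp [(hw0 z).ne']

lemma memLp_inv_mul [BorelSpace X] {m : Measure X} [IsFiniteMeasure m] {p : ENNReal}
    (hw : Measurable w) (hwK : ∀ K, IsCompact K → K ⊆ D → ∃ t > 0, ∀ z ∈ K, t ≤ w z) {g : X → ℝ}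
    (hg : Continuous g) (hgc : HasCompactSupport g) (hgD : tsupport g ⊆ D) :
    MemLp (w⁻¹ * g) p m := by
  obtain ⟨t, ht, hKt⟩ := hwK _ hgc hgD
  obtain ⟨C, hC⟩ := hg.bounded_above_of_compact_support hgc
  refine MemLp.of_bound (hw.inv.mul hg.measurable).aestronglyMeasurable (t⁻¹ * C)
    (ae_of_all _ fun z => ?_)
  rw [Pi.mul_apply, norm_mul, Pi.inv_apply, norm_inv]
  by_cases hz : z ∈ tsupport g
  · exact mul_le_mul (inv_anti₀ ht ((hKt z hz).trans (Real.le_norm_self _))) (hC z)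
      (norm_nonneg _) (inv_nonneg.2 ht.le)
  · rw [image_eq_zero_of_notMem_tsupport hz, norm_zero, mul_zero]
    exact mul_nonneg (inv_nonneg.2 ht.le) ((norm_nonneg _).trans (hC z))

lemma locallyIntegrableOn_mul_of_mem_Icc {h : X → ℝ} (hh : Measurable h)
    (h_mem : ∀ z, h z ∈ Set.Icc 0 1) (hc : LocallyIntegrableOn c D μ) :
    LocallyIntegrableOn (fun z => h z * c z) D μ := fun z hz => by
  obtain ⟨U, hU, hcU⟩ := hc z hz
  refine ⟨U, hU, hcU.bdd_mul (c := 1) hh.aestronglyMeasurable (ae_of_all _ fun x => ?_)⟩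
  rw [Real.norm_of_nonneg (h_mem x).1]
  exact (h_mem x).2

theorem exists_density_of_le_integral_mul_posPart [ProperSpace X] [BorelSpace X] (hD : IsOpen D)
    (hDb : Bornology.IsBounded D) (hDc : Dᶜ.Nonempty) (ha : LocallyIntegrableOn a D μ)
    (hc : LocallyIntegrableOn c D μ) (hc0 : ∀ z ∈ D, 0 ≤ c z) (Λ : T →ₗ[ℝ] X → ℝ)
    (hΛ : ∀ φ, Continuous (Λ φ)) (hΛc : ∀ φ, HasCompactSupport (Λ φ))
    (hΛD : ∀ φ, tsupport (Λ φ) ⊆ D) {s : T → ℝ} (s_smul : ∀ r > 0, ∀ φ, s (r • φ) = r * s φ)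
    (s_add : ∀ φ χ, s (φ + χ) ≤ s φ + s χ)
    (hs : ∀ φ, -∫ z, a z * Λ φ z ∂μ ≤ (∫ z, c z * max (Λ φ z) 0 ∂μ) + s φ) :
    ∃ h : X → ℝ, Measurable h ∧ (∀ z, h z ∈ Set.Icc 0 1) ∧
      ∀ φ, -∫ z, (a z + h z * c z) * Λ φ z ∂μ ≤ s φ := by
  obtain ⟨w, hw, hw0, hwK, hwc⟩ := exists_weight hD hDb hDc hc
  set m := (μ.restrict D).withDensity fun z => ENNReal.ofReal (w z * c z)
  have : IsFiniteMeasure m := isFiniteMeasure_withDensity hwc.ne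
  have lift (g : X → ℝ) (hg : tsupport g ⊆ D) : ∫ z, w⁻¹ z * g z ∂m = ∫ z, c z * g z ∂μ :=
    integral_withDensity_inv_mul hD.measurableSet hw hw0 hc hc0 hg
  obtain ⟨Γ, hΓ⟩ := exists_linearMap_Lp (LinearMap.mulLeft ℝ w⁻¹ ∘ₗ Λ) fun φ =>
    memLp_inv_mul (m := m) (p := 2) hw hwK (hΛ φ) (hΛc φ) (hΛD φ)
  have integrable_Λ {b : X → ℝ} (hb : LocallyIntegrableOn b D μ) (φ) :
      Integrable (fun z => b z * Λ φ z) μ :=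
    integrable_mul_of_tsupport_subset hb (hΛ φ) (hΛc φ) (hΛD φ)
  obtain ⟨f, hf⟩ := exists_linearMap_integral_mul Λ (integrable_Λ ha)
  have posPart (φ) : ∫ z, max (Γ φ z) 0 ∂m = ∫ z, c z * max (Λ φ z) 0 ∂μ := by
    rw [← lift (fun z => max (Λ φ z) 0) ((tsupport_comp_subset (g := fun x : ℝ => max x 0)
      (max_self 0) _).trans (hΛD φ))]
    refine integral_congr_ae ((hΓ φ).mono fun z hz => ?_)
    simp only [hz, Pi.inv_apply, mul_max_of_nonneg _ _ (inv_nonneg.2 (hw0 z).le), mul_zero]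
    rfl
  obtain ⟨h, h_meas, h_mem, h_le⟩ := exists_density_of_le_integral_posPart_add Γ s_smul s_add (-f)
    fun φ => by rw [LinearMap.neg_apply, hf, posPart]; exact hs φ
  refine ⟨h, h_meas, h_mem, fun φ => ?_⟩
  have pairing : ∫ z, h z * Γ φ z ∂m = ∫ z, (h z * c z) * Λ φ z ∂μ := calc
    ∫ z, h z * Γ φ z ∂m = ∫ z, w⁻¹ z * (h z * Λ φ z) ∂m :=
      integral_congr_ae ((hΓ φ).mono fun z hz => by
        simp only [hz, LinearMap.comp_apply, LinearMap.mulLeft_apply, Pi.mul_apply, mul_left_comm])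
    _ = ∫ z, c z * (h z * Λ φ z) ∂μ := lift _ ((tsupport_mul_subset_right).trans (hΛD φ))
    _ = _ := by simp only [mul_assoc, mul_left_comm]
  have hle := h_le φ
  rw [LinearMap.neg_apply, hf, pairing] at hle
  simp only [add_mul]
  rw [integral_add (integrable_Λ ha φ)
    (integrable_Λ (locallyIntegrableOn_mul_of_mem_Icc h_meas h_mem hc) φ)]
  linarith

end Obstacle

section AlphaObstacle

variable {n : ℕ}

/-- The space of test functions on `D`. -/
def testFunctions (D : Set (Cn n)) : Submodule ℝ (Cn n → ℝ) where
  carrier := {φ | IsTestFunction D φ}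
  zero_mem' := ⟨contDiff_const, HasCompactSupport.zero, by
    rw [tsupport_eq_empty_iff.2 rfl]
    exact Set.empty_subset D⟩
  add_mem' := fun {φ χ} h h' => ⟨h.contDiff.add h'.contDiff,
    h.hasCompactSupport.add h'.hasCompactSupport,
    (tsupport_add φ χ).trans (Set.union_subset h.tsupport_subset h'.tsupport_subset)⟩
  smul_mem' := fun c φ h => ⟨h.contDiff.const_smul c,
    h.hasCompactSupport.comp_left (g := fun t => c * t) (mul_zero c),
    (tsupport_comp_subset (g := fun t : ℝ => c * t) (mul_zero c) φ).trans h.tsupport_subset⟩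

/-- The operator `φ ↦ α ∧ dd^c φ` as a linear map on test functions. -/
noncomputable def alphaOpLin (A : AlphaForm n) (D : Set (Cn n)) :
    testFunctions D →ₗ[ℝ] Cn n → ℝ where
  toFun φ := alphaOpR A φ.1
  map_add' φ χ := funext fun z => alphaOpR_add A φ.2.contDiff_two χ.2.contDiff_two z
  map_smul' c φ := funext fun z => alphaOpR_const_smul A φ.2.contDiff_two c z

lemma integral_negPart_smul {r : ℝ} (hr : 0 ≤ r) (φ : Cn n → ℝ) :
    ∫ z, max (-(r • φ) z) 0 = r * ∫ z, max (-φ z) 0 := by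
  simp only [Pi.smul_apply, smul_eq_mul, ← integral_const_mul, mul_max_of_nonneg _ _ hr, mul_zero,
    mul_neg]

lemma IsTestFunction.integral_negPart_add_le {D : Set (Cn n)} {φ χ : Cn n → ℝ}
    (hφ : IsTestFunction D φ) (hχ : IsTestFunction D χ) :
    ∫ z, max (-(φ + χ) z) 0 ≤ (∫ z, max (-φ z) 0) + ∫ z, max (-χ z) 0 := by
  rw [← integral_add hφ.integrable_negPart hχ.integrable_negPart]
  refine integral_mono ((testFunctions D).add_mem hφ hχ).integrable_negPart
    (hφ.integrable_negPart.add hχ.integrable_negPart) fun z => ?_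
  rw [Pi.add_apply, neg_add]
  exact posPart_add_le _ _

theorem exists_obstacle_solution (A : AlphaForm n) {D : Set (Cn n)} (hD : IsOpen D)
    (hDb : Bornology.IsBounded D) (hDc : Dᶜ.Nonempty) {a b : Cn n → ℝ}
    (ha : LocallyIntegrableOn a D volume) (hsub : IsDistSubharmonic A D a)
    (hb : ContDiff ℝ 2 b) (hab : ∀ z ∈ D, a z ≤ b z) {F : ℝ} (hF0 : 0 ≤ F)
    (hF : ∀ z ∈ D, |alphaOpR A b z| ≤ F) :
    ∃ v : Cn n → ℝ, LocallyIntegrableOn v D volume ∧ (∀ z ∈ D, a z ≤ v z ∧ v z ≤ b z) ∧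
      ∀ φ, IsTestFunction D φ → (∀ z, 0 ≤ φ z) →
        0 ≤ ∫ z, v z * alphaOpR A φ z ∧ ∫ z, v z * alphaOpR A φ z ≤ F * ∫ z, φ z := by
  have hc : LocallyIntegrableOn (fun z => b z - a z) D volume :=
    (hb.continuous.locallyIntegrable.locallyIntegrableOn D).sub ha
  obtain ⟨h, h_meas, h_mem, h_le⟩ := exists_density_of_le_integral_mul_posPart hD hDb hDc ha hc
    (fun z hz => sub_nonneg.2 (hab z hz)) (alphaOpLin A D) (fun φ => φ.2.continuous_op A)
    (fun φ => φ.2.hasCompactSupport_op A) (fun φ => φ.2.tsupport_op_subset A)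
    (s := fun φ => F * ∫ z, max (-φ.1 z) 0)
    (fun r hr φ => (congrArg (F * ·) (integral_negPart_smul hr.le φ.1)).trans (mul_left_comm ..))
    (fun φ χ => (mul_le_mul_of_nonneg_left (φ.2.integral_negPart_add_le χ.2) hF0).trans_eq
      (mul_add ..))
    (fun φ => neg_integral_mul_alphaOpR_le A ha hsub hb hab hF φ.2)
  refine ⟨fun z => a z + h z * (b z - a z),
    ha.add (locallyIntegrableOn_mul_of_mem_Icc h_meas h_mem hc), fun z hz => ⟨?_, ?_⟩,
    fun φ hφ hφ0 => ⟨?_, ?_⟩⟩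
  · linarith [mul_nonneg (h_mem z).1 (sub_nonneg.2 (hab z hz))]
  · linarith [mul_le_mul_of_nonneg_right (h_mem z).2 (sub_nonneg.2 (hab z hz))]
  · have lower := h_le ⟨φ, hφ⟩
    simp only [max_eq_right (neg_nonpos.2 (hφ0 _)), integral_zero, mul_zero] at lower
    exact neg_nonpos.1 lower
  · have upper := h_le (-⟨φ, hφ⟩)
    simp only [map_neg, Pi.neg_apply, mul_neg, integral_neg, neg_neg, Submodule.coe_neg,
      max_eq_left (hφ0 _)] at upper
    exact upper

end AlphaObstacle

/-! ### The dual quadratic form -/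

section ContDiffMatrix

variable {E ι : Type*} [NormedAddCommGroup E] [NormedSpace ℝ E] [Fintype ι] [DecidableEq ι]
  {m : WithTop ℕ∞} {f : E → Matrix ι ι ℂ}

lemma contDiff_matrix_det (h : ∀ i j, ContDiff ℝ m fun z => f z i j) :
    ContDiff ℝ m fun z => (f z).det := by
  simp only [Matrix.det_apply']
  exact ContDiff.sum fun σ _ => contDiff_const.mul (contDiff_prod fun i _ => h _ _)

lemma contDiff_matrix_inv_apply (h : ∀ i j, ContDiff ℝ m fun z => f z i j)
    (hf : ∀ z, IsUnit (f z).det) (i j : ι) : ContDiff ℝ m fun z => (f z)⁻¹ i j := by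
  have adjugate : ContDiff ℝ m fun z => (f z).adjugate i j := by
    simp only [Matrix.adjugate_apply]
    refine contDiff_matrix_det fun k l => ?_
    simp only [Matrix.updateRow_apply]
    split
    · exact contDiff_const
    · exact h k l
  have inv_eq : (fun z => (f z)⁻¹ i j) = fun z => (f z).det⁻¹ * (f z).adjugate i j := by
    ext z
    rw [Matrix.inv_def, Matrix.smul_apply, Ring.inverse_eq_inv', smul_eq_mul]
  rw [inv_eq]
  exact ((contDiff_matrix_det h).inv fun z => (hf z).ne_zero).mul adjugate

end ContDiffMatrix

namespace AlphaForm

open Matrix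

open scoped ComplexOrder

variable {n : ℕ} (A : AlphaForm n)

/-- The Hermitian matrix of coefficients of `α` at `z`. -/
noncomputable def coeffMatrix (z : Cn n) : Matrix (Fin n) (Fin n) ℂ :=
  Matrix.of fun j k => A.coeff j k z

lemma star_dotProduct_coeffMatrix_mulVec (z : Cn n) (x y : Fin n → ℂ) :
    star y ⬝ᵥ A.coeffMatrix z *ᵥ x =
      ∑ j, ∑ k, A.coeff j k z * starRingEnd ℂ (y j) * x k := by
  simp only [dotProduct, mulVec, Finset.mul_sum, coeffMatrix, of_apply,
    Pi.star_apply, starRingEnd_apply]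
  exact Finset.sum_congr rfl fun j _ => Finset.sum_congr rfl fun k _ => by ring

lemma posDef_coeffMatrix (z : Cn n) : (A.coeffMatrix z).PosDef := by
  have herm : (A.coeffMatrix z).IsHermitian :=
    IsHermitian.ext fun j k => (A.hermitian k j z).symm
  refine .of_dotProduct_mulVec_pos herm fun x hx => Complex.pos_iff.2
    ⟨?_, (herm.im_star_dotProduct_mulVec_self x).symm⟩
  rw [star_dotProduct_coeffMatrix_mulVec]
  simpa using A.strictlyPositive z (star x) (star_ne_zero.2 hx)

/-- The real quadratic form dual to `α` at `z`, in polarized form: the value at `(x, y)` is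
`Re ⟨Q⁻¹ x, y⟩` with `Q` the coefficient matrix. Its rescaled sublevel sets serve as balls adapted
to the operator with coefficients frozen at `z`. -/
noncomputable def dualForm (z : Cn n) : RealBilin n :=
  LinearMap.toContinuousBilinearMap <| LinearMap.mk₂ ℝ
    (fun x y : Cn n => (star y ⬝ᵥ (A.coeffMatrix z)⁻¹ *ᵥ x).re)
    (fun _ _ _ => by simp only [mulVec_add, dotProduct_add, add_re])
    (fun _ _ _ => by simp only [mulVec_smul, dotProduct_smul, smul_re])
    (fun _ _ _ => by simp only [star_add, add_dotProduct, add_re])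
    (fun _ _ _ => by simp only [star_smul, smul_dotProduct, star_trivial, smul_re])

lemma dualForm_apply (z x y : Cn n) :
    A.dualForm z x y = (star y ⬝ᵥ (A.coeffMatrix z)⁻¹ *ᵥ x).re := rfl

lemma dualForm_comm (z x y : Cn n) : A.dualForm z x y = A.dualForm z y x := by
  rw [dualForm_apply, dualForm_apply, star_dotProduct, star_mulVec,
    (A.posDef_coeffMatrix z).inv.isHermitian.eq, ← dotProduct_mulVec]
  exact conj_re _

lemma dualForm_self_pos (z : Cn n) {x : Cn n} (hx : x ≠ 0) : 0 < A.dualForm z x x :=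
  (Complex.pos_iff.1 ((A.posDef_coeffMatrix z).inv.dotProduct_mulVec_pos hx)).1

lemma dualForm_dirX (z x : Cn n) (j : Fin n) :
    A.dualForm z x (dirX j) = (((A.coeffMatrix z)⁻¹ *ᵥ x) j).re := by
  simp [dualForm_apply, dirX]

lemma dualForm_dirY (z x : Cn n) (j : Fin n) :
    A.dualForm z x (dirY j) = (((A.coeffMatrix z)⁻¹ *ᵥ x) j).im := by
  simp [dualForm_apply, dirY]

lemma leviEntry_two_smul_dualForm (z : Cn n) (j k : Fin n) :
    leviEntry j k ((2 : ℝ) • A.dualForm z) = (A.coeffMatrix z)⁻¹ k j := by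
  have herm := (A.posDef_coeffMatrix z).inv.isHermitian.apply k j
  rw [← herm, map_smul, leviEntry_apply, dualForm_dirX, dualForm_dirX, dualForm_dirY,
    dualForm_dirY]
  simp only [dirX, dirY, mulVec_single]
  apply Complex.ext <;> simp <;> ring

lemma leviTrace_two_smul_dualForm (z : Cn n) : A.leviTrace z ((2 : ℝ) • A.dualForm z) = n := by
  have trace : ∑ j, ∑ k, A.coeff j k z * (A.coeffMatrix z)⁻¹ k j =
      (A.coeffMatrix z * (A.coeffMatrix z)⁻¹).trace := rfl
  simp only [leviTrace_apply, leviEntry_two_smul_dualForm]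
  rw [trace, mul_nonsing_inv _ ((isUnit_iff_isUnit_det _).1 (A.posDef_coeffMatrix z).isUnit)]
  simp

lemma wirtingerVec_two_smul_dualForm (z x : Cn n) :
    wirtingerVec ((2 : ℝ) • A.dualForm z x) = star ((A.coeffMatrix z)⁻¹ *ᵥ x) := by
  ext j
  simp only [wirtingerVec, _root_.smul_apply, dualForm_dirX, dualForm_dirY, Pi.star_apply]
  apply Complex.ext <;> simp [neg_div]

lemma leviTrace_rankOneForm_two_smul_dualForm (z x : Cn n) :
    A.leviTrace z (rankOneForm ((2 : ℝ) • A.dualForm z x)) = A.dualForm z x x := by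
  set y := (A.coeffMatrix z)⁻¹ *ᵥ x with hy
  have hx : A.coeffMatrix z *ᵥ y = x := by
    rw [hy, mulVec_mulVec, mul_nonsing_inv _ ((isUnit_iff_isUnit_det _).1
      (A.posDef_coeffMatrix z).isUnit), one_mulVec]
  calc A.leviTrace z (rankOneForm ((2 : ℝ) • A.dualForm z x))
      = (star y ⬝ᵥ A.coeffMatrix z *ᵥ y).re := by
        rw [leviTrace_rankOneForm, wirtingerVec_two_smul_dualForm,
          star_dotProduct_coeffMatrix_mulVec]
        simp [hy]
    _ = (star (star x ⬝ᵥ y)).re := by rw [hx, star_dotProduct]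
    _ = A.dualForm z x x := by rw [dualForm_apply, ← hy]; exact conj_re _

lemma contDiff_dualForm : ContDiff ℝ 1 A.dualForm := by
  refine contDiff_clm_apply_iff.2 fun x => contDiff_clm_apply_iff.2 fun y => ?_
  have entries (j k : Fin n) : ContDiff ℝ 1 fun z => (A.coeffMatrix z)⁻¹ j k :=
    contDiff_matrix_inv_apply A.contDiff
      (fun z => (isUnit_iff_isUnit_det _).1 (A.posDef_coeffMatrix z).isUnit) j k
  simp only [dualForm_apply, dotProduct, mulVec]
  exact reCLM.contDiff.comp <| ContDiff.sum fun j _ => contDiff_const.mul <|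
    ContDiff.sum fun k _ => (entries j k).mul contDiff_const

lemma dualForm_self_nonneg (z x : Cn n) : 0 ≤ A.dualForm z x x := by
  rcases eq_or_ne x 0 with rfl | hx
  · rw [map_zero]
  · exact (A.dualForm_self_pos z hx).le

lemma exists_sq_norm_le_mul_dualForm {S : Set (Cn n)} (hS : IsCompact S) :
    ∃ C : ℝ, ∀ z ∈ S, ∀ x, ‖x‖ ^ 2 ≤ C * A.dualForm z x x := by
  have cont : Continuous fun p : Cn n × Cn n => A.dualForm p.1 p.2 p.2 :=
    ((A.contDiff_dualForm.continuous.comp continuous_fst).clm_apply continuous_snd).clm_apply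
      continuous_snd
  obtain ⟨C, hC⟩ := (hS.prod (isCompact_sphere (0 : Cn n) 1)).exists_bound_of_continuousOn
    (f := fun p => (A.dualForm p.1 p.2 p.2)⁻¹) <| cont.continuousOn.inv₀ fun p hp =>
      (A.dualForm_self_pos p.1 (ne_of_mem_sphere hp.2 one_ne_zero)).ne'
  refine ⟨C, fun z hz x => ?_⟩
  rcases eq_or_ne x 0 with rfl | hx
  · simp
  have unit : ‖x‖⁻¹ • x ∈ sphere (0 : Cn n) 1 := by simp [norm_smul, hx]
  have inv_le := (le_abs_self _).trans (hC (z, ‖x‖⁻¹ • x) ⟨hz, unit⟩)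
  have scaling : A.dualForm z (‖x‖⁻¹ • x) (‖x‖⁻¹ • x) = A.dualForm z x x / ‖x‖ ^ 2 := by
    simp only [map_smul, _root_.smul_apply, smul_eq_mul]
    field_simp
  rwa [scaling, inv_div, div_le_iff₀ (A.dualForm_self_pos z hx)] at inv_le

lemma exists_abs_leviTrace_sub_le {S : Set (Cn n)} (hS : IsCompact S) (hSc : Convex ℝ S) :
    ∃ C : ℝ, ∀ z ∈ S, ∀ w ∈ S, ∀ M, |A.leviTrace z M - A.leviTrace w M| ≤ C * ‖z - w‖ * ‖M‖ := by
  choose K hK using fun j k =>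
    (A.contDiff j k).contDiffOn.exists_lipschitzOnWith (s := S) one_ne_zero hSc hS
  refine ⟨∑ j, ∑ k, (K j k : ℝ), fun z hz w hw M => ?_⟩
  rw [leviTrace_apply, leviTrace_apply, ← sub_re, ← Finset.sum_sub_distrib, Finset.sum_mul,
    Finset.sum_mul]
  refine (abs_re_le_norm _).trans ((norm_sum_le _ _).trans (Finset.sum_le_sum fun j _ => ?_))
  rw [← Finset.sum_sub_distrib, Finset.sum_mul, Finset.sum_mul]
  refine (norm_sum_le _ _).trans (Finset.sum_le_sum fun k _ => ?_)
  rw [← sub_mul, norm_mul]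
  exact mul_le_mul ((hK j k).norm_sub_le hz hw) (norm_leviEntry_le j k M) (norm_nonneg _)
    (by positivity)

end AlphaForm

section Quadratic

variable {E : Type*} [NormedAddCommGroup E] [NormedSpace ℝ E] {B : E →L[ℝ] E →L[ℝ] ℝ}

lemma contDiff_quadratic (z : E) (s : ℝ) {m : WithTop ℕ∞} :
    ContDiff ℝ m fun ξ => s * B (ξ - z) (ξ - z) := by
  fun_prop

lemma fderiv_quadratic (hB : ∀ x y, B x y = B y x) (z : E) (s : ℝ) :
    fderiv ℝ (fun ξ => s * B (ξ - z) (ξ - z)) = fun ξ => (2 * s) • B (ξ - z) := by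
  ext ξ y
  have shift : HasFDerivAt (fun ξ : E => ξ - z) (ContinuousLinearMap.id ℝ E) ξ :=
    (hasFDerivAt_id ξ).sub_const z
  have deriv := ((B.hasFDerivAt.comp ξ shift).clm_apply shift).const_mul s
  have apply := congrArg (fun l : E →L[ℝ] ℝ => l y) deriv.fderiv
  refine apply.trans ?_
  simp [hB y]
  ring

lemma fderiv_fderiv_quadratic (hB : ∀ x y, B x y = B y x) (z ξ : E) (s : ℝ) :
    fderiv ℝ (fderiv ℝ fun ξ => s * B (ξ - z) (ξ - z)) ξ = (2 * s) • B := by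
  rw [fderiv_quadratic hB]
  exact (((2 * s) • B).hasFDerivAt.comp ξ ((hasFDerivAt_id ξ).sub_const z)).fderiv

lemma abs_quadratic_sub_le (B B' : E →L[ℝ] E →L[ℝ] ℝ) (x y : E) :
    |B' y y - B x x| ≤ ‖B' - B‖ * ‖y‖ ^ 2 + ‖B‖ * ‖x - y‖ * (‖x‖ + ‖y‖) := by
  have split : B' y y - B x x = (B' - B) y y - B (x - y) y - B x (x - y) := by simp
  have form := (B' - B).le_opNorm₂ y y
  have left := B.le_opNorm₂ (x - y) y
  have right := B.le_opNorm₂ x (x - y)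
  rw [Real.norm_eq_abs] at form left right
  rw [split]
  linarith [abs_sub ((B' - B) y y - B (x - y) y) (B x (x - y)),
    abs_sub ((B' - B) y y) (B (x - y) y)]

end Quadratic

section DualFormBounds

variable {n : ℕ} {A : AlphaForm n} {R C : ℝ}

lemma norm_rankOneForm_le (l : Cn n →L[ℝ] ℝ) : ‖rankOneForm l‖ ≤ ‖l‖ ^ 2 := by
  refine ContinuousLinearMap.opNorm_le_bound₂ _ (by positivity) fun x y => ?_
  rw [rankOneForm_apply, norm_mul]
  calc ‖l x‖ * ‖l y‖ ≤ (‖l‖ * ‖x‖) * (‖l‖ * ‖y‖) := by gcongr <;> exact l.le_opNorm _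
    _ = ‖l‖ ^ 2 * ‖x‖ * ‖y‖ := by ring

lemma rankOneForm_smul (s : ℝ) (l : Cn n →L[ℝ] ℝ) :
    rankOneForm (s • l) = s ^ 2 • rankOneForm l := by
  ext x y
  simp only [rankOneForm_apply, smul_apply, smul_eq_mul]
  ring

namespace AlphaForm

/-- `C` bounds, on the ball of radius `R`, the dual forms of `α`, their variation with the base
point, and the error of replacing the coefficients of `α` by those at a nearby point `z` when the
operator is applied to functions of the dual form at `z`. -/
structure DualFormBounds (A : AlphaForm n) (R C : ℝ) : Prop where
  one_le : 1 ≤ C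
  sq_norm_le : ∀ z ∈ closedBall (0 : Cn n) R, ∀ x, ‖x‖ ^ 2 ≤ C * A.dualForm z x x
  le_sq_norm : ∀ z ∈ closedBall (0 : Cn n) R, ∀ x, A.dualForm z x x ≤ C * ‖x‖ ^ 2
  abs_sub_le : ∀ z ∈ closedBall (0 : Cn n) R, ∀ w ∈ closedBall (0 : Cn n) R, ∀ x y,
    |A.dualForm w y y - A.dualForm z x x| ≤
      C * ‖z - w‖ * ‖y‖ ^ 2 + C * ‖x - y‖ * (‖x‖ + ‖y‖)
  hessian : ∀ z ∈ closedBall (0 : Cn n) R, ∀ ξ ∈ closedBall (0 : Cn n) R,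
    |A.leviTrace ξ ((2 : ℝ) • A.dualForm z) - n| ≤ C * ‖ξ - z‖
  gradient : ∀ z ∈ closedBall (0 : Cn n) R, ∀ ξ ∈ closedBall (0 : Cn n) R, ∀ x,
    |A.leviTrace ξ (rankOneForm ((2 : ℝ) • A.dualForm z x)) - A.dualForm z x x| ≤
      C * ‖ξ - z‖ * A.dualForm z x x

variable (A) in
lemma exists_dualForm_constants (R : ℝ) : ∃ C : ℝ, 1 ≤ C ∧
    (∀ z ∈ closedBall (0 : Cn n) R, ∀ x, ‖x‖ ^ 2 ≤ C * A.dualForm z x x) ∧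
    (∀ z ∈ closedBall (0 : Cn n) R, ‖A.dualForm z‖ ≤ C) ∧
    (∀ z ∈ closedBall (0 : Cn n) R, ∀ w ∈ closedBall (0 : Cn n) R,
      ‖A.dualForm z - A.dualForm w‖ ≤ C * ‖z - w‖) ∧
    (∀ z ∈ closedBall (0 : Cn n) R, ∀ w ∈ closedBall (0 : Cn n) R, ∀ M,
      |A.leviTrace z M - A.leviTrace w M| ≤ C * ‖z - w‖ * ‖M‖) := by
  have compact := isCompact_closedBall (0 : Cn n) R
  have convex := convex_closedBall (0 : Cn n) R
  obtain ⟨C₁, lower⟩ := A.exists_sq_norm_le_mul_dualForm compact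
  obtain ⟨C₂, upper⟩ :=
    compact.exists_bound_of_continuousOn (E := RealBilin n) (f := A.dualForm)
      A.contDiff_dualForm.continuous.continuousOn
  obtain ⟨C₃, lip⟩ := A.contDiff_dualForm.contDiffOn.exists_lipschitzOnWith one_ne_zero convex
    compact
  obtain ⟨C₄, trace⟩ := A.exists_abs_leviTrace_sub_le compact convex
  refine ⟨max 1 (max (max C₁ C₂) (max C₃ C₄)), le_max_left _ _, fun z hz x => ?_, fun z hz => ?_,
    fun z hz w hw => ?_, fun z hz w hw M => ?_⟩
  · refine (lower z hz x).trans (mul_le_mul_of_nonneg_right ?_ (A.dualForm_self_nonneg z x))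
    simp
  · exact (upper z hz).trans (by simp)
  · refine (lip.norm_sub_le hz hw).trans ?_
    gcongr
    simp
  · refine (trace z hz w hw M).trans ?_
    gcongr
    simp

variable (A) in
theorem exists_dualFormBounds (R : ℝ) : ∃ C, A.DualFormBounds R C := by
  obtain ⟨C, one_le, lower, upper, lip, trace⟩ := A.exists_dualForm_constants R
  have le_pow : C ≤ 4 * C ^ 4 := by
    nlinarith [mul_le_mul_of_nonneg_left (one_le_pow₀ one_le : 1 ≤ C ^ 3) (by linarith : 0 ≤ C)]
  refine ⟨4 * C ^ 4, one_le.trans le_pow, fun z hz x => ?_, fun z hz x => ?_,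
    fun z hz w hw x y => ?_, fun z hz ξ hξ => ?_, fun z hz ξ hξ x => ?_⟩
  · exact (lower z hz x).trans (mul_le_mul_of_nonneg_right le_pow (A.dualForm_self_nonneg z x))
  · calc A.dualForm z x x ≤ ‖A.dualForm z‖ * ‖x‖ * ‖x‖ :=
          (le_abs_self _).trans ((A.dualForm z).le_opNorm₂ x x)
      _ ≤ C * ‖x‖ * ‖x‖ := by gcongr; exact upper z hz
      _ ≤ 4 * C ^ 4 * ‖x‖ ^ 2 := by rw [mul_assoc, ← sq]; gcongr
  · calc |A.dualForm w y y - A.dualForm z x x|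
        ≤ ‖A.dualForm w - A.dualForm z‖ * ‖y‖ ^ 2
          + ‖A.dualForm z‖ * ‖x - y‖ * (‖x‖ + ‖y‖) := abs_quadratic_sub_le _ _ x y
      _ ≤ C * ‖z - w‖ * ‖y‖ ^ 2 + C * ‖x - y‖ * (‖x‖ + ‖y‖) := by
          gcongr
          · exact norm_sub_rev w z ▸ lip w hw z hz
          · exact upper z hz
      _ ≤ _ := by gcongr
  · calc |A.leviTrace ξ ((2 : ℝ) • A.dualForm z) - n|
        ≤ C * ‖ξ - z‖ * ‖(2 : ℝ) • A.dualForm z‖ :=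
          A.leviTrace_two_smul_dualForm z ▸ trace ξ hξ z hz _
      _ ≤ C * ‖ξ - z‖ * (2 * C) := by
          have := ContinuousLinearMap.opNorm_smul_le (2 : ℝ) (A.dualForm z)
          rw [Real.norm_two] at this
          gcongr
          exact this.trans (by gcongr; exact upper z hz)
      _ = 2 * C ^ 2 * ‖ξ - z‖ := by ring
      _ ≤ 4 * C ^ 4 * ‖ξ - z‖ := by gcongr <;> norm_num
  · have grad_le : ‖(2 : ℝ) • A.dualForm z x‖ ≤ 2 * (C * ‖x‖) := by
      rw [norm_smul, Real.norm_two]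
      have := (A.dualForm z).le_opNorm x
      gcongr
      exact this.trans (by gcongr; exact upper z hz)
    calc |A.leviTrace ξ (rankOneForm ((2 : ℝ) • A.dualForm z x)) - A.dualForm z x x|
        ≤ C * ‖ξ - z‖ * ‖rankOneForm ((2 : ℝ) • A.dualForm z x)‖ := by
          simpa only [leviTrace_rankOneForm_two_smul_dualForm] using
            trace ξ hξ z hz (rankOneForm ((2 : ℝ) • A.dualForm z x))
      _ ≤ C * ‖ξ - z‖ * (2 * (C * ‖x‖)) ^ 2 := by
          gcongr; exact (norm_rankOneForm_le _).trans (by gcongr)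
      _ = 4 * C ^ 3 * ‖ξ - z‖ * ‖x‖ ^ 2 := by ring
      _ ≤ 4 * C ^ 3 * ‖ξ - z‖ * (C * A.dualForm z x x) := by gcongr; exact lower z hz x
      _ = 4 * C ^ 4 * ‖ξ - z‖ * A.dualForm z x x := by ring

variable (A) in
lemma alphaOpR_comp_dualForm (z ξ : Cn n) (s : ℝ) {Θ : ℝ → ℝ} (hΘ : ContDiff ℝ 2 Θ) :
    alphaOpR A (fun ξ => Θ (s * A.dualForm z (ξ - z) (ξ - z))) ξ =
      deriv Θ (s * A.dualForm z (ξ - z) (ξ - z)) * (s * A.leviTrace ξ ((2 : ℝ) • A.dualForm z)) +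
      deriv (deriv Θ) (s * A.dualForm z (ξ - z) (ξ - z)) *
        (s ^ 2 * A.leviTrace ξ (rankOneForm ((2 : ℝ) • A.dualForm z (ξ - z)))) := by
  have quad : ContDiff ℝ 2 fun ξ => s * A.dualForm z (ξ - z) (ξ - z) := contDiff_quadratic z s
  rw [alphaOpR_comp A quad hΘ, alphaOpR_eq_leviTrace A quad,
    fderiv_fderiv_quadratic (A.dualForm_comm z), fderiv_quadratic (A.dualForm_comm z),
    mul_comm 2 s]
  simp only [mul_smul, rankOneForm_smul, map_smul, smul_eq_mul]

end AlphaForm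

end DualFormBounds

section Cutoff

/-- A smooth nonincreasing profile equal to `1` on `(-∞, 1/2]` and to `0` on `[1, ∞)`. -/
noncomputable def cutoff (t : ℝ) : ℝ := Real.smoothTransition (2 - 2 * t)

lemma contDiff_cutoff {m : ℕ∞} : ContDiff ℝ m cutoff :=
  Real.smoothTransition.contDiff.comp (contDiff_const.sub (contDiff_const.mul contDiff_id))

lemma continuous_cutoff : Continuous cutoff := (contDiff_cutoff (m := 0)).continuous

lemma differentiable_cutoff : Differentiable ℝ cutoff :=
  (contDiff_cutoff (m := 1)).differentiable one_ne_zero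

lemma continuous_deriv_cutoff : Continuous (deriv cutoff) :=
  (contDiff_cutoff (m := 1)).continuous_deriv le_rfl

lemma cutoff_nonneg (t : ℝ) : 0 ≤ cutoff t := Real.smoothTransition.nonneg _

lemma cutoff_le_one (t : ℝ) : cutoff t ≤ 1 := Real.smoothTransition.le_one _

lemma cutoff_of_le_half {t : ℝ} (h : t ≤ 1 / 2) : cutoff t = 1 :=
  Real.smoothTransition.one_of_one_le (by linarith)

lemma cutoff_of_one_le {t : ℝ} (h : 1 ≤ t) : cutoff t = 0 :=
  Real.smoothTransition.zero_of_nonpos (by linarith)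

lemma antitone_cutoff : Antitone cutoff := fun _ _ h =>
  Real.smoothTransition.monotone (by linarith)

lemma deriv_cutoff_of_one_le {t : ℝ} (h : 1 ≤ t) : deriv cutoff t = 0 :=
  IsLocalMin.deriv_eq_zero <| .of_forall fun s => cutoff_of_one_le h ▸ cutoff_nonneg s

lemma deriv_cutoff_of_le_half {t : ℝ} (h : t ≤ 1 / 2) : deriv cutoff t = 0 :=
  IsLocalMax.deriv_eq_zero <| .of_forall fun s => cutoff_of_le_half h ▸ cutoff_le_one s

lemma exists_abs_deriv_cutoff_le : ∃ M : ℝ, 1 ≤ M ∧ ∀ t, |deriv cutoff t| ≤ M := by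
  obtain ⟨M, hM⟩ := (isCompact_Icc (a := (0 : ℝ)) (b := 1)).exists_bound_of_continuousOn
    continuous_deriv_cutoff.continuousOn
  refine ⟨max 1 M, le_max_left _ _, fun t => ?_⟩
  rcases le_or_gt t (1 / 2) with h0 | h0
  · simp [deriv_cutoff_of_le_half h0]
  rcases le_or_gt 1 t with h1 | h1
  · simp [deriv_cutoff_of_one_le h1]
  · exact (hM t ⟨by linarith, h1.le⟩).trans (le_max_right _ _)

lemma abs_cutoff_sub_le {M : ℝ} (hM : ∀ t, |deriv cutoff t| ≤ M) (s t : ℝ) :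
    |cutoff s - cutoff t| ≤ M * |s - t| :=
  convex_univ.norm_image_sub_le_of_norm_deriv_le (fun x _ => differentiable_cutoff x)
    (fun x _ => hM x) trivial trivial

/-- The primitive of `-cutoff` vanishing on `[1, ∞)`. -/
noncomputable def cutoffPrimitive (t : ℝ) : ℝ := ∫ s in t..1, cutoff s

lemma hasDerivAt_cutoffPrimitive (t : ℝ) : HasDerivAt cutoffPrimitive (-cutoff t) t :=
  intervalIntegral.integral_hasDerivAt_left (continuous_cutoff.intervalIntegrable _ _)
    continuous_cutoff.stronglyMeasurable.stronglyMeasurableAtFilter continuous_cutoff.continuousAt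

lemma deriv_cutoffPrimitive : deriv cutoffPrimitive = fun t => -cutoff t :=
  funext fun t => (hasDerivAt_cutoffPrimitive t).deriv

lemma contDiff_cutoffPrimitive : ContDiff ℝ (⊤ : ℕ∞) cutoffPrimitive :=
  contDiff_infty_iff_deriv.2 ⟨fun t => (hasDerivAt_cutoffPrimitive t).differentiableAt,
    deriv_cutoffPrimitive ▸ contDiff_cutoff.neg⟩

lemma antitone_cutoffPrimitive : Antitone cutoffPrimitive :=
  antitone_of_hasDerivAt_nonpos hasDerivAt_cutoffPrimitive fun t =>
    neg_nonpos.2 (cutoff_nonneg t)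

lemma cutoffPrimitive_of_one_le {t : ℝ} (h : 1 ≤ t) : cutoffPrimitive t = 0 :=
  intervalIntegral.integral_zero_ae <| .of_forall fun s hs =>
    cutoff_of_one_le (Set.uIoc_of_ge h ▸ hs : s ∈ Set.Ioc 1 t).1.le

lemma cutoffPrimitive_nonneg (t : ℝ) : 0 ≤ cutoffPrimitive t :=
  (cutoffPrimitive_of_one_le (le_max_right t 1)).symm.trans_le
    (antitone_cutoffPrimitive (le_max_left t 1))

lemma cutoffPrimitive_le_one {t : ℝ} (h : 0 ≤ t) : cutoffPrimitive t ≤ 1 := by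
  have mono : ∫ s in (0 : ℝ)..1, cutoff s ≤ ∫ _ in (0 : ℝ)..1, (1 : ℝ) :=
    intervalIntegral.integral_mono zero_le_one (continuous_cutoff.intervalIntegrable _ _)
      (by simp) cutoff_le_one
  exact (antitone_cutoffPrimitive h).trans (mono.trans_eq (by simp))

end Cutoff

/-! ### Averaging kernels -/

lemma hasCompactSupport_of_tsupport_subset_closedBall {X : Type*} [PseudoMetricSpace X]
    [ProperSpace X] {g : X → ℝ} {z : X} {ρ : ℝ} (h : tsupport g ⊆ closedBall z ρ) :
    HasCompactSupport g :=
  (isCompact_closedBall z ρ).of_isClosed_subset (isClosed_tsupport g) h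

namespace AlphaForm

variable {n : ℕ}

section Kernels

variable (A : AlphaForm n) (z : Cn n) (r : ℝ) (ξ : Cn n)

/-- The square of the distance from `z` to `ξ` in the dual form at `z`, in units of `r`. -/
noncomputable def scaledSq : ℝ := (r ^ 2)⁻¹ * A.dualForm z (ξ - z) (ξ - z)

/-- The averaging kernel of radius `r` about `z`, adapted to the coefficients of `α` at `z`. -/
noncomputable def kernel : ℝ := cutoff (A.scaledSq z r ξ)

/-- The radial derivative of `kernel`, normalised so that `∂ᵣ kernel = (2 / r) * radialKernel`. -/
noncomputable def radialKernel : ℝ := -deriv cutoff (A.scaledSq z r ξ) * A.scaledSq z r ξ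

/-- The test function to which the operator of `α` is applied: up to freezing the coefficients of
`α` at `z`, its image under `r ^ 2 * L` is `radialKernel - n * kernel`. -/
noncomputable def kernelPotential : ℝ := cutoffPrimitive (A.scaledSq z r ξ)

lemma contDiff_scaledSq : ContDiff ℝ (⊤ : ℕ∞) (A.scaledSq z r) := contDiff_quadratic z _

lemma continuous_scaledSq : Continuous (A.scaledSq z r) := (A.contDiff_scaledSq z r).continuous

lemma continuous_kernel : Continuous (A.kernel z r) :=
  continuous_cutoff.comp (A.continuous_scaledSq z r)

lemma continuous_radialKernel : Continuous (A.radialKernel z r) :=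
  (continuous_deriv_cutoff.comp (A.continuous_scaledSq z r)).neg.mul (A.continuous_scaledSq z r)

lemma contDiff_kernelPotential : ContDiff ℝ (⊤ : ℕ∞) (A.kernelPotential z r) :=
  contDiff_cutoffPrimitive.comp (A.contDiff_scaledSq z r)

lemma scaledSq_nonneg : 0 ≤ A.scaledSq z r ξ :=
  mul_nonneg (by positivity) (A.dualForm_self_nonneg _ _)

lemma kernel_nonneg : 0 ≤ A.kernel z r ξ := cutoff_nonneg _

lemma radialKernel_nonneg : 0 ≤ A.radialKernel z r ξ :=
  mul_nonneg (neg_nonneg.2 antitone_cutoff.deriv_nonpos) (A.scaledSq_nonneg z r ξ)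

lemma kernelPotential_nonneg : 0 ≤ A.kernelPotential z r ξ := cutoffPrimitive_nonneg _

lemma kernelPotential_le_one : A.kernelPotential z r ξ ≤ 1 :=
  cutoffPrimitive_le_one (A.scaledSq_nonneg z r ξ)

lemma radialKernel_le {M : ℝ} (hM : ∀ t, |deriv cutoff t| ≤ M) : A.radialKernel z r ξ ≤ M := by
  have hM0 : 0 ≤ M := (abs_nonneg _).trans (hM 0)
  rcases le_total 1 (A.scaledSq z r ξ) with h | h
  · rwa [radialKernel, deriv_cutoff_of_one_le h, neg_zero, zero_mul]
  · exact (mul_le_mul ((neg_le_abs _).trans (hM _)) h (A.scaledSq_nonneg z r ξ) hM0).trans_eq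
      (mul_one M)

variable {r} in
lemma hasDerivAt_kernel (hr : 0 < r) :
    HasDerivAt (fun r => A.kernel z r ξ) (2 / r * A.radialKernel z r ξ) r := by
  have arg : HasDerivAt (fun r : ℝ => A.scaledSq z r ξ)
      (-(2 * r) / (r ^ 2) ^ 2 * A.dualForm z (ξ - z) (ξ - z)) r := by
    refine (((hasDerivAt_pow 2 r).fun_inv (by positivity)).mul_const _).congr_deriv ?_
    norm_num
  refine ((differentiable_cutoff (A.scaledSq z r ξ)).hasDerivAt.comp r arg).congr_deriv ?_
  rw [radialKernel, scaledSq]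
  field_simp

end Kernels

section Support

variable {A : AlphaForm n} {R C r : ℝ} {z : Cn n}

lemma one_le_scaledSq (h : A.DualFormBounds R C) (hz : z ∈ closedBall 0 R) (hr : 0 < r)
    {ξ : Cn n} (hξ : ξ ∉ closedBall z (C * r)) : 1 ≤ A.scaledSq z r ξ := by
  have hC := h.one_le
  rw [mem_closedBall, dist_eq_norm, not_le] at hξ
  have scaled : C * r ^ 2 ≤ C * A.dualForm z (ξ - z) (ξ - z) :=
    calc C * r ^ 2 ≤ C ^ 2 * r ^ 2 := by gcongr; exact le_self_pow₀ hC two_ne_zero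
      _ = (C * r) ^ 2 := (mul_pow _ _ _).symm
      _ ≤ ‖ξ - z‖ ^ 2 := by gcongr
      _ ≤ C * A.dualForm z (ξ - z) (ξ - z) := h.sq_norm_le z hz _
  rw [scaledSq, ← div_eq_inv_mul, le_div_iff₀ (by positivity), one_mul]
  exact le_of_mul_le_mul_left scaled (by linarith)

lemma tsupport_comp_scaledSq_subset (h : A.DualFormBounds R C) (hz : z ∈ closedBall 0 R)
    (hr : 0 < r) {Θ : ℝ → ℝ} (hΘ : ∀ t, 1 ≤ t → Θ t = 0) :
    tsupport (fun ξ => Θ (A.scaledSq z r ξ)) ⊆ closedBall z (C * r) := by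
  refine closure_minimal (fun ξ hξ => ?_) isClosed_closedBall
  by_contra hc
  exact hξ (hΘ _ (one_le_scaledSq h hz hr hc))

lemma tsupport_kernel_subset (h : A.DualFormBounds R C) (hz : z ∈ closedBall 0 R) (hr : 0 < r) :
    tsupport (A.kernel z r) ⊆ closedBall z (C * r) :=
  tsupport_comp_scaledSq_subset h hz hr fun _ => cutoff_of_one_le

lemma tsupport_radialKernel_subset (h : A.DualFormBounds R C) (hz : z ∈ closedBall 0 R)
    (hr : 0 < r) : tsupport (A.radialKernel z r) ⊆ closedBall z (C * r) :=
  tsupport_comp_scaledSq_subset (Θ := fun t => -deriv cutoff t * t) h hz hr fun t ht => by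
    rw [deriv_cutoff_of_one_le ht, neg_zero, zero_mul]

lemma tsupport_kernelPotential_subset (h : A.DualFormBounds R C) (hz : z ∈ closedBall 0 R)
    (hr : 0 < r) : tsupport (A.kernelPotential z r) ⊆ closedBall z (C * r) :=
  tsupport_comp_scaledSq_subset h hz hr fun _ => cutoffPrimitive_of_one_le

lemma isTestFunction_kernelPotential (h : A.DualFormBounds R C) (hz : z ∈ closedBall 0 R)
    (hr : 0 < r) {D : Set (Cn n)} (hsub : closedBall z (C * r) ⊆ D) :
    IsTestFunction D (A.kernelPotential z r) where
  contDiff := A.contDiff_kernelPotential z r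
  hasCompactSupport :=
    hasCompactSupport_of_tsupport_subset_closedBall (tsupport_kernelPotential_subset h hz hr)
  tsupport_subset := (tsupport_kernelPotential_subset h hz hr).trans hsub

lemma alphaOpR_kernelPotential (ξ : Cn n) :
    alphaOpR A (A.kernelPotential z r) ξ =
      -A.kernel z r ξ * ((r ^ 2)⁻¹ * A.leviTrace ξ ((2 : ℝ) • A.dualForm z)) +
      -deriv cutoff (A.scaledSq z r ξ) * (((r ^ 2)⁻¹) ^ 2 *
        A.leviTrace ξ (rankOneForm ((2 : ℝ) • A.dualForm z (ξ - z)))) := by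
  have deriv2 : deriv (deriv cutoffPrimitive) = fun t => -deriv cutoff t := by
    rw [deriv_cutoffPrimitive, deriv.fun_neg']
  have chain := A.alphaOpR_comp_dualForm z ξ (r ^ 2)⁻¹
    (contDiff_cutoffPrimitive.of_le (m := 2) ENat.LEInfty.out)
  rw [deriv2, deriv_cutoffPrimitive] at chain
  exact chain

lemma sq_mul_alphaOpR_kernelPotential_sub (hr : 0 < r) (ξ : Cn n) :
    r ^ 2 * alphaOpR A (A.kernelPotential z r) ξ - (A.radialKernel z r ξ - n * A.kernel z r ξ) =
      -(A.kernel z r ξ * (A.leviTrace ξ ((2 : ℝ) • A.dualForm z) - n)) +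
      -deriv cutoff (A.scaledSq z r ξ) * ((r ^ 2)⁻¹ *
        (A.leviTrace ξ (rankOneForm ((2 : ℝ) • A.dualForm z (ξ - z))) -
          A.dualForm z (ξ - z) (ξ - z))) := by
  rw [alphaOpR_kernelPotential, radialKernel, scaledSq]
  field_simp
  ring

lemma abs_alphaOpR_kernelPotential_sub_le (h : A.DualFormBounds R C) (hz : z ∈ closedBall 0 R)
    (hr : 0 < r) (hsub : closedBall z (C * r) ⊆ closedBall 0 R) (ξ : Cn n) :
    |r ^ 2 * alphaOpR A (A.kernelPotential z r) ξ - (A.radialKernel z r ξ - n * A.kernel z r ξ)| ≤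
      C ^ 2 * r * (A.kernel z r ξ + A.radialKernel z r ξ) := by
  by_cases hξ : ξ ∈ closedBall z (C * r)
  swap
  · have vanish {g : Cn n → ℝ} (hg : tsupport g ⊆ closedBall z (C * r)) : g ξ = 0 :=
      image_eq_zero_of_notMem_tsupport fun hmem => hξ (hg hmem)
    have supp_op := (tsupport_alphaOpR_subset A
      ((A.contDiff_kernelPotential z r).of_le ENat.LEInfty.out)).trans
      (tsupport_kernelPotential_subset h hz hr)
    simp [vanish (tsupport_kernel_subset h hz hr), vanish (tsupport_radialKernel_subset h hz hr),
      vanish supp_op]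
  set q := A.dualForm z (ξ - z) (ξ - z)
  set e₁ := A.leviTrace ξ ((2 : ℝ) • A.dualForm z) - n
  set e₂ := A.leviTrace ξ (rankOneForm ((2 : ℝ) • A.dualForm z (ξ - z))) - q
  set k := A.kernel z r ξ
  set d := -deriv cutoff (A.scaledSq z r ξ)
  have k_nonneg : 0 ≤ k := A.kernel_nonneg z r ξ
  have d_nonneg : 0 ≤ d := neg_nonneg.2 antitone_cutoff.deriv_nonpos
  have radial : A.radialKernel z r ξ = d * ((r ^ 2)⁻¹ * q) := rfl
  have small : C * ‖ξ - z‖ ≤ C ^ 2 * r := by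
    have := mul_le_mul_of_nonneg_left (mem_closedBall_iff_norm.1 hξ)
      (zero_le_one.trans h.one_le)
    linarith
  have err₁ : |e₁| ≤ C ^ 2 * r := (h.hessian z hz ξ (hsub hξ)).trans small
  have err₂ : |e₂| ≤ C ^ 2 * r * q := (h.gradient z hz ξ (hsub hξ) _).trans
    (mul_le_mul_of_nonneg_right small (A.dualForm_self_nonneg _ _))
  rw [sq_mul_alphaOpR_kernelPotential_sub hr, radial]
  calc |-(k * e₁) + d * ((r ^ 2)⁻¹ * e₂)| ≤ k * |e₁| + d * ((r ^ 2)⁻¹ * |e₂|) := by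
        refine (abs_add_le _ _).trans_eq ?_
        rw [abs_neg, abs_mul, abs_mul, abs_mul, abs_of_nonneg k_nonneg, abs_of_nonneg d_nonneg,
          abs_of_nonneg (by positivity : 0 ≤ (r ^ 2)⁻¹)]
    _ ≤ k * (C ^ 2 * r) + d * ((r ^ 2)⁻¹ * (C ^ 2 * r * q)) := by gcongr
    _ = C ^ 2 * r * (k + d * ((r ^ 2)⁻¹ * q)) := by ring

end Support

end AlphaForm

section Volume

variable {n : ℕ}

/-- The volume of the unit ball of the sup norm on `ℂⁿ`. -/
noncomputable def unitBallVolume (n : ℕ) : ℝ := volume.real (ball (0 : Cn n) 1)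

lemma unitBallVolume_pos (n : ℕ) : 0 < unitBallVolume n :=
  ENNReal.toReal_pos (isOpen_ball.measure_pos volume ⟨0, mem_ball_self one_pos⟩).ne'
    measure_ball_lt_top.ne

lemma finrank_Cn (n : ℕ) : Module.finrank ℝ (Cn n) = 2 * n := by
  rw [Module.finrank_pi_fintype]
  simp [Complex.finrank_real_complex, mul_comm]

lemma volume_real_closedBall (z : Cn n) {ρ : ℝ} (hρ : 0 ≤ ρ) :
    volume.real (closedBall z ρ) = ρ ^ (2 * n) * unitBallVolume n := by
  rw [Measure.addHaar_real_closedBall _ _ hρ, finrank_Cn, unitBallVolume]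

end Volume

namespace AlphaForm

variable {n : ℕ}

/-- `f` is a nonnegative function on `D` with `-F ≤ Lf ≤ 0` in the sense of distributions. -/
structure IsNonnegSuperharmonic (A : AlphaForm n) (D : Set (Cn n)) (F : ℝ) (f : Cn n → ℝ) :
    Prop where
  locallyIntegrableOn : LocallyIntegrableOn f D volume
  nonneg : ∀ z, 0 ≤ f z
  bound_nonneg : 0 ≤ F
  integral_nonpos : ∀ φ, IsTestFunction D φ → (∀ z, 0 ≤ φ z) → ∫ z, f z * alphaOpR A φ z ≤ 0
  neg_le_integral : ∀ φ, IsTestFunction D φ → (∀ z, 0 ≤ φ z) →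
    -(F * ∫ z, φ z) ≤ ∫ z, f z * alphaOpR A φ z

/-- The integral of `f` against the kernel of radius `r` about `z`. -/
noncomputable def kernelIntegral (A : AlphaForm n) (f : Cn n → ℝ) (z : Cn n) (r : ℝ) : ℝ :=
  ∫ ξ, f ξ * A.kernel z r ξ

/-- The integral of `f` against the radial derivative of the kernel of radius `r` about `z`. -/
noncomputable def radialIntegral (A : AlphaForm n) (f : Cn n → ℝ) (z : Cn n) (r : ℝ) : ℝ :=
  ∫ ξ, f ξ * A.radialKernel z r ξ

variable {A : AlphaForm n} {R C F r : ℝ} {D : Set (Cn n)} {f : Cn n → ℝ} {z : Cn n}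

lemma integral_kernelPotential_le (h : A.DualFormBounds R C) (hz : z ∈ closedBall 0 R)
    (hr : 0 < r) : ∫ ξ, A.kernelPotential z r ξ ≤ (C * r) ^ (2 * n) * unitBallVolume n := by
  have hC := h.one_le
  have hsupp := tsupport_kernelPotential_subset h hz hr
  rw [← volume_real_closedBall z (by positivity), ← integral_indicator_one measurableSet_closedBall]
  refine integral_mono ((A.contDiff_kernelPotential z r).continuous.integrable_of_hasCompactSupport
    (hasCompactSupport_of_tsupport_subset_closedBall hsupp)) ?_ fun ξ => ?_
  · exact (integrable_indicator_iff measurableSet_closedBall).2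
      (integrableOn_const measure_closedBall_lt_top.ne)
  · by_cases hξ : ξ ∈ closedBall z (C * r)
    · rw [Set.indicator_of_mem hξ]
      exact A.kernelPotential_le_one z r ξ
    · rw [Set.indicator_of_notMem hξ]
      exact (image_eq_zero_of_notMem_tsupport fun hmem => hξ (hsupp hmem)).le

lemma integrable_mul_kernel (hf : LocallyIntegrableOn f D volume) (h : A.DualFormBounds R C)
    (hz : z ∈ closedBall 0 R) (hr : 0 < r) (hsub : closedBall z (C * r) ⊆ D) :
    Integrable fun ξ => f ξ * A.kernel z r ξ :=
  have hsupp := tsupport_kernel_subset h hz hr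
  integrable_mul_of_tsupport_subset hf (A.continuous_kernel z r)
    (hasCompactSupport_of_tsupport_subset_closedBall hsupp) (hsupp.trans hsub)

lemma integrable_mul_radialKernel (hf : LocallyIntegrableOn f D volume)
    (h : A.DualFormBounds R C) (hz : z ∈ closedBall 0 R) (hr : 0 < r)
    (hsub : closedBall z (C * r) ⊆ D) : Integrable fun ξ => f ξ * A.radialKernel z r ξ :=
  have hsupp := tsupport_radialKernel_subset h hz hr
  integrable_mul_of_tsupport_subset hf (A.continuous_radialKernel z r)
    (hasCompactSupport_of_tsupport_subset_closedBall hsupp) (hsupp.trans hsub)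

lemma kernelIntegral_nonneg (hf : ∀ z, 0 ≤ f z) (z : Cn n) (r : ℝ) :
    0 ≤ A.kernelIntegral f z r :=
  integral_nonneg fun ξ => mul_nonneg (hf ξ) (A.kernel_nonneg z r ξ)

lemma radialIntegral_nonneg (hf : ∀ z, 0 ≤ f z) (z : Cn n) (r : ℝ) :
    0 ≤ A.radialIntegral f z r :=
  integral_nonneg fun ξ => mul_nonneg (hf ξ) (A.radialKernel_nonneg z r ξ)

lemma abs_integral_mul_alphaOpR_kernelPotential_sub_le (h : A.DualFormBounds R C)
    (hf : LocallyIntegrableOn f D volume) (hf0 : ∀ z, 0 ≤ f z) (hDR : D ⊆ closedBall 0 R)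
    (hz : z ∈ closedBall 0 R) (hr : 0 < r) (hsub : closedBall z (C * r) ⊆ D) :
    |r ^ 2 * (∫ ξ, f ξ * alphaOpR A (A.kernelPotential z r) ξ) -
        (A.radialIntegral f z r - n * A.kernelIntegral f z r)| ≤
      C ^ 2 * r * (A.kernelIntegral f z r + A.radialIntegral f z r) := by
  have intK := integrable_mul_kernel hf h hz hr hsub
  have intQ := integrable_mul_radialKernel hf h hz hr hsub
  have intL := (isTestFunction_kernelPotential h hz hr hsub).integrable_mul_op A hf
  have intQK : Integrable fun ξ => f ξ * A.radialKernel z r ξ - n * (f ξ * A.kernel z r ξ) :=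
    intQ.sub (intK.const_mul _)
  rw [kernelIntegral, radialIntegral, ← integral_const_mul, ← integral_const_mul,
    ← integral_add intK intQ, ← integral_const_mul, ← integral_sub intQ (intK.const_mul _),
    ← integral_sub (intL.const_mul _) intQK, ← Real.norm_eq_abs]
  refine norm_integral_le_of_norm_le ((intK.add intQ).const_mul _) (.of_forall fun ξ => ?_)
  have factor : r ^ 2 * (f ξ * alphaOpR A (A.kernelPotential z r) ξ) -
      (f ξ * A.radialKernel z r ξ - n * (f ξ * A.kernel z r ξ)) =
      f ξ * (r ^ 2 * alphaOpR A (A.kernelPotential z r) ξ -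
        (A.radialKernel z r ξ - n * A.kernel z r ξ)) := by ring
  rw [factor, norm_mul, Real.norm_of_nonneg (hf0 ξ), Real.norm_eq_abs]
  calc f ξ * _ ≤ f ξ * (C ^ 2 * r * (A.kernel z r ξ + A.radialKernel z r ξ)) :=
        mul_le_mul_of_nonneg_left
          (abs_alphaOpR_kernelPotential_sub_le h hz hr (hsub.trans hDR) ξ) (hf0 ξ)
    _ = _ := by ring

lemma radialIntegral_sub_le (h : A.DualFormBounds R C) (hf : A.IsNonnegSuperharmonic D F f)
    (hDR : D ⊆ closedBall 0 R) (hz : z ∈ closedBall 0 R) (hr : 0 < r)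
    (hsub : closedBall z (C * r) ⊆ D) :
    A.radialIntegral f z r - n * A.kernelIntegral f z r ≤
      C ^ 2 * r * (A.kernelIntegral f z r + A.radialIntegral f z r) := by
  have freeze := abs_le.1 (abs_integral_mul_alphaOpR_kernelPotential_sub_le h
    hf.locallyIntegrableOn hf.nonneg hDR hz hr hsub)
  have nonpos := hf.integral_nonpos _ (isTestFunction_kernelPotential h hz hr hsub)
    (A.kernelPotential_nonneg z r)
  linarith [mul_nonpos_of_nonneg_of_nonpos (sq_nonneg r) nonpos]

lemma le_radialIntegral_sub (h : A.DualFormBounds R C) (hf : A.IsNonnegSuperharmonic D F f)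
    (hDR : D ⊆ closedBall 0 R) (hz : z ∈ closedBall 0 R) (hr : 0 < r)
    (hsub : closedBall z (C * r) ⊆ D) :
    -(C ^ 2 * r * (A.kernelIntegral f z r + A.radialIntegral f z r)) -
        F * (C ^ (2 * n) * unitBallVolume n) * r ^ (2 * n + 2) ≤
      A.radialIntegral f z r - n * A.kernelIntegral f z r := by
  have freeze := abs_le.1 (abs_integral_mul_alphaOpR_kernelPotential_sub_le h
    hf.locallyIntegrableOn hf.nonneg hDR hz hr hsub)
  have lower := hf.neg_le_integral _ (isTestFunction_kernelPotential h hz hr hsub)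
    (A.kernelPotential_nonneg z r)
  have mass : r ^ 2 * (F * ∫ ξ, A.kernelPotential z r ξ) ≤
      F * (C ^ (2 * n) * unitBallVolume n) * r ^ (2 * n + 2) :=
    calc r ^ 2 * (F * ∫ ξ, A.kernelPotential z r ξ)
        ≤ r ^ 2 * (F * ((C * r) ^ (2 * n) * unitBallVolume n)) := by
          gcongr
          · exact hf.bound_nonneg
          · exact integral_kernelPotential_le h hz hr
      _ = F * (C ^ (2 * n) * unitBallVolume n) * r ^ (2 * n + 2) := by rw [mul_pow]; ring
  linarith [mul_le_mul_of_nonneg_left lower (sq_nonneg r)]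

lemma mul_add_radialIntegral_le (h : A.DualFormBounds R C) (hf : A.IsNonnegSuperharmonic D F f)
    (hDR : D ⊆ closedBall 0 R) (hz : z ∈ closedBall 0 R) (hr : 0 < r)
    (hsub : closedBall z (C * r) ⊆ D) (hr1 : C ^ 2 * r ≤ 1 / 2) :
    C ^ 2 * r * (A.kernelIntegral f z r + A.radialIntegral f z r) ≤
      (2 * n + 2) * C ^ 2 * r * A.kernelIntegral f z r := by
  have upper := radialIntegral_sub_le h hf hDR hz hr hsub
  have absorb := mul_le_mul_of_nonneg_right hr1 (add_nonneg
    (kernelIntegral_nonneg (A := A) hf.nonneg z r) (radialIntegral_nonneg (A := A) hf.nonneg z r))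
  calc C ^ 2 * r * (A.kernelIntegral f z r + A.radialIntegral f z r)
      ≤ C ^ 2 * r * ((2 * n + 2) * A.kernelIntegral f z r) := by gcongr; linarith
    _ = (2 * n + 2) * C ^ 2 * r * A.kernelIntegral f z r := by ring

lemma hasDerivAt_kernelIntegral (h : A.DualFormBounds R C) (hf : LocallyIntegrableOn f D volume)
    (hz : z ∈ closedBall 0 R) {r₁ : ℝ} (hr : 0 < r) (hrr : r < r₁)
    (hsub : closedBall z (C * r₁) ⊆ D) :
    HasDerivAt (A.kernelIntegral f z) (2 / r * A.radialIntegral f z r) r := by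
  have hC := h.one_le
  obtain ⟨M, -, hM⟩ := exists_abs_deriv_cutoff_le
  have mono {s : ℝ} (hs : s < r₁) : closedBall z (C * s) ⊆ closedBall z (C * r₁) :=
    closedBall_subset_closedBall (by gcongr)
  have bound {s : ℝ} (hs : s ∈ Set.Ioo (r / 2) r₁) (ξ : Cn n) :
      ‖f ξ * (2 / s * A.radialKernel z s ξ)‖ ≤
        4 / r * M * (closedBall z (C * r₁)).indicator (fun ξ => ‖f ξ‖) ξ := by
    have hs0 : 0 < s := by linarith [hs.1]
    by_cases hξ : ξ ∈ closedBall z (C * r₁)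
    · have inv_le : 2 / s ≤ 4 / r := by
        rw [div_le_div_iff₀ hs0 hr]; linarith [hs.1]
      rw [Set.indicator_of_mem hξ, norm_mul, Real.norm_of_nonneg
        (mul_nonneg (by positivity) (A.radialKernel_nonneg _ _ _)), mul_comm]
      gcongr
      · exact A.radialKernel_nonneg _ _ _
      · exact A.radialKernel_le _ _ _ hM
    · have vanish : A.radialKernel z s ξ = 0 := image_eq_zero_of_notMem_tsupport fun hmem =>
        hξ (mono hs.2 (tsupport_radialKernel_subset h hz hs0 hmem))
      simp [vanish, hξ]
  have deriv := hasDerivAt_integral_of_dominated_loc_of_deriv_le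
    (F := fun r ξ => f ξ * A.kernel z r ξ) (F' := fun r ξ => f ξ * (2 / r * A.radialKernel z r ξ))
    (Ioo_mem_nhds (by linarith : r / 2 < r) hrr)
    (by
      filter_upwards [Ioo_mem_nhds (by linarith : r / 2 < r) hrr] with s hs
      exact (integrable_mul_kernel hf h hz (by linarith [hs.1])
        ((mono hs.2).trans hsub)).aestronglyMeasurable)
    (integrable_mul_kernel hf h hz hr ((mono hrr).trans hsub))
    (by
      simp only [mul_left_comm (f _)]
      exact ((integrable_mul_radialKernel hf h hz hr ((mono hrr).trans hsub)).const_mul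
        (2 / r)).aestronglyMeasurable)
    (.of_forall fun ξ s hs => bound hs ξ)
    (((integrable_indicator_iff measurableSet_closedBall).2
      (hf.integrableOn_compact_subset hsub (isCompact_closedBall _ _)).norm).const_mul _)
    (.of_forall fun ξ s hs => (A.hasDerivAt_kernel z ξ (by linarith [hs.1])).const_mul (f ξ))
  exact deriv.2.congr_deriv (by
    simp only [mul_left_comm (f _)]
    rw [integral_const_mul, radialIntegral])

end AlphaForm

/-! ### Mean values and the Harnack inequality -/

section RadialODE

variable {I I' : ℝ → ℝ} {b G r₁ : ℝ}

lemma antitoneOn_exp_neg_mul_mul (hI : ∀ r ∈ Set.Ioo 0 r₁, HasDerivAt I (I' r) r)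
    (upper : ∀ r ∈ Set.Ioo 0 r₁, I' r ≤ b * I r) :
    AntitoneOn (fun r => Real.exp (-(b * r)) * I r) (Set.Ioo 0 r₁) := by
  have deriv (r) (hr : r ∈ Set.Ioo 0 r₁) : HasDerivAt (fun r => Real.exp (-(b * r)) * I r)
      (Real.exp (-(b * r)) * (I' r - b * I r)) r := by
    refine (((hasDerivAt_id r).const_mul b).neg.exp.mul (hI r hr)).congr_deriv ?_
    simp only [id, Pi.neg_apply]
    ring
  refine antitoneOn_of_deriv_nonpos (convex_Ioo _ _)
    (fun r hr => (deriv r hr).continuousAt.continuousWithinAt) ?_ ?_ <;> rw [interior_Ioo]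
  · exact fun r hr => (deriv r hr).differentiableAt.differentiableWithinAt
  · intro r hr
    rw [(deriv r hr).deriv]
    exact mul_nonpos_of_nonneg_of_nonpos (Real.exp_nonneg _) (sub_nonpos.2 (upper r hr))

lemma monotoneOn_exp_mul_mul_add (hb : 0 ≤ b) (hG : 0 ≤ G) (hr₁ : r₁ ≤ 1)
    (hI : ∀ r ∈ Set.Ioo 0 r₁, HasDerivAt I (I' r) r)
    (lower : ∀ r ∈ Set.Ioo 0 r₁, -(b * I r) - 2 * G * r ≤ I' r) :
    MonotoneOn (fun r => Real.exp (b * r) * I r + G * Real.exp b * r ^ 2) (Set.Ioo 0 r₁) := by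
  have deriv (r) (hr : r ∈ Set.Ioo 0 r₁) :
      HasDerivAt (fun r => Real.exp (b * r) * I r + G * Real.exp b * r ^ 2)
        (Real.exp (b * r) * (b * I r + I' r) + Real.exp b * (2 * G * r)) r := by
    refine ((((hasDerivAt_id r).const_mul b).exp.mul (hI r hr)).add
      ((hasDerivAt_pow 2 r).const_mul _)).congr_deriv ?_
    simp only [id, Nat.cast_ofNat, Nat.add_one_sub_one, pow_one]
    ring
  refine monotoneOn_of_deriv_nonneg (convex_Ioo _ _)
    (fun r hr => (deriv r hr).continuousAt.continuousWithinAt) ?_ ?_ <;> rw [interior_Ioo]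
  · exact fun r hr => (deriv r hr).differentiableAt.differentiableWithinAt
  · intro r hr
    have hr0 : 0 < r := hr.1
    have exp_le : Real.exp (b * r) * (2 * G * r) ≤ Real.exp b * (2 * G * r) := by
      gcongr
      exact mul_le_of_le_one_right hb (hr.2.le.trans hr₁)
    have main : 0 ≤ Real.exp (b * r) * (b * I r + I' r + 2 * G * r) :=
      mul_nonneg (Real.exp_nonneg _) (by linarith [lower r hr])
    rw [(deriv r hr).deriv]
    linarith

lemma tendsto_nhdsGT_zero_of_continuous {g : ℝ → ℝ} (hg : Continuous g) :
    Tendsto g (𝓝[>] 0) (𝓝 (g 0)) :=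
  (hg.tendsto 0).mono_left nhdsWithin_le_nhds

lemma exists_tendsto_nhdsGT_zero (hb : 0 ≤ b) (hG : 0 ≤ G) (hr₁ : 0 < r₁) (hr₁' : r₁ ≤ 1)
    (hI : ∀ r ∈ Set.Ioo 0 r₁, HasDerivAt I (I' r) r) (hI0 : ∀ r ∈ Set.Ioo 0 r₁, 0 ≤ I r)
    (upper : ∀ r ∈ Set.Ioo 0 r₁, I' r ≤ b * I r)
    (lower : ∀ r ∈ Set.Ioo 0 r₁, -(b * I r) - 2 * G * r ≤ I' r) :
    ∃ l, 0 ≤ l ∧ Tendsto I (𝓝[>] 0) (𝓝 l) ∧ ∀ r ∈ Set.Ioo 0 r₁,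
      I r ≤ Real.exp (b * r) * l ∧ l ≤ Real.exp (b * r) * I r + G * Real.exp b * r ^ 2 := by
  set U := fun r => Real.exp (b * r) * I r + G * Real.exp b * r ^ 2
  have bdd : BddBelow (U '' Set.Ioo 0 r₁) := by
    refine ⟨0, ?_⟩
    rintro _ ⟨r, hr, rfl⟩
    have := hI0 r hr
    positivity
  set l := sInf (U '' Set.Ioo 0 r₁)
  have lim_U : Tendsto U (𝓝[>] 0) (𝓝 l) :=
    (monotoneOn_exp_mul_mul_add hb hG hr₁' hI lower).tendsto_nhdsWithin_Ioo_right
      (Set.nonempty_Ioo.2 hr₁) bdd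
  have exp_mul_cancel (r x : ℝ) : Real.exp (b * r) * (Real.exp (-(b * r)) * x) = x := by
    rw [← mul_assoc, ← Real.exp_add, add_neg_cancel, Real.exp_zero, one_mul]
  have lim_exp : Tendsto (fun r => Real.exp (-(b * r))) (𝓝[>] 0) (𝓝 1) := by
    simpa using tendsto_nhdsGT_zero_of_continuous
      (by fun_prop : Continuous fun r => Real.exp (-(b * r)))
  have lim_sq : Tendsto (fun r : ℝ => G * Real.exp b * r ^ 2) (𝓝[>] 0) (𝓝 0) := by
    simpa using tendsto_nhdsGT_zero_of_continuous
      (by fun_prop : Continuous fun r : ℝ => G * Real.exp b * r ^ 2)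
  have lim_I : Tendsto I (𝓝[>] 0) (𝓝 l) := by
    have lim := lim_exp.mul (lim_U.sub lim_sq)
    rw [sub_zero, one_mul] at lim
    refine lim.congr fun r => ?_
    rw [add_sub_cancel_right, mul_left_comm, exp_mul_cancel]
  refine ⟨l, ge_of_tendsto lim_I (eventually_of_mem (Ioo_mem_nhdsGT hr₁) hI0), lim_I,
    fun r hr => ⟨?_, csInf_le bdd ⟨r, hr, rfl⟩⟩⟩
  have le_lim : Real.exp (-(b * r)) * I r ≤ l := by
    refine ge_of_tendsto (by simpa using lim_exp.mul lim_I) ?_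
    filter_upwards [Ioo_mem_nhdsGT hr.1] with s hs
    exact antitoneOn_exp_neg_mul_mul hI upper ⟨hs.1, hs.2.trans hr.2⟩ hr hs.2.le
  simpa only [exp_mul_cancel] using mul_le_mul_of_nonneg_left le_lim (Real.exp_nonneg (b * r))

end RadialODE

lemma closedBall_subset_of_lt_infDist_compl {X : Type*} [PseudoMetricSpace X] {D : Set X} {z : X}
    {ρ : ℝ} (h : ρ < infDist z Dᶜ) : closedBall z ρ ⊆ D := fun ξ hξ => by
  by_contra hc
  have := infDist_le_dist_of_mem (x := z) (show ξ ∈ Dᶜ from hc)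
  rw [mem_closedBall, dist_comm] at hξ
  linarith

namespace AlphaForm

variable {n : ℕ}

/-- The mean of `f` over the kernel of radius `r` about `z`, up to a factor independent of `r`. -/
noncomputable def kernelMean (A : AlphaForm n) (f : Cn n → ℝ) (z : Cn n) (r : ℝ) : ℝ :=
  A.kernelIntegral f z r / r ^ (2 * n)

variable {A : AlphaForm n} {R C F r : ℝ} {D : Set (Cn n)} {f : Cn n → ℝ} {z w : Cn n}

lemma kernelMean_nonneg (hf : ∀ z, 0 ≤ f z) (hr : 0 < r) : 0 ≤ A.kernelMean f z r :=
  div_nonneg (kernelIntegral_nonneg hf z r) (by positivity)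

lemma hasDerivAt_kernelMean (h : A.DualFormBounds R C) (hf : LocallyIntegrableOn f D volume)
    (hz : z ∈ closedBall 0 R) {r₁ : ℝ} (hr : 0 < r) (hrr : r < r₁)
    (hsub : closedBall z (C * r₁) ⊆ D) :
    HasDerivAt (A.kernelMean f z)
      (2 / r * (A.radialIntegral f z r - n * A.kernelIntegral f z r) / r ^ (2 * n)) r := by
  refine ((hasDerivAt_kernelIntegral h hf hz hr hrr hsub).div (hasDerivAt_pow (2 * n) r)
    (by positivity)).congr_deriv ?_
  rcases Nat.eq_zero_or_pos n with rfl | hn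
  · simp
  · have pow_pred : r ^ (2 * n) = r ^ (2 * n - 1) * r := by rw [← pow_succ]; congr 1; omega
    rw [pow_pred]
    push_cast
    field_simp

lemma deriv_kernelMean_bounds (h : A.DualFormBounds R C) (hf : A.IsNonnegSuperharmonic D F f)
    (hDR : D ⊆ closedBall 0 R) (hz : z ∈ closedBall 0 R) (hr : 0 < r)
    (hsub : closedBall z (C * r) ⊆ D) (hr1 : C ^ 2 * r ≤ 1 / 2) :
    2 / r * (A.radialIntegral f z r - n * A.kernelIntegral f z r) / r ^ (2 * n) ≤
      4 * (n + 1) * C ^ 2 * A.kernelMean f z r ∧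
    -(4 * (n + 1) * C ^ 2 * A.kernelMean f z r) - 2 * (F * (C ^ (2 * n) * unitBallVolume n)) * r ≤
      2 / r * (A.radialIntegral f z r - n * A.kernelIntegral f z r) / r ^ (2 * n) := by
  have upper := radialIntegral_sub_le h hf hDR hz hr hsub
  have lower := le_radialIntegral_sub h hf hDR hz hr hsub
  have absorb := mul_add_radialIntegral_le h hf hDR hz hr hsub hr1
  rw [kernelMean]
  constructor
  · calc 2 / r * (A.radialIntegral f z r - n * A.kernelIntegral f z r) / r ^ (2 * n)
        ≤ 2 / r * ((2 * n + 2) * C ^ 2 * r * A.kernelIntegral f z r) / r ^ (2 * n) := by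
          gcongr
          exact upper.trans absorb
      _ = 4 * (n + 1) * C ^ 2 * (A.kernelIntegral f z r / r ^ (2 * n)) := by
          field_simp
          ring
  · calc -(4 * (n + 1) * C ^ 2 * (A.kernelIntegral f z r / r ^ (2 * n))) -
          2 * (F * (C ^ (2 * n) * unitBallVolume n)) * r
        = 2 / r * (-((2 * n + 2) * C ^ 2 * r * A.kernelIntegral f z r) -
            F * (C ^ (2 * n) * unitBallVolume n) * r ^ (2 * n + 2)) / r ^ (2 * n) := by
          rw [pow_add]
          field_simp
          ring
      _ ≤ 2 / r * (A.radialIntegral f z r - n * A.kernelIntegral f z r) / r ^ (2 * n) := by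
          gcongr 2 / r * ?_ / r ^ (2 * n)
          linarith

lemma exists_tendsto_kernelMean (h : A.DualFormBounds R C) (hf : A.IsNonnegSuperharmonic D F f)
    (hD : IsOpen D) (hDc : Dᶜ.Nonempty) (hDR : D ⊆ closedBall 0 R) (hz : z ∈ D) :
    ∃ l, 0 ≤ l ∧ Tendsto (A.kernelMean f z) (𝓝[>] 0) (𝓝 l) ∧
      ∀ r, 0 < r → C ^ 2 * r < 1 / 2 → C * r < infDist z Dᶜ →
        A.kernelMean f z r ≤ Real.exp (4 * (n + 1) * C ^ 2 * r) * l ∧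
        l ≤ Real.exp (4 * (n + 1) * C ^ 2 * r) * A.kernelMean f z r +
          F * (C ^ (2 * n) * unitBallVolume n) * Real.exp (4 * (n + 1) * C ^ 2) * r ^ 2 := by
  have hC := h.one_le
  have hF := hf.bound_nonneg
  have hV := (unitBallVolume_pos n).le
  have hpos : 0 < infDist z Dᶜ :=
    (hD.isClosed_compl.notMem_iff_infDist_pos hDc).1 (Set.notMem_compl_iff.2 hz)
  set r₁ := min (1 / 2 / C ^ 2) (infDist z Dᶜ / C)
  have mem_iff (r : ℝ) : r < r₁ ↔ C ^ 2 * r < 1 / 2 ∧ C * r < infDist z Dᶜ := by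
    rw [lt_min_iff, lt_div_iff₀' (by positivity : 0 < C ^ 2), lt_div_iff₀' (by positivity : 0 < C)]
  have subset {r : ℝ} (hr : r < r₁) : closedBall z (C * r) ⊆ D :=
    closedBall_subset_of_lt_infDist_compl ((mem_iff r).1 hr).2
  have r₁_le_one : r₁ ≤ 1 :=
    (min_le_left _ _).trans (by rw [div_le_one (by positivity)]; nlinarith)
  have bounds (r) (hr : r ∈ Set.Ioo 0 r₁) := deriv_kernelMean_bounds h hf hDR (hDR hz) hr.1
    (subset hr.2) ((mem_iff r).1 hr.2).1.le
  obtain ⟨l, hl, lim, compare⟩ := exists_tendsto_nhdsGT_zero (I := A.kernelMean f z)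
    (b := 4 * (n + 1) * C ^ 2) (G := F * (C ^ (2 * n) * unitBallVolume n)) (by positivity)
    (by positivity) (lt_min (by positivity) (by positivity)) r₁_le_one
    (fun r hr => by
      obtain ⟨s, hrs, hs⟩ := exists_between hr.2
      exact hasDerivAt_kernelMean h hf.locallyIntegrableOn (hDR hz) hr.1 hrs (subset hs))
    (fun r hr => kernelMean_nonneg hf.nonneg hr.1)
    (fun r hr => (bounds r hr).1) (fun r hr => (bounds r hr).2)
  exact ⟨l, hl, lim, fun r hr hr1 hr2 => compare r ⟨hr, (mem_iff r).2 ⟨hr1, hr2⟩⟩⟩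

end AlphaForm

namespace AlphaForm

variable {n : ℕ} {A : AlphaForm n} {R C F M r : ℝ} {D : Set (Cn n)} {f : Cn n → ℝ} {z w : Cn n}

section Comparison

lemma scaledSq_sub_le (h : A.DualFormBounds R C) (hz : z ∈ closedBall 0 R)
    (hw : w ∈ closedBall 0 R) (hr : 0 < r) (hr1 : r ≤ 1) (hzw : ‖z - w‖ ≤ r) {ξ : Cn n}
    (hξ : ‖ξ - z‖ ≤ 2 * C * r) :
    |A.scaledSq w r ξ - A.scaledSq z r ξ| ≤ 14 * C ^ 3 * (‖z - w‖ / r) := by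
  have hC := h.one_le
  have hξw : ‖ξ - w‖ ≤ 3 * C * r := by
    have := norm_sub_le_norm_sub_add_norm_sub ξ z w
    nlinarith
  have forms := h.abs_sub_le z hz w hw (ξ - z) (ξ - w)
  rw [sub_sub_sub_cancel_left, norm_sub_rev w z] at forms
  rw [scaledSq, scaledSq, ← mul_sub, abs_mul, abs_of_nonneg (by positivity)]
  calc (r ^ 2)⁻¹ * |A.dualForm w (ξ - w) (ξ - w) - A.dualForm z (ξ - z) (ξ - z)|
      ≤ (r ^ 2)⁻¹ * (C * ‖z - w‖ * (3 * C * r) ^ 2 +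
          C * ‖z - w‖ * (2 * C * r + 3 * C * r)) := by
        gcongr
        exact forms.trans (by gcongr)
    _ = (9 * C ^ 3 * r + 5 * C ^ 2) * (‖z - w‖ / r) := by field_simp; ring
    _ ≤ 14 * C ^ 3 * (‖z - w‖ / r) := by
        gcongr
        have : C ^ 2 ≤ C ^ 3 := pow_le_pow_right₀ hC (by norm_num)
        have : C ^ 3 * r ≤ C ^ 3 := mul_le_of_le_one_right (by positivity) hr1
        linarith

lemma kernel_eq_one (h : A.DualFormBounds R C) (hz : z ∈ closedBall 0 R) (hr : 0 < r) {ξ : Cn n}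
    (hξ : 2 * C * ‖ξ - z‖ ≤ r) : A.kernel z r ξ = 1 := by
  have hC := h.one_le
  refine cutoff_of_le_half ?_
  rw [scaledSq, inv_mul_le_iff₀ (by positivity)]
  calc A.dualForm z (ξ - z) (ξ - z) ≤ C * ‖ξ - z‖ ^ 2 := h.le_sq_norm z hz _
    _ ≤ C ^ 2 * ‖ξ - z‖ ^ 2 * 2 := by nlinarith [sq_nonneg ‖ξ - z‖, le_self_pow₀ hC two_ne_zero]
    _ = (2 * C * ‖ξ - z‖) ^ 2 * (1 / 2) := by ring
    _ ≤ r ^ 2 * (1 / 2) := by gcongr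

lemma kernel_eq_zero (h : A.DualFormBounds R C) (hz : z ∈ closedBall 0 R) (hr : 0 < r) {ξ : Cn n}
    (hξ : C * r < ‖ξ - z‖) : A.kernel z r ξ = 0 :=
  cutoff_of_one_le (one_le_scaledSq h hz hr (by rwa [mem_closedBall, dist_eq_norm, not_le]))

lemma kernel_le_add (h : A.DualFormBounds R C) (hM : ∀ t, |deriv cutoff t| ≤ M)
    (hz : z ∈ closedBall 0 R) (hw : w ∈ closedBall 0 R) (hr : 0 < r) (hr1 : r ≤ 1)
    (hzw : ‖z - w‖ ≤ r) (ξ : Cn n) :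
    A.kernel w r ξ ≤ A.kernel z r ξ +
      14 * M * C ^ 3 * (‖z - w‖ / r) * A.kernel z (4 * C ^ 2 * r) ξ := by
  have hC := h.one_le
  have hM0 : 0 ≤ M := (abs_nonneg _).trans (hM 0)
  by_cases hξ : ‖ξ - z‖ ≤ 2 * C * r
  · have inner_region : 2 * C * ‖ξ - z‖ ≤ 4 * C ^ 2 * r :=
      calc 2 * C * ‖ξ - z‖ ≤ 2 * C * (2 * C * r) := by gcongr
        _ = 4 * C ^ 2 * r := by ring
    rw [kernel_eq_one h hz (by positivity) inner_region, mul_one, ← sub_le_iff_le_add']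
    calc A.kernel w r ξ - A.kernel z r ξ
        ≤ M * |A.scaledSq w r ξ - A.scaledSq z r ξ| :=
          (le_abs_self _).trans (abs_cutoff_sub_le hM _ _)
      _ ≤ M * (14 * C ^ 3 * (‖z - w‖ / r)) := by
          gcongr
          exact scaledSq_sub_le h hz hw hr hr1 hzw hξ
      _ = 14 * M * C ^ 3 * (‖z - w‖ / r) := by ring
  · have far : C * r < ‖ξ - w‖ := by
      have := norm_sub_le_norm_sub_add_norm_sub ξ w z
      rw [norm_sub_rev w z] at this
      nlinarith
    have := A.kernel_nonneg z r ξ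
    have := A.kernel_nonneg z (4 * C ^ 2 * r) ξ
    rw [kernel_eq_zero h hw hr far]
    positivity

/-- The constant in the comparison `AlphaForm.kernelMean_le_add` of means about nearby points. -/
def comparisonConst (n : ℕ) (M C : ℝ) : ℝ := 14 * M * C ^ 3 * (4 * C ^ 2) ^ (2 * n)

lemma comparisonConst_nonneg (hM : 0 ≤ M) (hC : 0 ≤ C) : 0 ≤ comparisonConst n M C := by
  rw [comparisonConst]
  positivity

lemma kernelMean_le_add (h : A.DualFormBounds R C) (hM : ∀ t, |deriv cutoff t| ≤ M)
    (hf : LocallyIntegrableOn f D volume) (hf0 : ∀ z, 0 ≤ f z)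
    (hz : z ∈ closedBall 0 R) (hw : w ∈ closedBall 0 R) (hr : 0 < r) (hr1 : r ≤ 1)
    (hzw : ‖z - w‖ ≤ r) (hsub : closedBall z (4 * C ^ 3 * r) ⊆ D) :
    A.kernelMean f w r ≤ A.kernelMean f z r +
      comparisonConst n M C * (‖z - w‖ / r) * A.kernelMean f z (4 * C ^ 2 * r) := by
  have hC := h.one_le
  have two_le : 2 * C ≤ 4 * C ^ 3 := by nlinarith [one_le_pow₀ (n := 2) hC]
  have near_z : closedBall z (C * r) ⊆ D :=
    (closedBall_subset_closedBall (by nlinarith)).trans hsub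
  have near_w : closedBall w (C * r) ⊆ D := by
    refine (closedBall_subset_closedBall' ?_).trans hsub
    rw [dist_comm, dist_eq_norm]
    nlinarith
  have int_w := integrable_mul_kernel hf h hw hr near_w
  have int_z := integrable_mul_kernel hf h hz hr near_z
  have int_big := integrable_mul_kernel hf h hz (r := 4 * C ^ 2 * r) (by positivity)
    (by convert hsub using 2; ring)
  have integrals : A.kernelIntegral f w r ≤ A.kernelIntegral f z r +
      14 * M * C ^ 3 * (‖z - w‖ / r) * A.kernelIntegral f z (4 * C ^ 2 * r) := by
    rw [kernelIntegral, kernelIntegral, kernelIntegral, ← integral_const_mul,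
      ← integral_add int_z (int_big.const_mul _)]
    refine integral_mono int_w (int_z.add (int_big.const_mul _)) fun ξ => ?_
    refine (mul_le_mul_of_nonneg_left (kernel_le_add h hM hz hw hr hr1 hzw ξ) (hf0 ξ)).trans_eq ?_
    ring
  rw [kernelMean, kernelMean, kernelMean, comparisonConst]
  calc A.kernelIntegral f w r / r ^ (2 * n)
      ≤ (A.kernelIntegral f z r + 14 * M * C ^ 3 * (‖z - w‖ / r) *
          A.kernelIntegral f z (4 * C ^ 2 * r)) / r ^ (2 * n) := by gcongr
    _ = _ := by
        rw [mul_pow _ r]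
        field_simp

end Comparison

section Mass

/-- The mass of the kernel of radius `1` about `z`. -/
noncomputable def kernelMass (A : AlphaForm n) (z : Cn n) : ℝ := ∫ x, cutoff (A.dualForm z x x)

lemma kernelMean_one (A : AlphaForm n) (z : Cn n) (hr : 0 < r) :
    A.kernelMean (fun _ => 1) z r = A.kernelMass z := by
  have rescale (x : Cn n) : cutoff ((r ^ 2)⁻¹ * A.dualForm z x x) =
      cutoff (A.dualForm z (r⁻¹ • x) (r⁻¹ • x)) := by
    simp only [map_smul, smul_apply, smul_eq_mul]
    rw [← mul_assoc, sq, mul_inv]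
  simp only [kernelMean, kernelIntegral, one_mul, kernel, scaledSq]
  rw [integral_sub_right_eq_self (fun x => cutoff ((r ^ 2)⁻¹ * A.dualForm z x x)) z]
  simp only [rescale]
  rw [Measure.integral_comp_smul volume (fun x => cutoff (A.dualForm z x x)) r⁻¹, finrank_Cn,
    smul_eq_mul, inv_pow, inv_inv, abs_of_nonneg (by positivity), kernelMass]
  field_simp

lemma locallyIntegrableOn_one : LocallyIntegrableOn (fun _ : Cn n => (1 : ℝ)) D volume :=
  (locallyIntegrable_const 1).locallyIntegrableOn _

lemma le_kernelMass (h : A.DualFormBounds R C) (hz : z ∈ closedBall 0 R) :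
    (2 * C)⁻¹ ^ (2 * n) * unitBallVolume n ≤ A.kernelMass z := by
  have hC := h.one_le
  rw [← kernelMean_one A z one_pos, kernelMean, one_pow, div_one,
    ← volume_real_closedBall z (by positivity), ← integral_indicator_one measurableSet_closedBall,
    kernelIntegral]
  refine integral_mono ((integrable_indicator_iff measurableSet_closedBall).2
    (integrableOn_const measure_closedBall_lt_top.ne))
    (integrable_mul_kernel locallyIntegrableOn_one h hz one_pos (Set.subset_univ _)) fun ξ => ?_
  by_cases hξ : ξ ∈ closedBall z (2 * C)⁻¹
  · rw [Set.indicator_of_mem hξ, one_mul, Pi.one_apply]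
    rw [mem_closedBall, dist_eq_norm, inv_eq_one_div, le_div_iff₀' (by positivity)] at hξ
    exact (kernel_eq_one h hz one_pos hξ).ge
  · rw [Set.indicator_of_notMem hξ, one_mul]
    exact A.kernel_nonneg z 1 ξ

lemma kernelMass_pos (h : A.DualFormBounds R C) (hz : z ∈ closedBall 0 R) : 0 < A.kernelMass z := by
  have := h.one_le
  have := unitBallVolume_pos n
  exact lt_of_lt_of_le (by positivity) (le_kernelMass h hz)

lemma kernelMass_le (h : A.DualFormBounds R C) (hM : ∀ t, |deriv cutoff t| ≤ M)
    (hz : z ∈ closedBall 0 R) (hw : w ∈ closedBall 0 R) (hr : 0 < r) (hr1 : r ≤ 1)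
    (hzw : ‖z - w‖ ≤ r) :
    A.kernelMass z ≤ (1 + comparisonConst n M C * (‖z - w‖ / r)) * A.kernelMass w := by
  have hC := h.one_le
  have compare := kernelMean_le_add (D := Set.univ) h hM locallyIntegrableOn_one
    (fun _ => zero_le_one) hw hz hr hr1 (by rwa [norm_sub_rev]) (Set.subset_univ _)
  rw [kernelMean_one A z hr, kernelMean_one A w hr, kernelMean_one A w (by positivity),
    norm_sub_rev] at compare
  linarith

end Mass

section PreciseRepresentative

/-- The limit of the kernel means of `f` at `z` as the radius shrinks to `0`. -/
noncomputable def kernelLimit (A : AlphaForm n) (f : Cn n → ℝ) (z : Cn n) : ℝ :=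
  limUnder (𝓝[>] 0) (A.kernelMean f z)

/-- The representative of `f` obtained as the limit of its averages over shrinking kernels. -/
noncomputable def preciseRep (A : AlphaForm n) (f : Cn n → ℝ) (z : Cn n) : ℝ :=
  A.kernelLimit f z / A.kernelMass z

lemma tendsto_kernelMean (h : A.DualFormBounds R C) (hf : A.IsNonnegSuperharmonic D F f)
    (hD : IsOpen D) (hDc : Dᶜ.Nonempty) (hDR : D ⊆ closedBall 0 R) (hz : z ∈ D) :
    Tendsto (A.kernelMean f z) (𝓝[>] 0) (𝓝 (A.kernelLimit f z)) := by
  obtain ⟨l, -, lim, -⟩ := exists_tendsto_kernelMean h hf hD hDc hDR hz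
  rwa [kernelLimit, lim.limUnder_eq]

lemma kernelLimit_nonneg (h : A.DualFormBounds R C) (hf : A.IsNonnegSuperharmonic D F f)
    (hD : IsOpen D) (hDc : Dᶜ.Nonempty) (hDR : D ⊆ closedBall 0 R) (hz : z ∈ D) :
    0 ≤ A.kernelLimit f z :=
  ge_of_tendsto (tendsto_kernelMean h hf hD hDc hDR hz)
    (eventually_of_mem self_mem_nhdsWithin fun _ => kernelMean_nonneg hf.nonneg)

lemma preciseRep_nonneg (h : A.DualFormBounds R C) (hf : A.IsNonnegSuperharmonic D F f)
    (hD : IsOpen D) (hDc : Dᶜ.Nonempty) (hDR : D ⊆ closedBall 0 R) (hz : z ∈ D) :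
    0 ≤ A.preciseRep f z :=
  div_nonneg (kernelLimit_nonneg h hf hD hDc hDR hz) (kernelMass_pos h (hDR hz)).le

lemma kernelMean_le_mul_kernelLimit (h : A.DualFormBounds R C)
    (hf : A.IsNonnegSuperharmonic D F f) (hD : IsOpen D) (hDc : Dᶜ.Nonempty)
    (hDR : D ⊆ closedBall 0 R) (hz : z ∈ D) (hr : 0 < r) (hr1 : C ^ 2 * r < 1 / 2)
    (hrz : C * r < infDist z Dᶜ) :
    A.kernelMean f z r ≤ Real.exp (4 * (n + 1) * C ^ 2 * r) * A.kernelLimit f z := by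
  obtain ⟨l, -, lim, compare⟩ := exists_tendsto_kernelMean h hf hD hDc hDR hz
  rw [kernelLimit, lim.limUnder_eq]
  exact (compare r hr hr1 hrz).1

lemma kernelLimit_le_mul_kernelMean_add (h : A.DualFormBounds R C)
    (hf : A.IsNonnegSuperharmonic D F f) (hD : IsOpen D) (hDc : Dᶜ.Nonempty)
    (hDR : D ⊆ closedBall 0 R) (hz : z ∈ D) (hr : 0 < r) (hr1 : C ^ 2 * r < 1 / 2)
    (hrz : C * r < infDist z Dᶜ) :
    A.kernelLimit f z ≤ Real.exp (4 * (n + 1) * C ^ 2 * r) * A.kernelMean f z r +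
      F * (C ^ (2 * n) * unitBallVolume n) * Real.exp (4 * (n + 1) * C ^ 2) * r ^ 2 := by
  obtain ⟨l, -, lim, compare⟩ := exists_tendsto_kernelMean h hf hD hDc hDR hz
  rw [kernelLimit, lim.limUnder_eq]
  exact (compare r hr hr1 hrz).2

lemma exp_mul_le_one_add {b r : ℝ} (hb : 0 ≤ b) (hr : 0 ≤ r) (hr1 : r ≤ 1) :
    Real.exp (b * r) ≤ 1 + b * Real.exp b * r := by
  have tangent : 1 - b * r ≤ Real.exp (-(b * r)) := by linarith [Real.add_one_le_exp (-(b * r))]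
  have cancel : Real.exp (b * r) * Real.exp (-(b * r)) = 1 := by
    rw [← Real.exp_add, add_neg_cancel, Real.exp_zero]
  have one_ge : Real.exp (b * r) * (1 - b * r) ≤ 1 :=
    (mul_le_mul_of_nonneg_left tangent (Real.exp_nonneg _)).trans_eq cancel
  have : Real.exp (b * r) * (b * r) ≤ Real.exp b * (b * r) := by
    gcongr
    exact mul_le_of_le_one_right hb hr1
  linarith

/-- The constant of the Harnack inequality for limits of kernel means, where `b` bounds the
logarithmic growth of the means and `B` is the constant comparing means about nearby points. -/
noncomputable def harnackConst (b B : ℝ) : ℝ := (2 * b + B) * Real.exp (2 * b)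

lemma exp_mul_exp_add_le {b B x : ℝ} (hb : 0 ≤ b) (hB : 0 ≤ B) (hx : 0 ≤ x) (hr : 0 ≤ r)
    (hr1 : r ≤ 1) :
    Real.exp (b * r) * (Real.exp (b * r) + B * x * Real.exp b) ≤
      1 + harnackConst b B * (r + x) := by
  have square : Real.exp (b * r) * Real.exp (b * r) ≤ 1 + 2 * b * Real.exp (2 * b) * r := by
    rw [← Real.exp_add, ← two_mul, ← mul_assoc]
    exact exp_mul_le_one_add (by positivity) hr hr1
  have cross : Real.exp (b * r) * (B * x * Real.exp b) ≤ B * Real.exp (2 * b) * x :=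
    calc Real.exp (b * r) * (B * x * Real.exp b) ≤ Real.exp b * (B * x * Real.exp b) := by
          gcongr
          exact mul_le_of_le_one_right hb hr1
      _ = B * Real.exp (2 * b) * x := by rw [two_mul b, Real.exp_add]; ring
  have : 0 ≤ 2 * b * Real.exp (2 * b) * x := by positivity
  have : 0 ≤ B * Real.exp (2 * b) * r := by positivity
  rw [harnackConst]
  linarith

lemma mem_of_norm_sub_lt_infDist_compl (hzw : ‖z - w‖ < infDist z Dᶜ) : w ∈ D :=
  closedBall_subset_of_lt_infDist_compl hzw (by rw [mem_closedBall, dist_comm, dist_eq_norm])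

lemma kernelMean_le_mul_kernelLimit_of_near (h : A.DualFormBounds R C)
    (hM : ∀ t, |deriv cutoff t| ≤ M) (hf : A.IsNonnegSuperharmonic D F f) (hD : IsOpen D)
    (hDc : Dᶜ.Nonempty) (hDR : D ⊆ closedBall 0 R) (hz : z ∈ D) (hw : w ∈ D) (hr : 0 < r)
    (hzw : ‖z - w‖ ≤ r) (hr1 : 8 * C ^ 4 * r < 1) (hrz : 4 * C ^ 3 * r < infDist z Dᶜ) :
    A.kernelMean f w r ≤ (Real.exp (4 * (n + 1) * C ^ 2 * r) +
      comparisonConst n M C * (‖z - w‖ / r) * Real.exp (4 * (n + 1) * C ^ 2)) *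
        A.kernelLimit f z := by
  have hC := h.one_le
  have hB := comparisonConst_nonneg (n := n) ((abs_nonneg _).trans (hM 0)) (zero_le_one.trans hC)
  have pow_le {k l : ℕ} (hkl : k ≤ l) : C ^ k * r ≤ C ^ l * r := by gcongr
  have r_le := pow_le (Nat.zero_le 4)
  have Cr_le := pow_le (Nat.one_le_ofNat : 1 ≤ 3)
  have Csq_le := pow_le (by norm_num : 2 ≤ 4)
  rw [pow_zero, one_mul] at r_le
  rw [pow_one] at Cr_le
  have compare := kernelMean_le_add h hM hf.locallyIntegrableOn hf.nonneg (hDR hz) (hDR hw) hr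
    (by linarith) hzw (closedBall_subset_of_lt_infDist_compl hrz)
  have mean_small := kernelMean_le_mul_kernelLimit h hf hD hDc hDR hz hr (by linarith)
    (by nlinarith)
  have mean_big : A.kernelMean f z (4 * C ^ 2 * r) ≤
      Real.exp (4 * (n + 1) * C ^ 2) * A.kernelLimit f z := by
    refine (kernelMean_le_mul_kernelLimit h hf hD hDc hDR hz (by positivity)
      (by linarith) (by linarith)).trans ?_
    refine mul_le_mul_of_nonneg_right (Real.exp_le_exp.2 ?_)
      (kernelLimit_nonneg h hf hD hDc hDR hz)
    exact mul_le_of_le_one_right (by positivity) (by linarith)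
  calc A.kernelMean f w r
      ≤ Real.exp (4 * (n + 1) * C ^ 2 * r) * A.kernelLimit f z +
          comparisonConst n M C * (‖z - w‖ / r) *
            (Real.exp (4 * (n + 1) * C ^ 2) * A.kernelLimit f z) :=
        compare.trans (by gcongr)
    _ = _ := by ring

lemma kernelLimit_le (h : A.DualFormBounds R C) (hM : ∀ t, |deriv cutoff t| ≤ M)
    (hf : A.IsNonnegSuperharmonic D F f) (hD : IsOpen D) (hDc : Dᶜ.Nonempty)
    (hDR : D ⊆ closedBall 0 R) (hz : z ∈ D) (hr : 0 < r) (hzw : ‖z - w‖ ≤ r)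
    (hr1 : 8 * C ^ 4 * r < 1) (hrz : 5 * C ^ 3 * r < infDist z Dᶜ) :
    A.kernelLimit f w ≤
      (1 + harnackConst (4 * (n + 1) * C ^ 2) (comparisonConst n M C) * (r + ‖z - w‖ / r)) *
        A.kernelLimit f z +
      F * (C ^ (2 * n) * unitBallVolume n) * Real.exp (4 * (n + 1) * C ^ 2) * r ^ 2 := by
  have hC := h.one_le
  have hB := comparisonConst_nonneg (n := n) ((abs_nonneg _).trans (hM 0)) (zero_le_one.trans hC)
  have limit_nonneg := kernelLimit_nonneg h hf hD hDc hDR hz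
  have r_le : r ≤ C ^ 3 * r := le_mul_of_one_le_left hr.le (one_le_pow₀ hC)
  have Cr_le : C * r ≤ C ^ 3 * r := by gcongr; exact le_self_pow₀ hC three_ne_zero
  have Csq_le : C ^ 2 * r ≤ C ^ 4 * r := by gcongr; norm_num
  have dist_w : infDist z Dᶜ ≤ infDist w Dᶜ + ‖z - w‖ := by
    rw [← dist_eq_norm]
    exact infDist_le_infDist_add_dist
  have hw : w ∈ D := mem_of_norm_sub_lt_infDist_compl (z := z) (by linarith)
  have mean_w := kernelMean_le_mul_kernelLimit_of_near h hM hf hD hDc hDR hz hw hr hzw hr1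
    (by linarith)
  have limit_w := kernelLimit_le_mul_kernelMean_add h hf hD hDc hDR hw hr (by linarith)
    (by linarith)
  refine limit_w.trans (add_le_add_left ?_ _)
  calc _ ≤ _ := mul_le_mul_of_nonneg_left mean_w (Real.exp_nonneg _)
    _ = _ := (mul_assoc _ _ _).symm
    _ ≤ _ := mul_le_mul_of_nonneg_right
      (exp_mul_exp_add_le (by positivity) hB (by positivity) hr.le (by nlinarith)) limit_nonneg

lemma div_le_mul_div_add {a b c c' l l' E m : ℝ} (ha : 0 ≤ a) (hl : 0 ≤ l) (hE : 0 ≤ E)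
    (hm : 0 < m) (hc : 0 < c) (hmc : m ≤ c') (hcc : c ≤ b * c') (hll : l' ≤ a * l + E) :
    l' / c' ≤ a * b * (l / c) + E / m := by
  have hc' : 0 < c' := hm.trans_le hmc
  rw [div_le_iff₀ hc']
  calc l' ≤ a * (l / c * c) + E / m * m := by
        rwa [div_mul_cancel₀ _ hc.ne', div_mul_cancel₀ _ hm.ne']
    _ ≤ a * (l / c * (b * c')) + E / m * c' := by gcongr
    _ = _ := by ring

theorem exists_preciseRep_le (A : AlphaForm n) (R : ℝ) : ∃ K, 1 ≤ K ∧
    ∀ (D : Set (Cn n)) (f : Cn n → ℝ) (F : ℝ), IsOpen D → Dᶜ.Nonempty → D ⊆ closedBall 0 R →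
      A.IsNonnegSuperharmonic D F f → ∀ z ∈ D, ∀ w r, 0 < r → K * r ≤ 1 → ‖z - w‖ ≤ r →
        K * r ≤ infDist z Dᶜ →
        A.preciseRep f w ≤ (1 + K * (r + ‖z - w‖ / r)) * A.preciseRep f z + K * F * r ^ 2 := by
  obtain ⟨C, h⟩ := A.exists_dualFormBounds R
  obtain ⟨M, hM1, hM⟩ := exists_abs_deriv_cutoff_le
  have hC := h.one_le
  have hV := unitBallVolume_pos n
  have hB := comparisonConst_nonneg (n := n) (zero_le_one.trans hM1) (zero_le_one.trans hC)
  set B := comparisonConst n M C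
  set H := harnackConst (4 * (n + 1) * C ^ 2) B with H_def
  have hH : 0 ≤ H := by rw [H_def, harnackConst]; positivity
  set m := (2 * C)⁻¹ ^ (2 * n) * unitBallVolume n
  have hm : 0 < m := by positivity
  set G := C ^ (2 * n) * unitBallVolume n * Real.exp (4 * (n + 1) * C ^ 2)
  have hC4 : 1 ≤ C ^ 4 := one_le_pow₀ hC
  have hC34 : C ^ 3 ≤ C ^ 4 := pow_le_pow_right₀ hC (by norm_num)
  have hHB : 0 ≤ H * B := by positivity
  have hGm : 0 ≤ G / m := by positivity
  obtain ⟨K, hK⟩ : ∃ K, K = 9 * C ^ 4 + (H + B + H * B) + G / m := ⟨_, rfl⟩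
  refine ⟨K, by linarith, fun D f F hD hDc hDR hf z hz w r hr hKr hzw hKz => ?_⟩
  have hF := hf.bound_nonneg
  have le_K : 9 * C ^ 4 * r ≤ K * r := by gcongr; linarith
  have C4r : 0 < C ^ 4 * r := by positivity
  have C3r : C ^ 3 * r ≤ C ^ 4 * r := by gcongr
  have r_le : r ≤ C ^ 4 * r := le_mul_of_one_le_left hr.le hC4
  have hw : w ∈ D := mem_of_norm_sub_lt_infDist_compl (z := z) (by linarith)
  set x := ‖z - w‖ / r
  have : 0 ≤ x := by positivity
  have hx1 : x ≤ 1 := (div_le_one hr).2 hzw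
  have limits := kernelLimit_le h hM hf hD hDc hDR hz hr hzw (by linarith) (by linarith)
  have masses := kernelMass_le h hM (hDR hz) (hDR hw) hr (by linarith) hzw
  refine (div_le_mul_div_add (by positivity) (kernelLimit_nonneg h hf hD hDc hDR hz)
    (by positivity) hm (kernelMass_pos h (hDR hz)) (le_kernelMass h (hDR hw)) masses
    limits).trans (add_le_add (mul_le_mul_of_nonneg_right ?_
      (preciseRep_nonneg h hf hD hDc hDR hz)) ?_)
  · have : H * B * ((r + x) * x) ≤ H * B * (r + x) := by
      gcongr
      exact mul_le_of_le_one_right (by positivity) hx1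
    have : (H + B + H * B) * (r + x) ≤ K * (r + x) := by gcongr; linarith
    have : 0 ≤ B * r := by positivity
    linarith
  · calc _ = G / m * F * r ^ 2 := by ring
      _ ≤ K * F * r ^ 2 := by gcongr; linarith

end PreciseRepresentative

end AlphaForm

namespace AlphaForm

variable {n : ℕ} {A : AlphaForm n} {R C F r : ℝ} {D : Set (Cn n)} {f : Cn n → ℝ} {z : Cn n}

lemma kernel_le_one (A : AlphaForm n) (z : Cn n) (r : ℝ) (ξ : Cn n) : A.kernel z r ξ ≤ 1 :=
  cutoff_le_one _

lemma norm_integral_sub_mul_kernel_le (h : A.DualFormBounds R C) (hz : z ∈ closedBall 0 R)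
    (hf : IntegrableOn f (closedBall z (C * r))) (hr : 0 < r) :
    ‖∫ ξ, (f ξ - f z) * A.kernel z r ξ‖ ≤ ∫ ξ in closedBall z (C * r), ‖f ξ - f z‖ := by
  rw [← integral_indicator measurableSet_closedBall]
  have int_diff : IntegrableOn (fun ξ => ‖f ξ - f z‖) (closedBall z (C * r)) :=
    (Integrable.sub hf (integrableOn_const measure_closedBall_lt_top.ne)).norm
  refine norm_integral_le_of_norm_le
    ((integrable_indicator_iff measurableSet_closedBall).2 int_diff) (.of_forall fun ξ => ?_)
  by_cases hξ : ξ ∈ closedBall z (C * r)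
  · rw [Set.indicator_of_mem hξ, norm_mul, Real.norm_of_nonneg (A.kernel_nonneg _ _ _)]
    exact mul_le_of_le_one_right (norm_nonneg _) (A.kernel_le_one _ _ _)
  · have vanish : A.kernel z r ξ = 0 :=
      image_eq_zero_of_notMem_tsupport fun hmem => hξ (tsupport_kernel_subset h hz hr hmem)
    rw [Set.indicator_of_notMem hξ, vanish, mul_zero, norm_zero]

lemma abs_kernelMean_sub_le (h : A.DualFormBounds R C) (hz : z ∈ closedBall 0 R)
    (hf : LocallyIntegrableOn f D volume) (hr : 0 < r) (hsub : closedBall z (C * r) ⊆ D) :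
    |A.kernelMean f z r - A.kernelMass z * f z| ≤
      C ^ (2 * n) * unitBallVolume n * ⨍ ξ in closedBall z (C * r), ‖f ξ - f z‖ := by
  have hC := h.one_le
  have hV := unitBallVolume_pos n
  have hrp : 0 < r ^ (2 * n) := by positivity
  have int_f := integrable_mul_kernel hf h hz hr hsub
  have int_one := integrable_mul_kernel locallyIntegrableOn_one h hz hr (Set.subset_univ _)
  have deviation : A.kernelMean f z r - A.kernelMass z * f z =
      (∫ ξ, (f ξ - f z) * A.kernel z r ξ) / r ^ (2 * n) := by
    rw [← kernelMean_one A z hr, kernelMean, kernelMean, kernelIntegral, kernelIntegral,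
      div_mul_eq_mul_div, ← sub_div, ← integral_mul_const, ← integral_sub int_f
      (int_one.mul_const _)]
    congr 2 with ξ
    ring
  rw [deviation, abs_div, abs_of_pos hrp, div_le_iff₀ hrp]
  refine (norm_integral_sub_mul_kernel_le h hz
    (hf.integrableOn_compact_subset hsub (isCompact_closedBall _ _)) hr).trans_eq ?_
  rw [setAverage_eq, volume_real_closedBall z (by positivity), smul_eq_mul, mul_pow]
  field_simp

lemma ae_tendsto_setAverage_norm_sub {g : Cn n → ℝ} (hg : LocallyIntegrable g) (hC : 0 < C) :
    ∀ᵐ z, Tendsto (fun r => ⨍ ξ in closedBall z (C * r), ‖g ξ - g z‖) (𝓝[>] 0) (𝓝 0) := by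
  filter_upwards [IsUnifLocDoublingMeasure.ae_tendsto_average_norm_sub volume hg 1] with z hz
  refine hz (fun _ => z) (fun r => C * r) (tendsto_nhdsWithin_iff.2 ⟨?_, ?_⟩) ?_
  · simpa using tendsto_nhdsGT_zero_of_continuous (continuous_const_mul C)
  · exact eventually_of_mem self_mem_nhdsWithin fun r (hr : 0 < r) => mul_pos hC hr
  · refine eventually_of_mem self_mem_nhdsWithin fun r (hr : 0 < r) => mem_closedBall_self ?_
    positivity

lemma ae_tendsto_setAverage_norm_sub_of_mem (hf : LocallyIntegrableOn f D volume)
    (hD : IsOpen D) (hDb : Bornology.IsBounded D) (hDc : Dᶜ.Nonempty) (hC : 0 < C) :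
    ∀ᵐ z, z ∈ D →
      Tendsto (fun r => ⨍ ξ in closedBall z (C * r), ‖f ξ - f z‖) (𝓝[>] 0) (𝓝 0) := by
  set K : ℕ → Set (Cn n) := fun m => {z | 1 / ((m : ℝ) + 1) ≤ infDist z Dᶜ}
  have compact (m : ℕ) : IsCompact (K m) := isCompact_le_infDist_compl hDb (by positivity)
  have subset (m : ℕ) : K m ⊆ D := subset_of_le_infDist_compl (by positivity)
  have integrable (m : ℕ) : LocallyIntegrable ((K m).indicator f) :=
    ((integrable_indicator_iff (compact m).measurableSet).2
      (hf.integrableOn_compact_subset (subset m) (compact m))).locallyIntegrable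
  filter_upwards [ae_all_iff.2 fun m => ae_tendsto_setAverage_norm_sub (integrable m) hC]
    with z lebesgue hz
  have hpos : 0 < infDist z Dᶜ :=
    (hD.isClosed_compl.notMem_iff_infDist_pos hDc).1 (Set.notMem_compl_iff.2 hz)
  obtain ⟨m, hm⟩ := exists_nat_one_div_lt hpos
  have interior : K m ∈ 𝓝 z := mem_of_superset
    ((isOpen_lt continuous_const (continuous_infDist_pt _)).mem_nhds hm)
    fun ξ (hξ : _ < infDist ξ Dᶜ) => hξ.le
  obtain ⟨ρ, hρ, ball_subset⟩ := nhds_basis_closedBall.mem_iff.1 interior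
  refine (lebesgue m).congr' ?_
  filter_upwards [Ioo_mem_nhdsGT (show 0 < ρ / C by positivity)] with r hr
  have hsub : closedBall z (C * r) ⊆ K m :=
    (closedBall_subset_closedBall ((lt_div_iff₀' hC).1 hr.2).le).trans ball_subset
  rw [setAverage_eq, setAverage_eq]
  congr 1
  refine setIntegral_congr_fun measurableSet_closedBall fun ξ hξ => ?_
  rw [Set.indicator_of_mem (hsub hξ), Set.indicator_of_mem (mem_of_mem_nhds interior)]

lemma preciseRep_ae_eq (h : A.DualFormBounds R C) (hf : A.IsNonnegSuperharmonic D F f)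
    (hD : IsOpen D) (hDb : Bornology.IsBounded D) (hDc : Dᶜ.Nonempty)
    (hDR : D ⊆ closedBall 0 R) : ∀ᵐ z, z ∈ D → A.preciseRep f z = f z := by
  have hC := zero_lt_one.trans_le h.one_le
  filter_upwards [ae_tendsto_setAverage_norm_sub_of_mem hf.locallyIntegrableOn hD hDb hDc hC]
    with z lebesgue hz
  have hpos : 0 < infDist z Dᶜ :=
    (hD.isClosed_compl.notMem_iff_infDist_pos hDc).1 (Set.notMem_compl_iff.2 hz)
  have lim : Tendsto (A.kernelMean f z) (𝓝[>] 0) (𝓝 (A.kernelMass z * f z)) := by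
    rw [tendsto_iff_norm_sub_tendsto_zero]
    refine squeeze_zero' (.of_forall fun _ => norm_nonneg _) ?_
      (by simpa only [mul_zero] using (lebesgue hz).const_mul (C ^ (2 * n) * unitBallVolume n))
    filter_upwards [Ioo_mem_nhdsGT (show 0 < infDist z Dᶜ / C by positivity)] with r hr
    exact abs_kernelMean_sub_le h (hDR hz) hf.locallyIntegrableOn hr.1
      (closedBall_subset_of_lt_infDist_compl ((lt_div_iff₀' hC).1 hr.2))
  rw [preciseRep, tendsto_nhds_unique (tendsto_kernelMean h hf hD hDc hDR hz) lim,
    mul_div_cancel_left₀ _ (kernelMass_pos h (hDR hz)).ne']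

lemma eventually_preciseRep_bounds (hf : A.IsNonnegSuperharmonic D F f) (hD : IsOpen D)
    (hDb : Bornology.IsBounded D) (hDc : Dᶜ.Nonempty) (hz : z ∈ D) :
    ∃ K, 1 ≤ K ∧ ∀ᶠ w in 𝓝 z,
      A.preciseRep f w ≤ (1 + K * (2 * √‖z - w‖)) * A.preciseRep f z + K * F * ‖z - w‖ ∧
      (A.preciseRep f z - K * F * ‖z - w‖) / (1 + K * (2 * √‖z - w‖)) ≤ A.preciseRep f w := by
  obtain ⟨R, hDR⟩ := hDb.subset_closedBall 0
  obtain ⟨K, hK, harnack⟩ := A.exists_preciseRep_le R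
  have harnack := harnack D f F hD hDc hDR hf
  have hpos : 0 < infDist z Dᶜ :=
    (hD.isClosed_compl.notMem_iff_infDist_pos hDc).1 (Set.notMem_compl_iff.2 hz)
  have small : ∀ᶠ w in 𝓝 z, √‖z - w‖ < min 1 (infDist z Dᶜ / 2) / K := by
    have cont : Continuous fun w => √‖z - w‖ := by fun_prop
    refine (cont.tendsto z).eventually_lt_const ?_
    rw [sub_self, norm_zero, Real.sqrt_zero]
    positivity
  refine ⟨K, hK, small.mono fun w hw => ?_⟩
  rcases eq_or_ne z w with rfl | hne
  · simp
  rw [lt_div_iff₀' (by positivity), lt_min_iff] at hw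
  set r := √‖z - w‖
  have hr : 0 < r := Real.sqrt_pos.2 (norm_pos_iff.2 (sub_ne_zero.2 hne))
  have sq_r : r * r = ‖z - w‖ := Real.mul_self_sqrt (norm_nonneg _)
  have r_le : r ≤ K * r := le_mul_of_one_le_left hr.le hK
  have dist_le : ‖z - w‖ ≤ r := by nlinarith
  have quotient : ‖z - w‖ / r = r := by rw [← sq_r, mul_div_cancel_right₀ _ hr.ne']
  have dist_w : infDist z Dᶜ ≤ infDist w Dᶜ + ‖z - w‖ := by
    rw [← dist_eq_norm]
    exact infDist_le_infDist_add_dist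
  have hwD : w ∈ D := mem_of_norm_sub_lt_infDist_compl (z := z) (by linarith)
  have upper := harnack z hz w r hr hw.1.le dist_le (by linarith)
  have lower := harnack w hwD z r hr hw.1.le (by rwa [norm_sub_rev]) (by linarith)
  rw [norm_sub_rev w z] at lower
  rw [quotient, ← two_mul, sq, sq_r] at upper lower
  refine ⟨upper, ?_⟩
  rw [div_le_iff₀ (by positivity)]
  linarith

lemma continuousOn_preciseRep (hf : A.IsNonnegSuperharmonic D F f) (hD : IsOpen D)
    (hDb : Bornology.IsBounded D) (hDc : Dᶜ.Nonempty) : ContinuousOn (A.preciseRep f) D := by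
  intro z hz
  obtain ⟨K, hK, bounds⟩ := eventually_preciseRep_bounds hf hD hDb hDc hz
  have cont_upper : Continuous fun w =>
      (1 + K * (2 * √‖z - w‖)) * A.preciseRep f z + K * F * ‖z - w‖ := by fun_prop
  have cont_lower : Continuous fun w =>
      (A.preciseRep f z - K * F * ‖z - w‖) / (1 + K * (2 * √‖z - w‖)) :=
    .div (by fun_prop) (by fun_prop) fun w => by positivity
  refine ContinuousAt.continuousWithinAt (tendsto_of_tendsto_of_tendsto_of_le_of_le'
    (cont_lower.tendsto' z _ ?_) (cont_upper.tendsto' z _ ?_)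
    (bounds.mono fun _ h => h.2) (bounds.mono fun _ h => h.1)) <;> simp

end AlphaForm

/-! ### Subharmonic functions -/

section Subharmonic

variable {n : ℕ} {A : AlphaForm n} {D : Set (Cn n)} {u v b φ : Cn n → ℝ} {z : Cn n} {c : ℝ}

lemma nhdsWithin_neBot_of_measure_diff_eq_zero {S : Set (Cn n)}
    (h : ∃ N ∈ 𝓝 z, volume (N \ S) = 0) : (𝓝[S] z).NeBot := by
  obtain ⟨N, hN, hnull⟩ := h
  rw [← mem_closure_iff_nhdsWithin_neBot, mem_closure_iff_nhds]
  intro t ht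
  by_contra hdisj
  have hsub : t ∩ N ⊆ N \ S := fun x hx => ⟨hx.2, fun hxS => hdisj ⟨x, hx.1, hxS⟩⟩
  exact (Measure.measure_pos_of_mem_nhds volume (inter_mem ht hN)).ne'
    (measure_mono_null hsub hnull)

lemma measure_diff_eq_zero_of_ae (hD : IsOpen D) (hz : z ∈ D) {p : Cn n → Prop}
    (h : ∀ᵐ x, x ∈ D → p x) : ∃ N ∈ 𝓝 z, volume (N \ {x | p x}) = 0 :=
  ⟨D, hD.mem_nhds hz, measure_mono_null
    (fun x hx => show ¬(x ∈ D → p x) from fun himp => hx.2 (himp hx.1)) h⟩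

lemma le_of_ae_le_of_continuousOn (hD : IsOpen D) (hv : ContinuousOn v D) (hb : ContinuousOn b D)
    (h : ∀ᵐ x, x ∈ D → v x ≤ b x) (hz : z ∈ D) : v z ≤ b z := by
  have := nhdsWithin_neBot_of_measure_diff_eq_zero (measure_diff_eq_zero_of_ae hD hz h)
  exact le_of_tendsto_of_tendsto
    ((hv.continuousAt (hD.mem_nhds hz)).mono_left (nhdsWithin_le_nhds (s := {x | v x ≤ b x})))
    ((hb.continuousAt (hD.mem_nhds hz)).mono_left nhdsWithin_le_nhds) self_mem_nhdsWithin

lemma limsup_coe_of_continuousOn (hD : IsOpen D) (hv : ContinuousOn v D) (hz : z ∈ D)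
    {S : Set (Cn n)} (hS : ∃ N ∈ 𝓝 z, volume (N \ S) = 0) :
    limsup (fun x => (v x : EReal)) (𝓝[S] z) = v z := by
  have := nhdsWithin_neBot_of_measure_diff_eq_zero hS
  exact (((continuous_coe_real_ereal.tendsto (v z)).comp
    (hv.continuousAt (hD.mem_nhds hz))).mono_left nhdsWithin_le_nhds).limsup_eq

lemma IsDistSubharmonic.isAlphaSubharmonic (h : IsDistSubharmonic A D v) (hD : IsOpen D)
    (hv : ContinuousOn v D) : IsAlphaSubharmonic A D v := by
  refine ⟨fun _ _ => EReal.coe_ne_top _,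
    (continuous_coe_real_ereal.comp_continuousOn hv).upperSemicontinuousOn,
    fun z hz S hS => limsup_coe_of_continuousOn hD hv hz hS, ?_, fun φ h₁ h₂ h₃ hφ => ?_⟩
  · simpa only [EReal.toReal_coe] using hv.locallyIntegrableOn hD.measurableSet
  · have test : IsTestFunction D φ := ⟨h₁, h₂, h₃⟩
    simp only [EReal.toReal_coe]
    rw [setIntegral_mul_of_tsupport_subset (test.tsupport_op_subset A)]
    exact h φ test hφ

namespace IsAlphaSubharmonic

lemma locallyIntegrableOn (h : IsAlphaSubharmonic A D u) : LocallyIntegrableOn u D volume := by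
  simpa only [EReal.toReal_coe] using h.2.2.2.1

lemma isDistSubharmonic (h : IsAlphaSubharmonic A D u) : IsDistSubharmonic A D u := by
  intro φ test hφ
  have pos := h.2.2.2.2 φ test.contDiff test.hasCompactSupport test.tsupport_subset hφ
  simp only [EReal.toReal_coe] at pos
  rwa [setIntegral_mul_of_tsupport_subset (test.tsupport_op_subset A)] at pos

lemma le_of_ae_le (h : IsAlphaSubharmonic A D u) (hD : IsOpen D) (hv : ContinuousOn v D)
    (hle : ∀ᵐ x, x ∈ D → u x ≤ v x) (hz : z ∈ D) : u z ≤ v z := by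
  have full := measure_diff_eq_zero_of_ae hD hz hle
  refine EReal.coe_le_coe_iff.1 ?_
  calc (u z : EReal) = limsup (fun x => (u x : EReal)) (𝓝[{x | u x ≤ v x}] z) :=
        (h.2.2.1 z hz _ full).symm
    _ ≤ limsup (fun x => (v x : EReal)) (𝓝[{x | u x ≤ v x}] z) :=
        limsup_le_limsup (eventually_mem_nhdsWithin.mono fun _ hx => EReal.coe_le_coe_iff.2 hx)
    _ = v z := limsup_coe_of_continuousOn hD hv hz full

end IsAlphaSubharmonic

lemma alphaOpR_const (A : AlphaForm n) (c : ℝ) (z : Cn n) : alphaOpR A (fun _ => c) z = 0 := by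
  rw [alphaOpR_eq_leviTrace A contDiff_const, fderiv_fun_const, Pi.zero_def, fderiv_fun_const,
    Pi.zero_apply, map_zero]

lemma alphaOpR_sum (A : AlphaForm n) {ι : Type*} (s : Finset ι) {g : ι → Cn n → ℝ}
    (hg : ∀ i, ContDiff ℝ 2 (g i)) (z : Cn n) :
    alphaOpR A (fun w => ∑ i ∈ s, g i w) z = ∑ i ∈ s, alphaOpR A (g i) z := by
  induction s using Finset.cons_induction with
  | empty => simpa only [Finset.sum_empty] using alphaOpR_const A 0 z
  | cons i s hi ih =>
    simp only [Finset.sum_cons]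
    rw [← ih]
    exact alphaOpR_add A (hg i) (ContDiff.sum fun j _ => hg j) z

lemma alphaOpR_clm_sq_nonneg (A : AlphaForm n) (l : Cn n →L[ℝ] ℝ) (z : Cn n) :
    0 ≤ alphaOpR A (fun w => l w ^ 2) z := by
  have vanish : alphaOpR A (fun w => l w) z = 0 := by
    have hess : fderiv ℝ (fderiv ℝ fun w => l w) z = 0 := by
      rw [funext fun w => l.fderiv (x := w), fderiv_fun_const, Pi.zero_apply]
    rw [alphaOpR_eq_leviTrace A l.contDiff, hess, map_zero]
  have second : deriv (deriv fun t : ℝ => t ^ 2) (l z) = 2 := by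
    have first : (deriv fun t : ℝ => t ^ 2) = fun t => 2 * t := by ext; simp
    rw [first]
    exact ((hasDerivAt_id (l z)).const_mul 2).deriv.trans (mul_one 2)
  rw [alphaOpR_comp A (φ := fun w => l w) (Θ := fun t => t ^ 2) l.contDiff (contDiff_id.pow 2),
    vanish, second, mul_zero, zero_add]
  exact mul_nonneg zero_le_two (A.leviTrace_rankOneForm_nonneg _ _)

/-- The real part of the `i`-th coordinate as a real linear form. -/
noncomputable def reCoord (i : Fin n) : Cn n →L[ℝ] ℝ :=
  reCLM.comp (ContinuousLinearMap.proj i)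

/-- The imaginary part of the `i`-th coordinate as a real linear form. -/
noncomputable def imCoord (i : Fin n) : Cn n →L[ℝ] ℝ :=
  imCLM.comp (ContinuousLinearMap.proj i)

lemma sqNorm_eq_sum_coord :
    (sqNorm : Cn n → ℝ) = fun z => ∑ i, (reCoord i z ^ 2 + imCoord i z ^ 2) := by
  ext z
  simp [sqNorm, normSq_apply, reCoord, imCoord, pow_two]

lemma contDiff_sqNorm : ContDiff ℝ 2 (sqNorm : Cn n → ℝ) := by
  rw [sqNorm_eq_sum_coord]
  exact ContDiff.sum fun i _ => ((reCoord i).contDiff.pow 2).add ((imCoord i).contDiff.pow 2)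

lemma alphaOpR_sqNorm_nonneg (A : AlphaForm n) (z : Cn n) : 0 ≤ alphaOpR A sqNorm z := by
  have hre (i : Fin n) : ContDiff ℝ 2 fun w => reCoord i w ^ 2 := (reCoord i).contDiff.pow 2
  have him (i : Fin n) : ContDiff ℝ 2 fun w => imCoord i w ^ 2 := (imCoord i).contDiff.pow 2
  rw [sqNorm_eq_sum_coord, alphaOpR_sum A _ fun i => (hre i).add (him i)]
  refine Finset.sum_nonneg fun i _ => ?_
  exact (add_nonneg (alphaOpR_clm_sq_nonneg A _ z) (alphaOpR_clm_sq_nonneg A _ z)).trans_eq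
    (alphaOpR_add A (hre i) (him i) z).symm

lemma isDistSubharmonic_of_contDiff (hv : ContDiff ℝ 2 v) (h : ∀ z, 0 ≤ alphaOpR A v z) :
    IsDistSubharmonic A D v := by
  intro φ test hφ
  rw [A.integral_mul_alphaOpR_comm hv test.contDiff_two test.hasCompactSupport]
  exact integral_nonneg fun z => mul_nonneg (hφ z) (h z)

namespace IsDistSubharmonic

lemma add (hu : IsDistSubharmonic A D u) (hv : IsDistSubharmonic A D v)
    (hu' : LocallyIntegrableOn u D volume) (hv' : LocallyIntegrableOn v D volume) :
    IsDistSubharmonic A D fun z => u z + v z := by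
  intro φ test hφ
  simp only [add_mul]
  rw [integral_add (test.integrable_mul_op A hu') (test.integrable_mul_op A hv')]
  exact add_nonneg (hu φ test hφ) (hv φ test hφ)

lemma const_mul (hu : IsDistSubharmonic A D u) (hc : 0 ≤ c) :
    IsDistSubharmonic A D fun z => c * u z := by
  intro φ test hφ
  simp only [mul_assoc, integral_const_mul]
  exact mul_nonneg hc (hu φ test hφ)

lemma sub_const (hu : IsDistSubharmonic A D u) (hu' : LocallyIntegrableOn u D volume) (c : ℝ) :
    IsDistSubharmonic A D fun z => u z - c :=
  hu.add (isDistSubharmonic_of_contDiff contDiff_const fun z => (alphaOpR_const A (-c) z).ge) hu'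
    (continuous_const.locallyIntegrable.locallyIntegrableOn D)

lemma of_sub_mul_sqNorm (hu : IsDistSubharmonic A D fun z => u z - c * sqNorm z) (hc : 0 ≤ c)
    (hu' : LocallyIntegrableOn u D volume) : IsDistSubharmonic A D u := by
  have hsq : LocallyIntegrableOn (fun z => c * sqNorm z) D volume :=
    (contDiff_sqNorm.continuous.const_mul c).locallyIntegrable.locallyIntegrableOn D
  simpa only [sub_add_cancel] using hu.add
    ((isDistSubharmonic_of_contDiff contDiff_sqNorm (alphaOpR_sqNorm_nonneg A)).const_mul hc)
    (hu'.sub hsq) hsq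

end IsDistSubharmonic

lemma IsTestFunction.integral_mul_op_congr (test : IsTestFunction D φ)
    (h : ∀ᵐ x, x ∈ D → u x = v x) :
    ∫ x, u x * alphaOpR A φ x = ∫ x, v x * alphaOpR A φ x := by
  refine integral_congr_ae (h.mono fun x hx => ?_)
  by_cases hxD : x ∈ D
  · exact congrArg (· * alphaOpR A φ x) (hx hxD)
  · have vanish : alphaOpR A φ x = 0 :=
      image_eq_zero_of_notMem_tsupport fun hmem => hxD (test.tsupport_op_subset A hmem)
    simp only [vanish, mul_zero]

end Subharmonic

namespace AlphaForm

variable {n : ℕ} {A : AlphaForm n} {D : Set (Cn n)} {v : Cn n → ℝ} {F : ℝ}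

lemma isNonnegSuperharmonic_indicator_neg (hD : IsOpen D) (hv : LocallyIntegrableOn v D volume)
    (hneg : ∀ z ∈ D, v z ≤ 0) (hF : 0 ≤ F)
    (hop : ∀ φ, IsTestFunction D φ → (∀ z, 0 ≤ φ z) →
      0 ≤ ∫ z, v z * alphaOpR A φ z ∧ ∫ z, v z * alphaOpR A φ z ≤ F * ∫ z, φ z) :
    A.IsNonnegSuperharmonic D F (D.indicator fun z => -v z) := by
  have integral_eq {φ} (test : IsTestFunction D φ) :
      ∫ z, D.indicator (fun z => -v z) z * alphaOpR A φ z = -∫ z, v z * alphaOpR A φ z := by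
    rw [test.integral_mul_op_congr (v := fun z => -v z)
      (.of_forall fun z hz => Set.indicator_of_mem hz _)]
    simp only [neg_mul, integral_neg]
  refine ⟨?_, Set.indicator_nonneg fun z hz => neg_nonneg.2 (hneg z hz), hF,
    fun φ test hφ => ?_, fun φ test hφ => ?_⟩
  · rw [locallyIntegrableOn_iff hD.isLocallyClosed]
    exact fun k hkD hk => (hv.integrableOn_compact_subset hkD hk).neg.congr_fun
      (fun z hz => (Set.indicator_of_mem (hkD hz) _).symm) hk.measurableSet
  · exact (integral_eq test).trans_le (neg_nonpos.2 (hop φ test hφ).1)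
  · exact (neg_le_neg (hop φ test hφ).2).trans_eq (integral_eq test).symm

/-- `v` satisfies the Harnack inequality with constants `K` and `F` inside `D`. -/
def HarnackOn (D : Set (Cn n)) (K F : ℝ) (v : Cn n → ℝ) : Prop :=
  ∀ z ∈ D, ∀ w r, 0 < r → K * r ≤ 1 → ‖z - w‖ ≤ r → K * r ≤ infDist z Dᶜ →
    v w ≤ (1 + K * (r + ‖z - w‖ / r)) * v z + K * F * r ^ 2

lemma exists_isAlphaSubharmonic_between (A : AlphaForm n) (R : ℝ) : ∃ K, 1 ≤ K ∧
    ∀ (D : Set (Cn n)) (u b : Cn n → ℝ) (F c : ℝ), IsOpen D → Dᶜ.Nonempty → D ⊆ closedBall 0 R →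
      IsAlphaSubharmonic A D u → ContDiff ℝ 2 b → (∀ z ∈ D, u z - c ≤ b z) → (∀ z ∈ D, b z < 0) →
      (∀ z ∈ D, |alphaOpR A b z| ≤ F) → 0 ≤ F →
      ∃ v, IsAlphaSubharmonic A D v ∧ (∀ z ∈ D, u z - c ≤ v z ∧ v z ≤ b z) ∧
        HarnackOn D K F fun z => -v z := by
  obtain ⟨C, bounds⟩ := A.exists_dualFormBounds R
  obtain ⟨K, hK, harnack⟩ := A.exists_preciseRep_le R
  refine ⟨K, hK, fun D u b F c hD hDc hDR hu hb hub hb_neg hF hF₀ => ?_⟩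
  have hDb : Bornology.IsBounded D := isBounded_closedBall.subset hDR
  have shift_int : LocallyIntegrableOn (fun z => u z - c) D volume :=
    hu.locallyIntegrableOn.sub (continuous_const.locallyIntegrable.locallyIntegrableOn D)
  obtain ⟨v₀, v₀_int, v₀_mem, v₀_op⟩ := exists_obstacle_solution A hD hDb hDc shift_int
    (hu.isDistSubharmonic.sub_const hu.locallyIntegrableOn c) hb hub hF₀ hF
  have super := isNonnegSuperharmonic_indicator_neg hD v₀_int
    (fun z hz => (v₀_mem z hz).2.trans (hb_neg z hz).le) hF₀ v₀_op
  set v : Cn n → ℝ := fun z => -A.preciseRep (D.indicator fun z => -v₀ z) z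
  have v_cont : ContinuousOn v D := (continuousOn_preciseRep super hD hDb hDc).neg
  have v_ae : ∀ᵐ z, z ∈ D → v z = v₀ z := by
    filter_upwards [preciseRep_ae_eq bounds super hD hDb hDc hDR] with z hz hzD
    rw [← neg_neg (v₀ z), ← Set.indicator_of_mem hzD fun z => -v₀ z, ← hz hzD]
  have v_dist : IsDistSubharmonic A D v := fun φ test hφ =>
    (v₀_op φ test hφ).1.trans_eq (test.integral_mul_op_congr v_ae).symm
  refine ⟨v, v_dist.isAlphaSubharmonic hD v_cont, fun z hz => ⟨?_, ?_⟩, ?_⟩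
  · refine sub_le_iff_le_add.2 (hu.le_of_ae_le hD (v_cont.add continuousOn_const) ?_ hz)
    filter_upwards [v_ae] with x hx hxD
    rw [Pi.add_apply, hx hxD]
    exact sub_le_iff_le_add.1 (v₀_mem x hxD).1
  · refine le_of_ae_le_of_continuousOn hD v_cont hb.continuous.continuousOn ?_ hz
    filter_upwards [v_ae] with x hx hxD
    exact (hx hxD).trans_le (v₀_mem x hxD).2
  · simpa only [HarnackOn, v, neg_neg] using harnack D _ F hD hDc hDR super

end AlphaForm

/-! ### Hölder majorants, mollification and barriers -/

section Holder

variable {E : Type*} [SeminormedAddCommGroup E] {D K S : Set E} {f ψ : E → ℝ}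
  {C C₁ H l l₁ μ P : ℝ} {x y z w w' : E}

/-- `f` is Hölder continuous on `S`. -/
def IsHolderOn (S : Set E) (f : E → ℝ) : Prop :=
  ∃ C > (0 : ℝ), ∃ l : ℝ, 0 < l ∧ l ≤ 1 ∧ ∀ z ∈ S, ∀ w ∈ S, |f z - f w| ≤ C * ‖z - w‖ ^ l

/-- `f` takes the values `ψ` on `K` at a Hölder rate: near `K`, it differs from the value of `ψ` at
a closest point of `K` by at most a constant times a power of the distance to `K`. -/
def HasHolderTrace (K : Set E) (ψ f : E → ℝ) : Prop :=
  ∃ C > (0 : ℝ), ∃ l : ℝ, 0 < l ∧ l ≤ 1 ∧ ∃ U : Set E, IsOpen U ∧ K ⊆ U ∧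
    ∀ z ∈ U, ∀ w ∈ K, dist z w = infDist z K → |f z - ψ w| ≤ C * infDist z K ^ l

lemma continuousOn_of_abs_sub_le (hl : 0 < l)
    (h : ∀ z ∈ S, ∀ w ∈ S, |f z - f w| ≤ C * ‖z - w‖ ^ l) : ContinuousOn f S := by
  intro w hw
  rw [ContinuousWithinAt, tendsto_iff_norm_sub_tendsto_zero]
  have majorant : Continuous fun z => C * ‖z - w‖ ^ l :=
    continuous_const.mul ((continuous_id.sub continuous_const).norm.rpow_const fun _ => .inr hl.le)
  have limit : Tendsto (fun z => C * ‖z - w‖ ^ l) (𝓝[S] w) (𝓝 0) := by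
    have := (majorant.tendsto w).mono_left (nhdsWithin_le_nhds (s := S))
    rwa [sub_self, norm_zero, Real.zero_rpow hl.ne', mul_zero] at this
  exact squeeze_zero' (.of_forall fun _ => norm_nonneg _)
    (eventually_mem_nhdsWithin.mono fun z hz => h z hz w hw) limit

lemma IsHolderOn.exists_neg_le (h : IsHolderOn K ψ) (hK : IsCompact K) :
    ∃ P, 0 ≤ P ∧ ∀ w ∈ K, -P ≤ ψ w := by
  obtain ⟨C, -, l, hl, -, hψ⟩ := h
  obtain ⟨P, hP⟩ := hK.exists_bound_of_continuousOn (continuousOn_of_abs_sub_le hl hψ)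
  exact ⟨max P 0, le_max_right _ _, fun w hw =>
    neg_le.1 ((neg_le_abs _).trans ((hP w hw).trans (le_max_left _ _)))⟩

lemma norm_sub_le_two_mul_of_dist_eq_infDist (hw : w ∈ K) (hw' : dist z w' = infDist z K) :
    ‖w' - w‖ ≤ 2 * ‖z - w‖ := by
  have closest : dist z w' ≤ dist z w := hw'.trans_le (infDist_le_dist_of_mem hw)
  have triangle : dist w' w ≤ dist z w' + dist z w := dist_triangle_left _ _ _
  simp only [← dist_eq_norm]
  linarith

lemma le_weight_add_of_norm_sub_le_one (hμ : 0 < μ) (hl : μ ≤ l) (hl₁ : μ ≤ l₁) (hl₁_le : l₁ ≤ 1)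
    (hC : 0 ≤ C) (hC₁ : 0 ≤ C₁) (hw : w ∈ K) (hw' : dist z w' = infDist z K) (hs : ‖z - w‖ ≤ 1)
    (hf : |f z - ψ w'| ≤ C * infDist z K ^ l) (hψ : |ψ w' - ψ w| ≤ C₁ * ‖w' - w‖ ^ l₁) :
    f z ≤ ψ w + (C + 2 * C₁) * ‖z - w‖ ^ μ := by
  have power {p : ℝ} (hp : μ ≤ p) : ‖z - w‖ ^ p ≤ ‖z - w‖ ^ μ :=
    Real.rpow_le_rpow_of_exponent_ge' (norm_nonneg _) hs hμ.le hp
  have to_closest : infDist z K ^ l ≤ ‖z - w‖ ^ μ := by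
    refine (Real.rpow_le_rpow infDist_nonneg ?_ (hμ.le.trans hl)).trans (power hl)
    simpa only [dist_eq_norm] using infDist_le_dist_of_mem hw
  have two_rpow : (2 : ℝ) ^ l₁ ≤ 2 := by
    simpa only [Real.rpow_one] using Real.rpow_le_rpow_of_exponent_le one_le_two hl₁_le
  have across : ‖w' - w‖ ^ l₁ ≤ 2 * ‖z - w‖ ^ μ := by
    calc ‖w' - w‖ ^ l₁ ≤ (2 * ‖z - w‖) ^ l₁ := Real.rpow_le_rpow (norm_nonneg _)
          (norm_sub_le_two_mul_of_dist_eq_infDist hw hw') (hμ.le.trans hl₁)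
      _ = 2 ^ l₁ * ‖z - w‖ ^ l₁ := Real.mul_rpow zero_le_two (norm_nonneg _)
      _ ≤ 2 * ‖z - w‖ ^ μ := mul_le_mul two_rpow (power hl₁) (by positivity) zero_le_two
  have := mul_le_mul_of_nonneg_left to_closest hC
  have := mul_le_mul_of_nonneg_left across hC₁
  linarith [le_of_abs_le hf, le_of_abs_le hψ]

lemma exists_le_weight_add_mul_rpow (hK : IsCompact K) (hψ : IsHolderOn K ψ)
    (hψP : ∀ w ∈ K, -P ≤ ψ w) (hP : 0 ≤ P) (hf : ∀ z ∈ D, f z ≤ 0) (htrace : HasHolderTrace K ψ f) :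
    ∃ H μ : ℝ, 0 ≤ H ∧ 0 < μ ∧ μ ≤ 1 ∧ ∀ z ∈ D, ∀ w ∈ K, f z ≤ ψ w + H * ‖z - w‖ ^ μ := by
  obtain ⟨C₁, hC₁, l₁, hl₁, hl₁_le, hψ⟩ := hψ
  obtain ⟨C, hC, l, hl, hl_le, U, hU, hKU, htrace⟩ := htrace
  obtain ⟨η, hη, thickening_subset⟩ := hK.exists_thickening_subset_open hU hKU
  set μ := min l l₁
  have hμ : 0 < μ := lt_min hl hl₁
  set s := min η 1
  have hs : 0 < s := lt_min hη one_pos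
  have hsμ : 0 < s ^ μ := Real.rpow_pos_of_pos hs _
  have hPs : 0 ≤ P / s ^ μ := by positivity
  refine ⟨C + 2 * C₁ + P / s ^ μ, μ, by positivity, hμ, (min_le_left _ _).trans hl_le,
    fun z hz w hw => ?_⟩
  have hpow : 0 ≤ ‖z - w‖ ^ μ := by positivity
  rcases lt_or_ge ‖z - w‖ s with near | far
  · have hzU : z ∈ U := thickening_subset (mem_thickening_iff.2
      ⟨w, hw, (dist_eq_norm z w).trans_lt (near.trans_le (min_le_left _ _))⟩)
    obtain ⟨w', hw', hdist⟩ := hK.exists_infDist_eq_dist ⟨w, hw⟩ z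
    have := le_weight_add_of_norm_sub_le_one hμ (min_le_left _ _) (min_le_right _ _) hl₁_le hC.le
      hC₁.le hw hdist.symm (near.le.trans (min_le_right _ _)) (htrace z hzU w' hw' hdist.symm)
      (hψ w' hw' w hw)
    linarith [mul_nonneg hPs hpow]
  · have : P ≤ P / s ^ μ * ‖z - w‖ ^ μ := by
      rw [div_mul_eq_mul_div, le_div_iff₀ hsμ]
      exact mul_le_mul_of_nonneg_left (Real.rpow_le_rpow hs.le far hμ.le) hP
    have : 0 ≤ (C + 2 * C₁) * ‖z - w‖ ^ μ := by positivity
    linarith [hψP w hw, hf z hz]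

/-- The largest function which is Hölder continuous with constant `H` and exponent `μ` and at most
`ψ` on `K`. -/
noncomputable def holderHull (K : Set E) (ψ : E → ℝ) (H μ : ℝ) (x : E) : ℝ :=
  ⨅ w : K, (ψ w + H * ‖x - w‖ ^ μ)

lemma neg_le_weight_add (hH : 0 ≤ H) (hψ : ∀ w ∈ K, -P ≤ ψ w) (x : E) (w : K) :
    -P ≤ ψ w + H * ‖x - w‖ ^ μ :=
  (hψ w w.2).trans (le_add_of_nonneg_right (by positivity))

lemma holderHull_le (hH : 0 ≤ H) (hψ : ∀ w ∈ K, -P ≤ ψ w) (x : E) (hw : w ∈ K) :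
    holderHull K ψ H μ x ≤ ψ w + H * ‖x - w‖ ^ μ :=
  ciInf_le ⟨-P, Set.forall_mem_range.2 (neg_le_weight_add hH hψ x)⟩ (⟨w, hw⟩ : K)

lemma holderHull_le_add (hne : K.Nonempty) (hH : 0 ≤ H) (hψ : ∀ w ∈ K, -P ≤ ψ w) (hμ : 0 ≤ μ)
    (hμ_le : μ ≤ 1) (x y : E) :
    holderHull K ψ H μ x ≤ holderHull K ψ H μ y + H * ‖x - y‖ ^ μ := by
  have := hne.to_subtype
  refine sub_le_iff_le_add.1 (le_ciInf fun w => sub_le_iff_le_add.2 ?_)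
  have subadd : ‖x - w‖ ^ μ ≤ ‖y - w‖ ^ μ + ‖x - y‖ ^ μ := by
    refine (Real.rpow_le_rpow (norm_nonneg _) ?_ hμ).trans
      (Real.rpow_add_le_add_rpow (norm_nonneg _) (norm_nonneg _) hμ hμ_le)
    rw [add_comm]
    exact norm_sub_le_norm_sub_add_norm_sub _ _ _
  linarith [holderHull_le (μ := μ) hH hψ x w.2, mul_le_mul_of_nonneg_left subadd hH]

/-- `Ψ` is a global Hölder majorant of `f` on `D`, with values in `[-P, 0]`, which does not exceed
the weight `ψ` on `K`. -/
structure IsHolderMajorant (D K : Set E) (ψ f : E → ℝ) (H μ P : ℝ) (Ψ : E → ℝ) : Prop where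
  const_nonneg : 0 ≤ H
  exponent_pos : 0 < μ
  exponent_le_one : μ ≤ 1
  abs_sub_le : ∀ x y, |Ψ x - Ψ y| ≤ H * ‖x - y‖ ^ μ
  nonpos : ∀ x, Ψ x ≤ 0
  neg_le : ∀ x, -P ≤ Ψ x
  le_weight : ∀ w ∈ K, Ψ w ≤ ψ w
  majorizes : ∀ z ∈ D, f z ≤ Ψ z

lemma IsHolderMajorant.continuous {Ψ : E → ℝ} (h : IsHolderMajorant D K ψ f H μ P Ψ) :
    Continuous Ψ :=
  continuousOn_univ.1 (continuousOn_of_abs_sub_le h.exponent_pos fun x _ y _ => h.abs_sub_le x y)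

lemma isHolderMajorant_min_holderHull (hne : K.Nonempty) (hH : 0 ≤ H) (hμ : 0 < μ) (hμ_le : μ ≤ 1)
    (hP : 0 ≤ P) (hψ : ∀ w ∈ K, -P ≤ ψ w) (hf : ∀ z ∈ D, f z ≤ 0)
    (hfψ : ∀ z ∈ D, ∀ w ∈ K, f z ≤ ψ w + H * ‖z - w‖ ^ μ) :
    IsHolderMajorant D K ψ f H μ P fun x => min 0 (holderHull K ψ H μ x) := by
  have := hne.to_subtype
  have hull := holderHull_le_add hne hH hψ hμ.le hμ_le
  refine ⟨hH, hμ, hμ_le, fun x y => ?_, fun x => min_le_left _ _,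
    fun x => le_min (neg_nonpos.2 hP) (le_ciInf (neg_le_weight_add hH hψ x)), fun w hw => ?_,
    fun z hz => le_min (hf z hz) (le_ciInf fun w => hfψ z hz w w.2)⟩
  · refine (abs_min_sub_min_le_max _ _ _ _).trans (max_le ?_ (abs_sub_le_iff.2 ⟨?_, ?_⟩))
    · rw [sub_self, abs_zero]
      positivity
    · exact sub_le_iff_le_add'.2 (hull x y)
    · rw [norm_sub_rev]
      exact sub_le_iff_le_add'.2 (hull y x)
  · refine (min_le_right _ _).trans ((holderHull_le hH hψ w hw).trans_eq ?_)
    rw [sub_self, norm_zero, Real.zero_rpow hμ.ne', mul_zero, add_zero]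

lemma exists_isHolderMajorant (hK : IsCompact K) (hψ : IsHolderOn K ψ) (hψP : ∀ w ∈ K, -P ≤ ψ w)
    (hP : 0 ≤ P) (hf : ∀ z ∈ D, f z ≤ 0) (htrace : HasHolderTrace K ψ f) :
    ∃ (H μ : ℝ) (Ψ : E → ℝ), IsHolderMajorant D K ψ f H μ P Ψ := by
  obtain ⟨H, μ, hH, hμ, hμ_le, hfψ⟩ := exists_le_weight_add_mul_rpow hK hψ hψP hP hf htrace
  rcases K.eq_empty_or_nonempty with rfl | hne
  · refine ⟨H, μ, 0, hH, hμ, hμ_le, fun x y => ?_, fun _ => le_rfl, fun _ => neg_nonpos.2 hP,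
      fun _ hw => hw.elim, hf⟩
    rw [Pi.zero_apply, Pi.zero_apply, sub_self, abs_zero]
    positivity
  · exact ⟨H, μ, _, isHolderMajorant_min_holderHull hne hH hμ hμ_le hP hψP hf hfψ⟩

end Holder

section Mollification

variable {E V W : Type*} [NormedAddCommGroup E] [MeasurableSpace E] [NormedAddCommGroup V]
  [NormedSpace ℝ V] [NormedAddCommGroup W] [NormedSpace ℝ W] {μ : Measure E}

lemma norm_convolution_le (L : V →L[ℝ] ℝ →L[ℝ] W) {f : E → V} (hf : Integrable f μ) {g : E → ℝ}
    {P : ℝ} (hg : ∀ x, |g x| ≤ P) (x : E) :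
    ‖convolution f g L μ x‖ ≤ ‖L‖ * (∫ t, ‖f t‖ ∂μ) * P := by
  calc ‖convolution f g L μ x‖ ≤ ∫ t, ‖f t‖ * (‖L‖ * P) ∂μ := by
        refine norm_integral_le_of_norm_le (hf.norm.mul_const _) (.of_forall fun t => ?_)
        calc ‖L (f t) (g (x - t))‖ ≤ ‖L‖ * ‖f t‖ * ‖g (x - t)‖ := L.le_opNorm₂ _ _
          _ ≤ ‖L‖ * ‖f t‖ * P := mul_le_mul_of_nonneg_left (hg _) (by positivity)
          _ = ‖f t‖ * (‖L‖ * P) := by ring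
    _ = ‖L‖ * (∫ t, ‖f t‖ ∂μ) * P := by rw [integral_mul_const]; ring

set_option maxSynthPendingDepth 3 in
lemma exists_norm_fderiv_fderiv_convolution_le [NormedSpace ℝ E] [BorelSpace E]
    [FiniteDimensional ℝ E] [μ.IsAddHaarMeasure] {k : E → ℝ}
    (hk : ContDiff ℝ 2 k) (hkc : HasCompactSupport k) : ∃ B, 0 ≤ B ∧ ∀ (g : E → ℝ) (P : ℝ),
      Continuous g → (∀ x, |g x| ≤ P) → ∀ x,
        ‖fderiv ℝ (fderiv ℝ (convolution k g (ContinuousLinearMap.lsmul ℝ ℝ) μ)) x‖ ≤ B * P := by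
  set L : ℝ →L[ℝ] ℝ →L[ℝ] ℝ := ContinuousLinearMap.lsmul ℝ ℝ
  have hk' : ContDiff ℝ 1 (fderiv ℝ k) := hk.fderiv_right (by norm_num)
  refine ⟨‖(L.precompL E).precompL E‖ * ∫ t, ‖fderiv ℝ (fderiv ℝ k) t‖ ∂μ, by positivity,
    fun g P hg hgP x => ?_⟩
  have first : fderiv ℝ (convolution k g L μ) = convolution (fderiv ℝ k) g (L.precompL E) μ :=
    funext fun y => (hkc.hasFDerivAt_convolution_left L (hk.of_le (by norm_num))
      hg.locallyIntegrable y).fderiv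
  rw [first, ((hkc.fderiv ℝ).hasFDerivAt_convolution_left (L.precompL E) hk'
    hg.locallyIntegrable x).fderiv]
  exact norm_convolution_le _ ((hk'.continuous_fderiv (by norm_num)).integrable_of_hasCompactSupport
    ((hkc.fderiv ℝ).fderiv ℝ)) hgP x

set_option maxSynthPendingDepth 3 in
lemma norm_fderiv_fderiv_comp_smul {E : Type*} [NormedAddCommGroup E] [NormedSpace ℝ E]
    {g : E → ℝ} (hg : ContDiff ℝ 2 g) (c : ℝ) (x : E) :
    ‖fderiv ℝ (fderiv ℝ fun y => g (c • y)) x‖ = c ^ 2 * ‖fderiv ℝ (fderiv ℝ g) (c • x)‖ := by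
  have first : (fderiv ℝ fun y => g (c • y)) = fun y => c • fderiv ℝ g (c • y) :=
    funext fun y => fderiv_comp_smul c
  have inner : DifferentiableAt ℝ (fun y => fderiv ℝ g (c • y)) x :=
    (differentiable_fderiv_of_contDiff_two hg).comp (differentiable_id.const_smul c) x
  rw [first, fderiv_fun_const_smul inner, fderiv_comp_smul, smul_smul, norm_smul, norm_mul,
    Real.norm_eq_abs, abs_mul_abs_self, sq]

lemma exists_contDiff_approx (E : Type*) [NormedAddCommGroup E] [NormedSpace ℝ E]
    [FiniteDimensional ℝ E] : ∃ B, 0 ≤ B ∧ ∀ (f : E → ℝ) (P t ε : ℝ), Continuous f →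
      (∀ x, |f x| ≤ P) → 0 < t → (∀ x y, ‖x - y‖ ≤ t → |f x - f y| ≤ ε) →
      ∃ b : E → ℝ, ContDiff ℝ 2 b ∧ (∀ x, |b x - f x| ≤ ε) ∧
        ∀ x, ‖fderiv ℝ (fderiv ℝ b) x‖ ≤ B * P * t⁻¹ ^ 2 := by
  borelize E
  let μ : Measure E := Measure.addHaar
  let bump : ContDiffBump (0 : E) := ⟨1 / 2, 1, by norm_num, by norm_num⟩
  have hk : ContDiff ℝ 2 (bump.normed μ) := bump.contDiff_normed
  have hkc : HasCompactSupport (bump.normed μ) := bump.hasCompactSupport_normed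
  obtain ⟨B, hB, hess⟩ := exists_norm_fderiv_fderiv_convolution_le (μ := μ) hk hkc
  refine ⟨B, hB, fun f P t ε hf hfP ht modulus => ?_⟩
  set F : E → ℝ := fun x => f (t • x)
  have hF : Continuous F := by fun_prop
  set g := convolution (bump.normed μ) F (ContinuousLinearMap.lsmul ℝ ℝ) μ
  have hg : ContDiff ℝ 2 g := hkc.contDiff_convolution_left _ hk hF.locallyIntegrable
  refine ⟨fun x => g (t⁻¹ • x), hg.comp (contDiff_const_smul _), fun x => ?_, fun x => ?_⟩
  · have F_eq : F (t⁻¹ • x) = f x := congrArg f (smul_inv_smul₀ ht.ne' x)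
    rw [← F_eq, ← Real.dist_eq]
    refine bump.dist_normed_convolution_le hF.aestronglyMeasurable fun y hy => modulus _ _ ?_
    rw [← smul_sub, norm_smul, Real.norm_of_nonneg ht.le, ← dist_eq_norm]
    exact mul_le_of_le_one_right ht.le (mem_ball.1 hy).le
  · rw [norm_fderiv_fderiv_comp_smul hg, mul_comm]
    exact mul_le_mul_of_nonneg_right (hess F P hF (fun _ => hfP _) _) (sq_nonneg _)

end Mollification

section Barrier

lemma exists_forall_mul_le {X : Type*} [TopologicalSpace X] {K : Set X} {ρ ψ : X → ℝ} {P : ℝ}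
    (hK : IsCompact K) (hρ : ContinuousOn ρ K) (hneg : ∀ w ∈ K, ρ w < 0)
    (hψ : ∀ w ∈ K, -P ≤ ψ w) : ∃ M, 0 < M ∧ ∀ w ∈ K, M * ρ w ≤ ψ w := by
  rcases K.eq_empty_or_nonempty with rfl | hne
  · exact ⟨1, one_pos, fun _ hw => hw.elim⟩
  obtain ⟨w₀, hw₀, hmax⟩ := hK.exists_isMaxOn hne hρ
  have hw₀_neg := hneg w₀ hw₀
  refine ⟨(|P| + 1) / -ρ w₀, div_pos (by positivity) (neg_pos.2 hw₀_neg), fun w hw => ?_⟩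
  calc (|P| + 1) / -ρ w₀ * ρ w ≤ (|P| + 1) / -ρ w₀ * ρ w₀ :=
        mul_le_mul_of_nonneg_left (hmax hw) (div_pos (by positivity) (neg_pos.2 hw₀_neg)).le
    _ = -(|P| + 1) := by rw [div_neg, neg_mul, div_mul_cancel₀ _ hw₀_neg.ne]
    _ ≤ ψ w := by linarith [hψ w hw, le_abs_self P]

variable {E : Type*} [NormedAddCommGroup E] [NormedSpace ℝ E] [FiniteDimensional ℝ E]

lemma exists_neg_le_mul_infDist_compl {D : Set E} (hD : IsOpen D) (hDb : Bornology.IsBounded D)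
    (hDc : Dᶜ.Nonempty) {ρ : E → ℝ} (hρ : ∀ z ∈ closure D, ContDiffAt ℝ 1 ρ z)
    (hfrontier : ∀ ζ ∈ frontier D, 0 ≤ ρ ζ) :
    ∃ L, 0 ≤ L ∧ ∀ z ∈ D, -ρ z ≤ L * infDist z Dᶜ := by
  have := FiniteDimensional.proper_real E
  have locally_lipschitz : LocallyLipschitzOn (closure D) ρ := fun z hz =>
    let ⟨L, t, ht, hL⟩ := (hρ z hz).exists_lipschitzOnWith
    ⟨L, t, mem_nhdsWithin_of_mem_nhds ht, hL⟩
  obtain ⟨L, lipschitz⟩ :=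
    locally_lipschitz.exists_lipschitzOnWith_of_compact hDb.isCompact_closure
  refine ⟨L, L.coe_nonneg, fun z hz => ?_⟩
  have hpos : 0 < infDist z Dᶜ :=
    (hD.isClosed_compl.notMem_iff_infDist_pos hDc).1 (Set.notMem_compl_iff.2 hz)
  obtain ⟨ζ, hζ, hdist⟩ := hD.isClosed_compl.exists_infDist_eq_dist hDc z
  have hζ_closure : ζ ∈ closure D := by
    refine closure_mono (ball_infDist_compl_subset (x := z)) ?_
    rw [closure_ball z hpos.ne', mem_closedBall, dist_comm, hdist]
  have hζ_nonneg : 0 ≤ ρ ζ := hfrontier ζ ⟨hζ_closure, by rwa [hD.interior_eq]⟩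
  have bound := lipschitz.dist_le_mul z (subset_closure hz) ζ hζ_closure
  rw [Real.dist_eq, ← hdist] at bound
  linarith [neg_le_of_abs_le bound]

end Barrier

/-! ### The extremal function -/

section Optimization

variable {E : Type*} [NormedAddCommGroup E] {D : Set E} {f : E → ℝ} {C F G L Q t μ : ℝ}
  {z w : E}

/-- A family of Harnack inequalities for `f` inside `D`, one for each scale `t`: each holds up to an
error `G * t ^ μ`, and its inhomogeneous term blows up like `F * t⁻¹ ^ 2`. -/
def HarnackUpTo (D : Set E) (C F G μ : ℝ) (f : E → ℝ) : Prop :=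
  ∀ t, 0 < t → t ≤ 1 → ∀ z ∈ D, ∀ w ∈ D, ∀ r, 0 < r → C * r ≤ 1 → ‖z - w‖ ≤ r →
    C * r ≤ infDist z Dᶜ →
      f w ≤ (1 + C * (r + ‖z - w‖ / r)) * (G * t ^ μ + f z) + C * (F * t⁻¹ ^ 2) * r ^ 2

lemma pow_le_rpow_of_le_one (ht : 0 ≤ t) (ht_le : t ≤ 1) (hμ : 0 ≤ μ) (hμ_le : μ ≤ 1) {k : ℕ}
    (hk : 1 ≤ k) : t ^ k ≤ t ^ μ := by
  rw [← Real.rpow_natCast]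
  exact Real.rpow_le_rpow_of_exponent_ge' ht ht_le hμ (hμ_le.trans (mod_cast hk))

lemma le_const_mul_rpow_of_one_lt (hC : 1 ≤ C) (ht : 0 ≤ t) (hμ : 0 ≤ μ) (hμ_le : μ ≤ 1)
    (h : 1 < C * t) : 1 ≤ C * t ^ μ := by
  rcases le_total t 1 with small | large
  · refine h.le.trans (mul_le_mul_of_nonneg_left ?_ (zero_le_one.trans hC))
    simpa only [pow_one] using pow_le_rpow_of_le_one ht small hμ hμ_le le_rfl
  · exact one_le_mul_of_one_le_of_one_le hC (Real.one_le_rpow large hμ)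

lemma le_mul_rpow_of_infDist_compl_le (hC : 0 ≤ C) (hL : 0 ≤ L) (ht : 0 ≤ t) (ht_le : t ≤ 1)
    (hμ : 0 ≤ μ) (hμ_le : μ ≤ 1) (hdist : ‖z - w‖ = t ^ 8) (hz : infDist z Dᶜ ≤ C * t ^ 4)
    (hf : f w ≤ L * infDist w Dᶜ) : f w ≤ L * (C + 1) * t ^ μ := by
  have h₄ : t ^ 4 ≤ t ^ μ := pow_le_rpow_of_le_one ht ht_le hμ hμ_le (by norm_num)
  have h₈ : t ^ 8 ≤ t ^ μ := pow_le_rpow_of_le_one ht ht_le hμ hμ_le (by norm_num)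
  have hw : infDist w Dᶜ ≤ infDist z Dᶜ + t ^ 8 := by
    rw [← hdist, ← dist_eq_norm, dist_comm]
    exact infDist_le_infDist_add_dist
  calc f w ≤ L * infDist w Dᶜ := hf
    _ ≤ L * (C * t ^ μ + t ^ μ) := mul_le_mul_of_nonneg_left
        (hw.trans (add_le_add (hz.trans (mul_le_mul_of_nonneg_left h₄ hC)) h₈)) hL
    _ = L * (C + 1) * t ^ μ := by ring

lemma sub_le_mul_rpow_of_harnack (hC : 0 ≤ C) (hF : 0 ≤ F) (hG : 0 ≤ G) (ht : 0 < t)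
    (ht_le : t ≤ 1) (hμ : 0 ≤ μ) (hμ_le : μ ≤ 1) {a b : ℝ} (ha : 0 ≤ a) (haQ : a ≤ Q)
    (h : b ≤ (1 + C * (t ^ 4 + t ^ 8 / t ^ 4)) * (G * t ^ μ + a) +
      C * (F * t⁻¹ ^ 2) * (t ^ 4) ^ 2) :
    b - a ≤ (2 * C * Q + (1 + 2 * C) * G + C * F) * t ^ μ := by
  have h₄ : t ^ 4 ≤ t ^ μ := pow_le_rpow_of_le_one ht.le ht_le hμ hμ_le (by norm_num)
  have h₆ : t ^ 6 ≤ t ^ μ := pow_le_rpow_of_le_one ht.le ht_le hμ hμ_le (by norm_num)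
  have hQ : 0 ≤ Q := ha.trans haQ
  have value : b - a ≤ 2 * C * a * t ^ 4 + (1 + 2 * C * t ^ 4) * (G * t ^ μ) + C * F * t ^ 6 := by
    refine (sub_le_sub_right h a).trans_eq ?_
    field_simp
    ring
  calc b - a ≤ 2 * C * a * t ^ 4 + (1 + 2 * C * t ^ 4) * (G * t ^ μ) + C * F * t ^ 6 := value
    _ ≤ 2 * C * Q * t ^ μ + (1 + 2 * C * 1) * (G * t ^ μ) + C * F * t ^ μ := by
        gcongr
        exact pow_le_one₀ ht.le ht_le
    _ = (2 * C * Q + (1 + 2 * C) * G + C * F) * t ^ μ := by ring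

lemma sub_le_mul_rpow_of_norm_eq_pow (hC : 1 ≤ C) (hF : 0 ≤ F) (hG : 0 ≤ G) (hL : 0 ≤ L)
    (hμ : 0 < μ) (hμ_le : μ ≤ 1) (hf : ∀ z ∈ D, 0 ≤ f z) (hQ : 0 ≤ Q) (hfQ : ∀ z ∈ D, f z ≤ Q)
    (hboundary : ∀ z ∈ D, f z ≤ L * infDist z Dᶜ) (harnack : HarnackUpTo D C F G μ f)
    (ht : 0 < t) (hz : z ∈ D) (hw : w ∈ D) (hdist : ‖z - w‖ = t ^ 8) :
    f w - f z ≤ (Q * C + L * (C + 1) + (2 * C * Q + (1 + 2 * C) * G + C * F)) * t ^ μ := by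
  have hC₀ : 0 ≤ C := zero_le_one.trans hC
  have far_nonneg : 0 ≤ Q * C * t ^ μ := by positivity
  have boundary_nonneg : 0 ≤ L * (C + 1) * t ^ μ := by positivity
  have interior_nonneg : 0 ≤ (2 * C * Q + (1 + 2 * C) * G + C * F) * t ^ μ := by positivity
  rw [add_mul, add_mul]
  have hfz := hf z hz
  rcases lt_or_ge 1 (C * t) with far | near
  · have := mul_le_mul_of_nonneg_left (le_const_mul_rpow_of_one_lt hC ht.le hμ.le hμ_le far) hQ
    linarith [hfQ w hw]
  have ht_le : t ≤ 1 := (le_mul_of_one_le_left ht.le hC).trans near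
  rcases le_total (infDist z Dᶜ) (C * t ^ 4) with boundary | interior
  · linarith [le_mul_rpow_of_infDist_compl_le hC₀ hL ht.le ht_le hμ.le hμ_le hdist boundary
      (hboundary w hw)]
  · have radius : C * t ^ 4 ≤ 1 := (mul_le_mul_of_nonneg_left
      (pow_le_of_le_one ht.le ht_le (by norm_num)) hC₀).trans near
    have inside : ‖z - w‖ ≤ t ^ 4 :=
      hdist.trans_le (pow_le_pow_of_le_one ht.le ht_le (by norm_num))
    -- With `r = t ^ 4` both `r` and `‖z - w‖ / r` are `t ^ 4`, while `t⁻¹ ^ 2 * r ^ 2 = t ^ 6`.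
    have comparison := harnack t ht ht_le z hz w hw (t ^ 4) (by positivity) radius inside interior
    rw [hdist] at comparison
    linarith [sub_le_mul_rpow_of_harnack hC₀ hF hG ht ht_le hμ.le hμ_le hfz (hfQ z hz) comparison]

lemma HarnackUpTo.isHolderOn (harnack : HarnackUpTo D C F G μ f) (hC : 1 ≤ C) (hF : 0 ≤ F)
    (hG : 0 ≤ G) (hL : 0 ≤ L) (hμ : 0 < μ) (hμ_le : μ ≤ 1) (hf : ∀ z ∈ D, 0 ≤ f z) (hQ : 0 ≤ Q)
    (hfQ : ∀ z ∈ D, f z ≤ Q) (hboundary : ∀ z ∈ D, f z ≤ L * infDist z Dᶜ) : IsHolderOn D f := by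
  set M := Q * C + L * (C + 1) + (2 * C * Q + (1 + 2 * C) * G + C * F)
  have hM : 0 < M + 1 := add_pos_of_nonneg_of_pos (by positivity) one_pos
  have one_sided : ∀ z ∈ D, ∀ w ∈ D, f w - f z ≤ (M + 1) * ‖z - w‖ ^ (μ / 8) := by
    intro z hz w hw
    rcases eq_or_ne z w with rfl | hne
    · rw [sub_self]
      exact mul_nonneg hM.le (by positivity)
    have hδ : 0 < ‖z - w‖ := norm_pos_iff.2 (sub_ne_zero.2 hne)
    have root : (‖z - w‖ ^ (1 / 8 : ℝ)) ^ 8 = ‖z - w‖ := by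
      rw [← Real.rpow_natCast, ← Real.rpow_mul hδ.le]
      norm_num
    have power : ‖z - w‖ ^ (μ / 8) = (‖z - w‖ ^ (1 / 8 : ℝ)) ^ μ := by
      rw [← Real.rpow_mul hδ.le, one_div_mul_eq_div]
    rw [power]
    refine (sub_le_mul_rpow_of_norm_eq_pow hC hF hG hL hμ hμ_le hf hQ hfQ hboundary harnack
      (Real.rpow_pos_of_pos hδ _) hz hw root.symm).trans ?_
    exact mul_le_mul_of_nonneg_right (le_add_of_nonneg_right zero_le_one) (by positivity)
  refine ⟨M + 1, hM, μ / 8, by positivity, by linarith, fun z hz w hw =>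
    abs_sub_le_iff.2 ⟨?_, one_sided z hz w hw⟩⟩
  rw [norm_sub_rev]
  exact one_sided w hw z hz

end Optimization

section ExtremalFunction

variable {n : ℕ} {A : AlphaForm n} {D K : Set (Cn n)} {ψ u Ψ : Cn n → ℝ} {z : Cn n}
  {H μ P c : ℝ}

lemma bddAbove_omegaW (hz : z ∈ D) : BddAbove ((fun u : Cn n → ℝ => u z) '' Uclass A K D ψ) :=
  ⟨0, Set.forall_mem_image.2 fun _ hu => (hu.2.2 z hz).le⟩

lemma le_omegaW (hu : u ∈ Uclass A K D ψ) (hz : z ∈ D) : u z ≤ omegaW A K D ψ z :=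
  le_csSup (bddAbove_omegaW hz) ⟨u, hu, rfl⟩

lemma omegaW_le (hne : (Uclass A K D ψ).Nonempty) (h : ∀ u ∈ Uclass A K D ψ, u z ≤ c) :
    omegaW A K D ψ z ≤ c :=
  csSup_le (hne.image _) (Set.forall_mem_image.2 h)

lemma omegaW_nonpos (hne : (Uclass A K D ψ).Nonempty) (hz : z ∈ D) : omegaW A K D ψ z ≤ 0 :=
  omegaW_le hne fun _ hu => (hu.2.2 z hz).le

lemma omegaW_eq_of_mem_Uclass (hu : u ∈ Uclass A K D ψ) (heq : ∀ w ∈ K, u w = ψ w) (hKD : K ⊆ D)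
    {w : Cn n} (hw : w ∈ K) : omegaW A K D ψ w = ψ w :=
  le_antisymm (omegaW_le ⟨u, hu⟩ fun _ hv => hv.2.1 w hw)
    ((heq w hw).symm.trans_le (le_omegaW hu (hKD hw)))

lemma IsHolderOn.hasHolderTrace {f : Cn n → ℝ} (h : IsHolderOn D f) (hD : IsOpen D) (hKD : K ⊆ D)
    (heq : ∀ w ∈ K, f w = ψ w) : HasHolderTrace K ψ f := by
  obtain ⟨C, hC, l, hl, hl_le, holder⟩ := h
  refine ⟨C, hC, l, hl, hl_le, D, hD, hKD, fun z hz w hw hdist => ?_⟩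
  rw [← heq w hw, ← hdist, dist_eq_norm]
  exact holder z hz w (hKD hw)

/-- The comparison function is a multiple of the defining function of the domain. -/
lemma IsStronglyAlphaRegularDomain.exists_mem_Uclass_neg_le
    (hD : IsStronglyAlphaRegularDomain A D) (hDc : Dᶜ.Nonempty) (hK : IsCompact K) (hKD : K ⊆ D)
    (hψ : ∀ w ∈ K, -P ≤ ψ w) :
    ∃ v ∈ Uclass A K D ψ, ∃ L, 0 ≤ L ∧ ∀ z ∈ D, -v z ≤ L * infDist z Dᶜ := by
  obtain ⟨hDo, -, hDb, G, hG, hDG, ρ, hρ, hstrict, hD_eq⟩ := hD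
  obtain ⟨ε, hε, hsub⟩ := hstrict D hDo hDb.isCompact_closure hDG
  have hρc : ContinuousOn ρ D := hρ.continuousOn.mono (subset_closure.trans hDG)
  have hρ_neg (z) (hz : z ∈ D) : ρ z < 0 := (hD_eq ▸ hz : z ∈ {z ∈ G | ρ z < 0}).2
  have hρ_frontier (ζ) (hζ : ζ ∈ frontier D) : 0 ≤ ρ ζ := by
    refine not_lt.1 fun hneg => (hDo.frontier_eq ▸ hζ).2 ?_
    rw [hD_eq]
    exact ⟨hDG hζ.1, hneg⟩
  have hρ_dist : IsDistSubharmonic A D ρ := hsub.isDistSubharmonic.of_sub_mul_sqNorm hε.le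
    (hρc.locallyIntegrableOn hDo.measurableSet)
  obtain ⟨M, hM, hMψ⟩ :=
    exists_forall_mul_le hK (hρc.mono hKD) (fun w hw => hρ_neg w (hKD hw)) hψ
  obtain ⟨L, hL, hLρ⟩ := exists_neg_le_mul_infDist_compl hDo hDb hDc
    (fun z hz => (hρ.contDiffAt (hG.mem_nhds (hDG hz))).of_le (by norm_num)) hρ_frontier
  refine ⟨fun z => M * ρ z, ⟨(hρ_dist.const_mul hM.le).isAlphaSubharmonic hDo
    (continuousOn_const.mul hρc), hMψ, fun z hz => mul_neg_of_pos_of_neg hM (hρ_neg z hz)⟩,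
    M * L, by positivity, fun z hz => ?_⟩
  rw [← mul_neg, mul_assoc]
  exact mul_le_mul_of_nonneg_left (hLρ z hz) hM.le

lemma exists_le_of_le_mul_infDist_compl {E : Type*} [PseudoMetricSpace E] {D : Set E} {f : E → ℝ}
    {L : ℝ} (hDb : Bornology.IsBounded D) (hDc : Dᶜ.Nonempty) (hL : 0 ≤ L)
    (hf : ∀ z ∈ D, f z ≤ L * infDist z Dᶜ) : ∃ Q, 0 ≤ Q ∧ ∀ z ∈ D, f z ≤ Q := by
  obtain ⟨p, hp⟩ := hDc
  obtain ⟨R, hR⟩ := hDb.subset_closedBall p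
  refine ⟨L * |R|, by positivity, fun z hz => (hf z hz).trans (mul_le_mul_of_nonneg_left ?_ hL)⟩
  exact (infDist_le_dist_of_mem hp).trans ((mem_closedBall.1 (hR hz)).trans (le_abs_self R))

lemma exists_coeffNorm_le (A : AlphaForm n) (hDb : Bornology.IsBounded D) :
    ∃ a, 0 ≤ a ∧ ∀ z ∈ D, A.coeffNorm z ≤ a := by
  obtain ⟨a, ha⟩ := hDb.isCompact_closure.exists_bound_of_continuousOn
    A.continuous_coeffNorm.continuousOn
  exact ⟨max a 0, le_max_right _ _, fun z hz =>
    (le_abs_self _).trans ((ha z (subset_closure hz)).trans (le_max_left _ _))⟩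

lemma IsHolderMajorant.exists_contDiff_minorant {E : Type*} [NormedAddCommGroup E]
    [NormedSpace ℝ E] [FiniteDimensional ℝ E] {D K : Set E} {ψ f Ψ : E → ℝ}
    (h : IsHolderMajorant D K ψ f H μ P Ψ) :
    ∃ B, 0 ≤ B ∧ ∀ t, 0 < t → t ≤ 1 → ∃ b, ContDiff ℝ 2 b ∧
      (∀ x, Ψ x - (2 * H + 1) * t ^ μ ≤ b x) ∧ (∀ x, b x < Ψ x) ∧
      ∀ x, ‖fderiv ℝ (fderiv ℝ b) x‖ ≤ B * t⁻¹ ^ 2 := by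
  obtain ⟨B, hB, approx⟩ := exists_contDiff_approx E
  have hH := h.const_nonneg
  refine ⟨B * (|P| + (H + 1)), by positivity, fun t ht ht_le => ?_⟩
  have htμ : 0 < t ^ μ := Real.rpow_pos_of_pos ht _
  have htμ_le : t ^ μ ≤ 1 := Real.rpow_le_one ht.le ht_le h.exponent_pos.le
  have shift_le : (H + 1) * t ^ μ ≤ H + 1 := mul_le_of_le_one_right (by positivity) htμ_le
  have shift_nonneg : 0 ≤ (H + 1) * t ^ μ := by positivity
  have bounded (x : E) : |Ψ x - (H + 1) * t ^ μ| ≤ |P| + (H + 1) :=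
    abs_le.2 ⟨by linarith [h.neg_le x, le_abs_self P], by linarith [h.nonpos x, abs_nonneg P]⟩
  have modulus (x y : E) (hxy : ‖x - y‖ ≤ t) :
      |Ψ x - (H + 1) * t ^ μ - (Ψ y - (H + 1) * t ^ μ)| ≤ H * t ^ μ := by
    rw [sub_sub_sub_cancel_right]
    exact (h.abs_sub_le x y).trans (mul_le_mul_of_nonneg_left
      (Real.rpow_le_rpow (norm_nonneg _) hxy h.exponent_pos.le) hH)
  obtain ⟨b, hb, hbΨ, hess⟩ := approx (fun x => Ψ x - (H + 1) * t ^ μ) _ t _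
    (h.continuous.sub continuous_const) bounded ht modulus
  refine ⟨b, hb, fun x => ?_, fun x => ?_, hess⟩
  · linarith [neg_le_of_abs_le (hbΨ x)]
  · linarith [le_of_abs_le (hbΨ x)]

lemma exists_neg_omegaW_le (A : AlphaForm n) (R : ℝ) : ∃ C, 1 ≤ C ∧
    ∀ (D K : Set (Cn n)) (ψ b : Cn n → ℝ) (F c : ℝ), IsOpen D → Dᶜ.Nonempty →
      D ⊆ closedBall 0 R → K ⊆ D → (Uclass A K D ψ).Nonempty → ContDiff ℝ 2 b →
      (∀ z ∈ D, omegaW A K D ψ z - c ≤ b z) → (∀ z ∈ D, b z < 0) → (∀ w ∈ K, b w ≤ ψ w) →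
      (∀ z ∈ D, |alphaOpR A b z| ≤ F) →
      ∀ z ∈ D, ∀ w ∈ D, ∀ r, 0 < r → C * r ≤ 1 → ‖z - w‖ ≤ r → C * r ≤ infDist z Dᶜ →
        -omegaW A K D ψ w ≤
          (1 + C * (r + ‖z - w‖ / r)) * (c - omegaW A K D ψ z) + C * F * r ^ 2 := by
  obtain ⟨C, hC, between⟩ := A.exists_isAlphaSubharmonic_between R
  refine ⟨C, hC, fun D K ψ b F c hD hDc hDR hKD hne hb hωb hb_neg hbψ hF z hz w hw r hr hCr hzw
    hrz => ?_⟩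
  have hX : 0 < 1 + C * (r + ‖z - w‖ / r) := by positivity
  set X := 1 + C * (r + ‖z - w‖ / r)
  have competitors : ∀ u ∈ Uclass A K D ψ,
      u z ≤ c + (omegaW A K D ψ w + C * F * r ^ 2) / X := by
    intro u hu
    obtain ⟨v, hv, huvb, harnack⟩ := between D u b F c hD hDc hDR hu.1 hb
      (fun x hx => (sub_le_sub_right (le_omegaW hu hx) c).trans (hωb x hx)) hb_neg hF
      ((abs_nonneg _).trans (hF z hz))
    have hvU : v ∈ Uclass A K D ψ := ⟨hv, fun x hx => (huvb x (hKD hx)).2.trans (hbψ x hx),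
      fun x hx => (huvb x hx).2.trans_lt (hb_neg x hx)⟩
    rw [← sub_le_iff_le_add', le_div_iff₀ hX, mul_comm]
    linarith [harnack z hz w r hr hCr hzw hrz, le_omegaW hvU hw,
      mul_le_mul_of_nonneg_left (huvb z hz).1 hX.le]
  have bound := omegaW_le hne competitors
  rw [← sub_le_iff_le_add', le_div_iff₀ hX] at bound
  linarith

lemma IsHolderMajorant.exists_harnackUpTo_neg_omegaW
    (h : IsHolderMajorant D K ψ (omegaW A K D ψ) H μ P Ψ) (hD : IsOpen D)
    (hDb : Bornology.IsBounded D) (hDc : Dᶜ.Nonempty) (hKD : K ⊆ D)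
    (hne : (Uclass A K D ψ).Nonempty) : ∃ C F, 1 ≤ C ∧ 0 ≤ F ∧
      HarnackUpTo D C F (2 * H + 1) μ fun z => -omegaW A K D ψ z := by
  obtain ⟨R, hR⟩ := hDb.subset_closedBall 0
  obtain ⟨C, hC, harnack⟩ := exists_neg_omegaW_le A R
  obtain ⟨B, hB, minorant⟩ := h.exists_contDiff_minorant
  obtain ⟨a, ha, coeff_le⟩ := exists_coeffNorm_le A hDb
  refine ⟨C, a * B, hC, by positivity, fun t ht ht_le => ?_⟩
  obtain ⟨b, hb, hΨb, hbΨ, hess⟩ := minorant t ht ht_le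
  have op_le : ∀ x ∈ D, |alphaOpR A b x| ≤ a * B * t⁻¹ ^ 2 := fun x hx => by
    rw [mul_assoc]
    exact (abs_alphaOpR_le A hb x).trans
      (mul_le_mul (coeff_le x hx) (hess x) (by positivity) ha)
  exact harnack D K ψ b _ _ hD hDc hR hKD hne hb
    (fun x hx => (sub_le_sub_right (h.majorizes x hx) _).trans (hΨb x))
    (fun x _ => (hbΨ x).trans_le (h.nonpos x)) (fun x hx => (hbΨ x).le.trans (h.le_weight x hx))
    op_le

lemma IsHolderOn.of_subsingleton {E : Type*} [SeminormedAddCommGroup E] [Subsingleton E]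
    (D : Set E) (f : E → ℝ) : IsHolderOn D f := by
  refine ⟨1, one_pos, 1, one_pos, le_rfl, fun z _ w _ => ?_⟩
  rw [Subsingleton.elim z w, sub_self, abs_zero]
  positivity

lemma IsHolderOn.of_neg {E : Type*} [SeminormedAddCommGroup E] {D : Set E} {f : E → ℝ}
    (h : IsHolderOn D fun z => -f z) : IsHolderOn D f := by
  obtain ⟨C, hC, l, hl, hl_le, holder⟩ := h
  refine ⟨C, hC, l, hl, hl_le, fun z hz w hw => ?_⟩
  rw [← abs_neg, neg_sub, ← neg_sub_neg]
  exact holder z hz w hw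

lemma isHolderOn_omegaW (hD : IsStronglyAlphaRegularDomain A D) (hK : IsCompact K) (hKD : K ⊆ D)
    (hψ : IsHolderOn K ψ) (htrace : HasHolderTrace K ψ (omegaW A K D ψ)) :
    IsHolderOn D (omegaW A K D ψ) := by
  rcases subsingleton_or_nontrivial (Cn n) with _ | _
  · exact .of_subsingleton _ _
  have hDo : IsOpen D := hD.1
  have hDb : Bornology.IsBounded D := hD.2.2.1
  have hDc : Dᶜ.Nonempty := Set.nonempty_compl.2 fun h =>
    NormedSpace.unbounded_univ ℝ (Cn n) (h ▸ hDb)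
  obtain ⟨P, hP, hψP⟩ := hψ.exists_neg_le hK
  obtain ⟨v, hv, L, hL, hvL⟩ := hD.exists_mem_Uclass_neg_le hDc hK hKD hψP
  have hne : (Uclass A K D ψ).Nonempty := ⟨v, hv⟩
  have hω : ∀ z ∈ D, omegaW A K D ψ z ≤ 0 := fun z hz => omegaW_nonpos hne hz
  have boundary : ∀ z ∈ D, -omegaW A K D ψ z ≤ L * infDist z Dᶜ := fun z hz =>
    (neg_le_neg (le_omegaW hv hz)).trans (hvL z hz)
  obtain ⟨Q, hQ, hωQ⟩ := exists_le_of_le_mul_infDist_compl hDb hDc hL boundary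
  obtain ⟨H, μ, Ψ, majorant⟩ := exists_isHolderMajorant hK hψ hψP hP hω htrace
  obtain ⟨C, F, hC, hF, harnack⟩ := majorant.exists_harnackUpTo_neg_omegaW hDo hDb hDc hKD hne
  have hH := majorant.const_nonneg
  exact (harnack.isHolderOn hC hF (by positivity) hL majorant.exponent_pos
    majorant.exponent_le_one (fun z hz => neg_nonneg.2 (hω z hz)) hQ hωQ boundary).of_neg

end ExtremalFunction

/-- Let `D` be strongly `α`-regular, `K ⊆ D` compact and `ψ` Hölder
continuous on `K` with `sup_K ψ < 0`, admitting a negative `α`-subharmonic extension to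
`D`.  Then `ω_α(·,K,D,ψ)` is Hölder continuous on `D` iff there are `C > 0` and
`0 < λ ≤ 1` with `|ω_α(z,K,D,ψ) - ψ(w)| ≤ C·dist(z,K)^λ` for every `z` in some
neighborhood of `K`, where `w ∈ K` is a closest point of `K` to `z`. -/
theorem weighted_measure_holder_iff {n : ℕ} (A : AlphaForm n) (D K : Set (Cn n))
    (hD : IsStronglyAlphaRegularDomain A D) (hK : IsCompact K) (hKD : K ⊆ D)
    (ψ : Cn n → ℝ)
    (hψH : ∃ C₁ > (0 : ℝ), ∃ lam₁ : ℝ, 0 < lam₁ ∧ lam₁ ≤ 1 ∧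
      ∀ z ∈ K, ∀ w ∈ K, |ψ z - ψ w| ≤ C₁ * ‖z - w‖ ^ lam₁)
    (hsup : ∃ c < (0 : ℝ), ∀ z ∈ K, ψ z ≤ c)
    (hext : ∃ ψt : Cn n → ℝ, IsAlphaSubharmonic A D ψt ∧ (∀ z ∈ D, ψt z < 0) ∧
      ∀ z ∈ K, ψt z = ψ z) :
    (∃ C > (0 : ℝ), ∃ lam : ℝ, 0 < lam ∧ lam ≤ 1 ∧
      ∀ z ∈ D, ∀ w ∈ D,
        |omegaW A K D ψ z - omegaW A K D ψ w| ≤ C * ‖z - w‖ ^ lam) ↔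
    (∃ C > (0 : ℝ), ∃ lam : ℝ, 0 < lam ∧ lam ≤ 1 ∧
      ∃ U : Set (Cn n), IsOpen U ∧ K ⊆ U ∧
        ∀ z ∈ U, ∀ w ∈ K, dist z w = Metric.infDist z K →
          |omegaW A K D ψ z - ψ w| ≤ C * (Metric.infDist z K) ^ lam) := by
  refine ⟨fun holder => ?_, fun trace => isHolderOn_omegaW hD hK hKD hψH trace⟩
  obtain ⟨ψt, hψt, hneg, heq⟩ := hext
  have mem : ψt ∈ Uclass A K D ψ := ⟨hψt, fun w hw => (heq w hw).le, hneg⟩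
  exact IsHolderOn.hasHolderTrace holder hD.1 hKD fun w hw =>
    omegaW_eq_of_mem_Uclass mem heq hKD hw
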